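/- arXiv:quant-ph/0511228 — 3 statements merged into one kernel-verified Lean document; each statement's English description precedes it below -/
import Mathlib

section
/- Let M be a quantum channel from ℂ^{d_{A'}} ⊗ ℂ^{d_{B'}} to ℂ^{d_C} given by Kraus operators. Suppose the nonnegative real rate pair (R₁, R₂) is achievable for entanglement-assisted classical communication over M, meaning: for every ε > 0 and δ > 0 there exist an n ≥ 1, finite dimensions a, c_A, b, c_B, unit vectors |Γ₁⟩ ∈ ℂ^a ⊗ ℂ^{c_A} and |Γ₂⟩ ∈ ℂ^b ⊗ ℂ^{c_B}, completely positive trace-preserving maps E¹_k from matrices over ℂ^a to matrices over (ℂ^{d_{A'}})^{⊗n} for k ∈ {1,…,⌈2^{n(R₁−δ)}⌉}, completely positive trace-preserving maps E²_l from matrices over ℂ^b to matrices over (ℂ^{d_{B'}})^{⊗n} for l ∈ {1,…,⌈2^{n(R₂−δ)}⌉}, and positive semidefinite matrices Λ_{k,l} on (ℂ^{d_C})^{⊗n} ⊗ ℂ^{c_A} ⊗ ℂ^{c_B} with ∑_{k,l} Λ_{k,l} ≤ I, such that Tr[Λ_{k,l} · ((M^{⊗n} ∘ (E¹_k ⊗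 E²_l)) ⊗ id_{c_A c_B})(|Γ₁⟩⟨Γ₁| ⊗ |Γ₂⟩⟨Γ₂|)] ≥ 1 − ε for all k, l. Then R₁ + R₂ ≤ sup I(AB;C)_θ, where the supremum is over all density operators ρ₁ on ℂ^{d_{A'}} and ρ₂ on ℂ^{d_{B'}}, θ^{ABC} = (id_{AB} ⊗ M)(|φ₁⟩⟨φ₁| ⊗ |φ₂⟩⟨φ₂|), and |φ₁⟩, |φ₂⟩ are purifications of ρ₁, ρ₂. -/
/-!
The message pair is sent through the product of the two encoders, so a code for the two senders is a
code for one sender with message set `J₁ × J₂` whose average input block is a product of the two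
senders' average blocks. Four facts give the bound.

* A decoder with success probability `1 - ε` is a test distinguishing the joint state of the
  receiver's side (message register and his halves of the entanglement) and the channel output `Cⁿ`
  from the product of its marginals. Since the encoders do not touch the receiver's halves, the
  false-alarm probability is at most `1 / |J|`, and data processing for the relative entropy gives
  `(1 - ε) log |J| ≤ h(ε) + I(JX; Cⁿ)` (`test_bound`, `code_bound`).
* Purifying the code by the environments `Eⁿ` of the channel uses and a register `Z`, purity turns
  `I(JX; Cⁿ)` into `H(Cⁿ) + H(Cⁿ | Eⁿ Z)`, and strong subadditivity bounds this by
  `∑ᵢ (H(Cᵢ) + H(Cᵢ | Eᵢ))` (`chain`, `single_letter`).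
* The `i`-th letter `Cᵢ Eᵢ` is the Stinespring isometry applied to the `i`-th letter of the average
  input (`letter_isometry`), which is a product state because the senders are independent
  (`avgIn_jointEnc`, `letterC_prod`). By purity again, `H(C) + H(C | E)` at a product input is
  `I(AB;C)_θ` (`theta_info`).
* Hence `(1 - ε)(R₁ + R₂ - 2ε) ≤ h(ε) / log 2 + sup I(AB;C)_θ`, and `ε → 0` finishes the proof.

Both entropy inequalities come from one monotonicity statement, `relent_mono`. With
`ρ = ∑ pᵢ |uᵢ⟩⟨uᵢ|` and `σ = ∑ qⱼ |wⱼ⟩⟨wⱼ|`, the resolvent quantity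
`∑ |⟨uᵢ, wⱼ⟩|² pᵢ² / (qⱼ + t pᵢ)` is the supremum over `Y` of
`2 Re Tr ρY - Tr σYY† - t Tr ρY†Y`, so it decreases under any map whose adjoint satisfies the
Schwarz inequality. Integrating over `t` from `0` to `∞` yields the relative entropy; `scalar_mono`
carries out this integration by comparing derivatives and limits.
-/

open Matrix Kronecker ComplexOrder

noncomputable section
set_option linter.unusedSectionVars false
set_option linter.unusedSimpArgs false

/-- outer product `|v⟩⟨v|`. -/
def proj {ι : Type*} (v : ι → ℂ) : Matrix ι ι ℂ :=
  Matrix.of fun i j => v i * star (v j)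

/-- partial trace over the first tensor factor. -/
def ptraceLeft {ι κ : Type*} [Fintype ι] (M : Matrix (ι × κ) (ι × κ) ℂ) : Matrix κ κ ℂ :=
  Matrix.of fun j j' => ∑ i, M (i, j) (i, j')

/-- von Neumann entropy (base 2), via the eigenvalues of a Hermitian matrix. -/
def vnEntropy {ι : Type*} [Fintype ι] [DecidableEq ι] (A : Matrix ι ι ℂ) : ℝ :=
  if h : A.IsHermitian then -∑ i, h.eigenvalues i * Real.logb 2 (h.eigenvalues i) else 0

/-! ### Entropy of a Hermitian matrix -/

/-- von Neumann entropy in nats. -/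
def ent {ι : Type*} [Fintype ι] [DecidableEq ι] (A : Matrix ι ι ℂ) : ℝ :=
  if h : A.IsHermitian then ∑ i, Real.negMulLog (h.eigenvalues i) else 0

section Ent
variable {ι κ : Type*} [Fintype ι] [DecidableEq ι] [Fintype κ] [DecidableEq κ]

lemma vnEntropy_eq_ent (A : Matrix ι ι ℂ) : vnEntropy A = ent A / Real.log 2 := by
  unfold vnEntropy ent
  split_ifs with h
  · rw [Finset.sum_div, ← Finset.sum_neg_distrib]
    refine Finset.sum_congr rfl fun i _ => ?_
    simp only [Real.negMulLog, Real.logb]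
    ring
  · simp

lemma ent_eq_roots {A : Matrix ι ι ℂ} (hA : A.IsHermitian) :
    ent A = (A.charpoly.roots.map fun z => Real.negMulLog z.re).sum := by
  rw [ent, dif_pos hA, hA.roots_charpoly_eq_eigenvalues, Multiset.map_map]
  rfl

/-- The entropy only sees the nonzero part of the spectrum, because `0 log 0 = 0`. -/
lemma ent_congr_charpoly {A : Matrix ι ι ℂ} {B : Matrix κ κ ℂ} (hA : A.IsHermitian)
    (hB : B.IsHermitian) (m k : ℕ)
    (h : Polynomial.X ^ m * A.charpoly = Polynomial.X ^ k * B.charpoly) : ent A = ent B := by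
  have hr := congrArg (fun p => (p.roots.map fun z : ℂ => Real.negMulLog z.re).sum) h
  have hX : ∀ m : ℕ, (Polynomial.X ^ m : Polynomial ℂ) ≠ 0 := fun m =>
    pow_ne_zero _ Polynomial.X_ne_zero
  rw [Polynomial.roots_mul (mul_ne_zero (hX _) A.charpoly_monic.ne_zero),
    Polynomial.roots_mul (mul_ne_zero (hX _) B.charpoly_monic.ne_zero)] at hr
  simpa [ent_eq_roots hA, ent_eq_roots hB, Multiset.map_nsmul, Multiset.sum_nsmul] using hr

lemma ent_mul_conjTranspose (A : Matrix ι κ ℂ) : ent (A * Aᴴ) = ent (Aᴴ * A) :=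
  ent_congr_charpoly (isHermitian_mul_conjTranspose_self A) (isHermitian_conjTranspose_mul_self A)
    (Fintype.card κ) (Fintype.card ι) (by simpa using charpoly_mul_comm' A Aᴴ)

lemma ent_transpose {A : Matrix ι ι ℂ} (hA : A.IsHermitian) : ent Aᵀ = ent A :=
  ent_congr_charpoly hA.transpose hA 0 0 (by simp [charpoly_transpose])

lemma ent_submatrix {A : Matrix ι ι ℂ} (hA : A.IsHermitian) (e : κ ≃ ι) :
    ent (A.submatrix e e) = ent A :=
  ent_congr_charpoly (hA.submatrix e) hA 0 0 (by
    have := charpoly_reindex e.symm A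
    simp only [pow_zero, one_mul]
    simpa [reindex_apply] using this)

lemma isHermitian_conj_diagonal (U : Matrix ι ι ℂ) (p : ι → ℝ) :
    (U * diagonal (fun i => (p i : ℂ)) * Uᴴ).IsHermitian := by
  simp [Matrix.IsHermitian, conjTranspose_mul, mul_assoc, diagonal_conjTranspose]
  congr 3
  ext i; simp

lemma ent_conj_diagonal {U : Matrix ι ι ℂ} (hU : Uᴴ * U = 1) (p : ι → ℝ) :
    ent (U * diagonal (fun i => (p i : ℂ)) * Uᴴ) = ∑ i, Real.negMulLog (p i) := by
  rw [ent_eq_roots (isHermitian_conj_diagonal U p), charpoly_mul_comm, ← mul_assoc, hU, one_mul,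
    charpoly_diagonal, Polynomial.roots_prod]
  · simp
  · simp [Finset.prod_ne_zero_iff, Polynomial.X_sub_C_ne_zero]

lemma exists_spectral {A : Matrix ι ι ℂ} (hA : A.PosSemidef) :
    ∃ U : Matrix ι ι ℂ, Uᴴ * U = 1 ∧ U * Uᴴ = 1 ∧ ∃ p : ι → ℝ, (∀ i, 0 ≤ p i) ∧
      A = U * diagonal (fun i => (p i : ℂ)) * Uᴴ := by
  refine ⟨hA.1.eigenvectorUnitary, ?_, ?_, hA.1.eigenvalues, hA.eigenvalues_nonneg, ?_⟩
  · exact Unitary.coe_star_mul_self _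
  · exact Unitary.coe_mul_star_self _
  · conv_lhs => rw [hA.1.spectral_theorem, Unitary.conjStarAlgAut_apply]
    rfl

/-- For a density matrix the entropy lies between `0` and the dimension. -/
lemma ent_bounds {A : Matrix ι ι ℂ} (hA : A.PosSemidef) (ht : A.trace = 1) :
    0 ≤ ent A ∧ ent A ≤ Fintype.card ι := by
  have hsum : ∑ i, hA.1.eigenvalues i = 1 := by
    have := hA.1.trace_eq_sum_eigenvalues
    rw [ht, ← RCLike.ofReal_sum] at this
    exact (Complex.ofReal_eq_one.mp this.symm)
  have h1 : ∀ i, hA.1.eigenvalues i ≤ 1 := fun i => by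
    rw [← hsum]
    exact Finset.single_le_sum (fun j _ => hA.eigenvalues_nonneg j) (Finset.mem_univ i)
  rw [ent, dif_pos hA.1]
  constructor
  · exact Finset.sum_nonneg fun i _ => Real.negMulLog_nonneg (hA.eigenvalues_nonneg i) (h1 i)
  · calc _ ≤ ∑ i : ι, (1 : ℝ) := Finset.sum_le_sum fun i _ => by
          have := Real.negMulLog_le_one_sub_self (hA.eigenvalues_nonneg i)
          have := hA.eigenvalues_nonneg i
          linarith
      _ = _ := by simp

end Ent

/-! ### From resolvents to relative entropies -/

section Scalar
open Filter Topology
variable {α β : Type*} [Fintype α] [Fintype β]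

/-- `t ↦ ∑ g p (log (q + t p) - log q - log (1 + t))` interpolates between `0` at `t = 0` and the
relative entropy `∑ g p (log p - log q)` at `t = ∞`. -/
def interp (g p q : α → ℝ) (t : ℝ) : ℝ :=
  ∑ i, g i * p i * (Real.log (q i + t * p i) - Real.log (q i) - Real.log (1 + t))

lemma interp_hasDerivAt {g p q : α → ℝ} (hp : ∀ i, 0 ≤ p i) (hq : ∀ i, 0 ≤ q i) {t : ℝ}
    (ht : 0 < t) : HasDerivAt (interp g p q)
      (∑ i, g i * p i ^ 2 / (q i + t * p i) - (∑ i, g i * p i) / (1 + t)) t := by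
  rw [Finset.sum_div, ← Finset.sum_sub_distrib]
  unfold interp
  refine HasDerivAt.fun_sum fun i _ => ?_
  rcases (hp i).eq_or_lt with h | h
  · simp [← h, hasDerivAt_const]
  · have hpos : 0 < q i + t * p i := by have := hq i; positivity
    have h1 : HasDerivAt (fun t : ℝ => Real.log (q i + t * p i)) (p i / (q i + t * p i)) t := by
      have := (((hasDerivAt_id t).mul_const (p i)).const_add (q i)).log (by simpa using hpos.ne')
      simpa using this
    have h2 : HasDerivAt (fun t : ℝ => Real.log (1 + t)) (1 / (1 + t)) t := by
      have := ((hasDerivAt_id t).const_add 1).log (by simp; positivity)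
      simpa using this
    have := (((h1.sub_const (Real.log (q i))).sub h2).const_mul (g i * p i))
    refine this.congr_deriv ?_
    ring

lemma interp_tendsto_zero {g p q : α → ℝ} (hq : ∀ i, 0 ≤ q i)
    (hs : ∀ i, q i = 0 → g i * p i = 0) :
    Tendsto (interp g p q) (𝓝[>] 0) (𝓝 0) := by
  rw [show 𝓝 (0 : ℝ) = 𝓝 (∑ i : α, (0 : ℝ)) by simp]
  unfold interp
  refine tendsto_finsetSum _ fun i _ => ?_
  rcases (hq i).eq_or_lt with h | h
  · simp [hs i h.symm]
  · have hc : ContinuousAt (fun t : ℝ => g i * p i *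
        (Real.log (q i + t * p i) - Real.log (q i) - Real.log (1 + t))) 0 := by
      refine continuousAt_const.mul (((ContinuousAt.log (by fun_prop) ?_).sub
        continuousAt_const).sub (ContinuousAt.log (by fun_prop) ?_))
      · simpa using h.ne'
      · simp
    have := hc.tendsto
    simp only [zero_mul, add_zero, sub_self, Real.log_one, mul_zero] at this
    exact this.mono_left nhdsWithin_le_nhds

lemma interp_tendsto_atTop {g p q : α → ℝ} (hp : ∀ i, 0 ≤ p i) (hq : ∀ i, 0 ≤ q i) :
    Tendsto (interp g p q) atTop (𝓝 (∑ i, g i * p i * (Real.log (p i) - Real.log (q i)))) := by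
  unfold interp
  refine tendsto_finsetSum _ fun i _ => ?_
  rcases (hp i).eq_or_lt with h | h
  · simp [← h]
  · refine Tendsto.const_mul _ ?_
    have h0 : Tendsto (fun t : ℝ => (q i - p i) / (1 + t) + p i) atTop (𝓝 (p i)) := by
      have : Tendsto (fun t : ℝ => (q i - p i) / (1 + t)) atTop (𝓝 0) :=
        tendsto_const_nhds.div_atTop (tendsto_atTop_add_const_left _ _ tendsto_id)
      simpa using this.add_const (p i)
    have h1 := ((Real.continuousAt_log h.ne').tendsto.comp h0).sub_const (Real.log (q i))
    refine h1.congr' ?_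
    filter_upwards [eventually_gt_atTop 0] with t ht
    have hpos : 0 < q i + t * p i := by have := hq i; positivity
    have : (q i - p i) / (1 + t) + p i = (q i + t * p i) / (1 + t) := by
      field_simp; ring
    simp only [Function.comp]
    rw [this, Real.log_div hpos.ne' (by positivity)]
    ring

/-- Comparison of the resolvent quantities `∑ g p² / (q + t p)` for all `t > 0` gives comparison
of the relative entropies. The vanishing of `g' p'` where `q' = 0` is part of the conclusion:
otherwise the primed resolvent would blow up as `t → 0`. -/
lemma scalar_mono {g p q : α → ℝ} {g' p' q' : β → ℝ}
    (hg : ∀ i, 0 ≤ g i) (hp : ∀ i, 0 ≤ p i) (hq : ∀ i, 0 ≤ q i)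
    (hg' : ∀ i, 0 ≤ g' i) (hp' : ∀ i, 0 ≤ p' i) (hq' : ∀ i, 0 ≤ q' i)
    (hs : ∀ i, q i = 0 → g i * p i = 0)
    (hsum : ∑ i, g i * p i = ∑ i, g' i * p' i)
    (hQ : ∀ t > 0, ∑ i, g' i * p' i ^ 2 / (q' i + t * p' i)
      ≤ ∑ i, g i * p i ^ 2 / (q i + t * p i)) :
    (∀ i, q' i = 0 → g' i * p' i = 0) ∧
    ∑ i, g' i * p' i * (Real.log (p' i) - Real.log (q' i)) ≤
      ∑ i, g i * p i * (Real.log (p i) - Real.log (q i)) := by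
  have hs' : ∀ i, q' i = 0 → g' i * p' i = 0 := by
    intro i hi
    by_contra hne
    have hpos : 0 < g' i * p' i := lt_of_le_of_ne (mul_nonneg (hg' i) (hp' i)) (Ne.symm hne)
    have hp'0 : 0 < p' i := lt_of_le_of_ne (hp' i) (fun h => hne (by simp [← h]))
    set B := ∑ i, g i * p i ^ 2 / q i with hB
    have hbound : ∀ t > 0, g' i * p' i / t ≤ B := by
      intro t ht
      calc g' i * p' i / t = g' i * p' i ^ 2 / (q' i + t * p' i) := by
            rw [hi]; field_simp; ring
        _ ≤ ∑ i, g' i * p' i ^ 2 / (q' i + t * p' i) :=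
            Finset.single_le_sum (f := fun i => g' i * p' i ^ 2 / (q' i + t * p' i))
              (fun j _ => div_nonneg (mul_nonneg (hg' j) (sq_nonneg _))
                (add_nonneg (hq' j) (mul_nonneg ht.le (hp' j)))) (Finset.mem_univ i)
        _ ≤ _ := hQ t ht
        _ ≤ B := by
            refine Finset.sum_le_sum fun j _ => ?_
            rcases (hq j).eq_or_lt with h | h
            · have := hs j h.symm
              have h2 : g j * p j ^ 2 = 0 := by rw [pow_two, ← mul_assoc, this, zero_mul]
              simp [h2]
            · exact div_le_div_of_nonneg_left (mul_nonneg (hg j) (sq_nonneg _)) h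
                (by have := mul_nonneg ht.le (hp j); linarith)
    have hB0 : 0 < B := lt_of_lt_of_le (by positivity) (hbound 1 one_pos)
    have := hbound (g' i * p' i / (2 * B)) (by positivity)
    have h2 : g' i * p' i / (g' i * p' i / (2 * B)) = 2 * B := by
      rw [div_div_eq_mul_div, mul_div_cancel_left₀ _ hne]
    linarith
  refine ⟨hs', ?_⟩
  have hmono : MonotoneOn (fun t => interp g p q t - interp g' p' q' t) (Set.Ioi 0) := by
    have hd : ∀ t ∈ Set.Ioi (0 : ℝ), HasDerivAt (fun t => interp g p q t - interp g' p' q' t) _ t :=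
      fun t ht => (interp_hasDerivAt (g := g) hp hq ht).sub (interp_hasDerivAt (g := g') hp' hq' ht)
    refine monotoneOn_of_deriv_nonneg (convex_Ioi 0)
      (fun t ht => (hd t ht).continuousAt.continuousWithinAt) ?_ ?_
    · rw [interior_Ioi]
      exact fun t ht => (hd t ht).differentiableAt.differentiableWithinAt
    · rw [interior_Ioi]
      intro t ht
      rw [(hd t ht).deriv, hsum]
      have := hQ t ht
      linarith
  have h0 : Tendsto (fun t => interp g p q t - interp g' p' q' t) (𝓝[>] 0) (𝓝 (0 - 0)) :=
    (interp_tendsto_zero hq hs).sub (interp_tendsto_zero hq' hs')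
  have h1 := (interp_tendsto_atTop (g := g) hp hq).sub (interp_tendsto_atTop (g := g') hp' hq')
  have hnn : ∀ t > 0, 0 ≤ interp g p q t - interp g' p' q' t := by
    intro t ht
    rw [sub_zero] at h0
    refine le_of_tendsto h0 ?_
    filter_upwards [Ioo_mem_nhdsGT ht] with s hs
    exact hmono hs.1 ht hs.2.le
  have := ge_of_tendsto h1 ((eventually_gt_atTop 0).mono hnn)
  linarith

end Scalar

/-! ### Monotonicity of the relative entropy -/

section Mono
variable {X X' : Type*} [Fintype X] [DecidableEq X] [Fintype X'] [DecidableEq X']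

/-- The functional whose supremum over `Y` is the resolvent quantity
`∑ |⟨uᵢ, wⱼ⟩|² pᵢ² / (qⱼ + t pᵢ)` of the pair `(ρ, σ)`. -/
def varf (ρ σ : Matrix X X ℂ) (t : ℝ) (Y : Matrix X X ℂ) : ℝ :=
  2 * ((ρ * Y).trace).re - ((σ * (Y * Yᴴ)).trace).re - t * ((ρ * (Yᴴ * Y)).trace).re

lemma trace_diagonal_mul (d : X → ℝ) (A : Matrix X X ℂ) :
    ((diagonal (fun i => (d i : ℂ)) * A).trace).re = ∑ i, d i * (A i i).re := by
  simp [Matrix.trace, diagonal_mul]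

lemma varf_eq {U W : Matrix X X ℂ} (hU : Uᴴ * U = 1) (hW : Wᴴ * W = 1) (p q : X → ℝ) (t : ℝ)
    (Z : Matrix X X ℂ) :
    varf (U * diagonal (fun i => (p i : ℂ)) * Uᴴ) (W * diagonal (fun i => (q i : ℂ)) * Wᴴ) t
      (W * Z * Uᴴ) = ∑ x : X × X, (2 * (p x.1 * ((Uᴴ * W) x.1 x.2 * Z x.2 x.1).re)
        - (q x.2 + t * p x.1) * Complex.normSq (Z x.2 x.1)) := by
  have h1 : (U * diagonal (fun i => (p i : ℂ)) * Uᴴ * (W * Z * Uᴴ)).trace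
      = (diagonal (fun i => (p i : ℂ)) * ((Uᴴ * W) * Z)).trace := by
    rw [show U * diagonal (fun i => (p i : ℂ)) * Uᴴ * (W * Z * Uᴴ)
      = U * (diagonal (fun i => (p i : ℂ)) * ((Uᴴ * W) * Z) * Uᴴ) by simp only [mul_assoc],
      trace_mul_comm, mul_assoc, hU, mul_one]
  have h2 : (W * diagonal (fun i => (q i : ℂ)) * Wᴴ * ((W * Z * Uᴴ) * (W * Z * Uᴴ)ᴴ)).trace
      = (diagonal (fun i => (q i : ℂ)) * (Z * Zᴴ)).trace := by
    rw [show W * diagonal (fun i => (q i : ℂ)) * Wᴴ * ((W * Z * Uᴴ) * (W * Z * Uᴴ)ᴴ)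
      = W * (diagonal (fun i => (q i : ℂ)) * ((Wᴴ * W) * Z * (Uᴴ * U) * Zᴴ) * Wᴴ) by
        simp only [mul_assoc, conjTranspose_mul, conjTranspose_conjTranspose],
      trace_mul_comm, mul_assoc, hU, hW, mul_one, mul_one, one_mul]
  have h3 : (U * diagonal (fun i => (p i : ℂ)) * Uᴴ * ((W * Z * Uᴴ)ᴴ * (W * Z * Uᴴ))).trace
      = (diagonal (fun i => (p i : ℂ)) * (Zᴴ * Z)).trace := by
    rw [show U * diagonal (fun i => (p i : ℂ)) * Uᴴ * ((W * Z * Uᴴ)ᴴ * (W * Z * Uᴴ))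
      = U * (diagonal (fun i => (p i : ℂ)) * ((Uᴴ * U) * Zᴴ * (Wᴴ * W) * Z) * Uᴴ) by
        simp only [mul_assoc, conjTranspose_mul, conjTranspose_conjTranspose],
      trace_mul_comm, mul_assoc, hU, hW, mul_one, mul_one, one_mul]
  rw [varf, h1, h2, h3, trace_diagonal_mul, trace_diagonal_mul, trace_diagonal_mul]
  have e1 : ∀ i, (((Uᴴ * W) * Z) i i).re = ∑ j, ((Uᴴ * W) i j * Z j i).re := by
    intro i; rw [Matrix.mul_apply, Complex.re_sum]
  have e2 : ∀ j, ((Z * Zᴴ) j j).re = ∑ i, Complex.normSq (Z j i) := by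
    intro j
    rw [Matrix.mul_apply, Complex.re_sum]
    refine Finset.sum_congr rfl fun i _ => ?_
    simp [Complex.normSq_apply]
  have e3 : ∀ i, ((Zᴴ * Z) i i).re = ∑ j, Complex.normSq (Z j i) := by
    intro j
    rw [Matrix.mul_apply, Complex.re_sum]
    refine Finset.sum_congr rfl fun i _ => ?_
    simp [Complex.normSq_apply]
  simp only [e1, e2, e3, Finset.mul_sum, Fintype.sum_prod_type]
  rw [Finset.sum_comm (f := fun j i => q j * Complex.normSq (Z j i)), ← Finset.sum_sub_distrib,
    ← Finset.sum_sub_distrib]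
  refine Finset.sum_congr rfl fun i _ => ?_
  rw [← Finset.sum_sub_distrib, ← Finset.sum_sub_distrib]
  refine Finset.sum_congr rfl fun j _ => ?_
  ring

lemma quad_le {p q t : ℝ} (hp : 0 ≤ p) (hq : 0 ≤ q) (ht : 0 < t) (u z : ℂ) :
    2 * (p * (u * z).re) - (q + t * p) * Complex.normSq z ≤
      Complex.normSq u * p ^ 2 / (q + t * p) := by
  rcases hp.eq_or_lt with h | h
  · have := mul_nonneg hq (Complex.normSq_nonneg z)
    simp [← h, this]
  · have hpos : 0 < q + t * p := by positivity
    rw [le_div_iff₀ hpos]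
    simp only [Complex.normSq_apply, Complex.mul_re]
    nlinarith [sq_nonneg (p * u.re - (q + t * p) * z.re),
      sq_nonneg (p * u.im + (q + t * p) * z.im)]

/-- Completing the square entrywise in the two eigenbases bounds `varf` by the resolvent quantity. -/
lemma varf_le {U W : Matrix X X ℂ} (hU : Uᴴ * U = 1) (hU' : U * Uᴴ = 1) (hW : Wᴴ * W = 1)
    (hW' : W * Wᴴ = 1) {p q : X → ℝ} (hp : ∀ i, 0 ≤ p i) (hq : ∀ i, 0 ≤ q i) {t : ℝ} (ht : 0 < t)
    (Y : Matrix X X ℂ) :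
    varf (U * diagonal (fun i => (p i : ℂ)) * Uᴴ) (W * diagonal (fun i => (q i : ℂ)) * Wᴴ) t Y ≤
      ∑ x : X × X, Complex.normSq ((Uᴴ * W) x.1 x.2) * p x.1 ^ 2 / (q x.2 + t * p x.1) := by
  have hY : Y = W * (Wᴴ * Y * U) * Uᴴ := by
    rw [show W * (Wᴴ * Y * U) * Uᴴ = (W * Wᴴ) * Y * (U * Uᴴ) by simp only [mul_assoc], hW', hU',
      one_mul, mul_one]
  rw [hY, varf_eq hU hW]
  exact Finset.sum_le_sum fun x _ => quad_le (hp _) (hq _) ht _ _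

/-- The bound `varf_le` is attained where all the completed squares vanish. -/
lemma exists_varf_eq {U W : Matrix X X ℂ} (hU : Uᴴ * U = 1) (hW : Wᴴ * W = 1)
    {p q : X → ℝ} (hp : ∀ i, 0 ≤ p i) (hq : ∀ i, 0 ≤ q i) {t : ℝ} (ht : 0 < t) :
    ∃ Y, varf (U * diagonal (fun i => (p i : ℂ)) * Uᴴ)
        (W * diagonal (fun i => (q i : ℂ)) * Wᴴ) t Y =
      ∑ x : X × X, Complex.normSq ((Uᴴ * W) x.1 x.2) * p x.1 ^ 2 / (q x.2 + t * p x.1) := by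
  refine ⟨W * (Matrix.of fun j i => ((p i / (q j + t * p i) : ℝ) : ℂ) * star ((Uᴴ * W) i j)) * Uᴴ,
    ?_⟩
  rw [varf_eq hU hW]
  refine Finset.sum_congr rfl fun x _ => ?_
  simp only [of_apply]
  generalize (Uᴴ * W) x.1 x.2 = u
  have hre : (u * (((p x.1 / (q x.2 + t * p x.1) : ℝ) : ℂ) * star u)).re
      = p x.1 / (q x.2 + t * p x.1) * Complex.normSq u := by
    rw [mul_left_comm, Complex.re_ofReal_mul]
    congr 1
    simp [Complex.normSq_apply]
  rw [hre, Complex.normSq_mul, Complex.normSq_ofReal, Complex.star_def, Complex.normSq_conj]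
  rcases (hp x.1).eq_or_lt with h | h
  · simp [← h]
  · have hpos : q x.2 + t * p x.1 ≠ 0 := by have := hq x.2; positivity
    field_simp
    ring

lemma sum_normSq_row {G : Matrix X X ℂ} (hG : G * Gᴴ = 1) (i : X) :
    ∑ j, Complex.normSq (G i j) = 1 := by
  have := congrFun (congrFun hG i) i
  rw [Matrix.mul_apply, Matrix.one_apply_eq] at this
  have h2 := congrArg Complex.re this
  rw [Complex.re_sum] at h2
  simpa [Complex.normSq_apply] using h2

lemma diag_conj (U W : Matrix X X ℂ) (p : X → ℝ) (j : X) :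
    (Wᴴ * (U * diagonal (fun i => (p i : ℂ)) * Uᴴ) * W) j j =
      ((∑ i, Complex.normSq ((Uᴴ * W) i j) * p i : ℝ) : ℂ) := by
  rw [show Wᴴ * (U * diagonal (fun i => (p i : ℂ)) * Uᴴ) * W
    = (Uᴴ * W)ᴴ * diagonal (fun i => (p i : ℂ)) * (Uᴴ * W) by
      simp only [conjTranspose_mul, conjTranspose_conjTranspose, mul_assoc]]
  rw [Matrix.mul_apply]
  push_cast
  refine Finset.sum_congr rfl fun i _ => ?_
  rw [Matrix.mul_diagonal, conjTranspose_apply, Complex.normSq_eq_conj_mul_self, Complex.star_def]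
  ring

lemma sum_weights {U W : Matrix X X ℂ} {p q : X → ℝ}
    (hU : Uᴴ * U = 1) (hWW : W * Wᴴ = 1) :
    (∑ x : X × X, Complex.normSq ((Uᴴ * W) x.1 x.2) * p x.1 = ∑ i, p i) ∧
    ∑ x : X × X, Complex.normSq ((Uᴴ * W) x.1 x.2) * p x.1 *
      (Real.log (p x.1) - Real.log (q x.2)) =
    -ent (U * diagonal (fun i => (p i : ℂ)) * Uᴴ) -
    ∑ j, Real.log (q j) * ((Wᴴ * (U * diagonal (fun i => (p i : ℂ)) * Uᴴ) * W) j j).re := by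
  have hG : (Uᴴ * W) * (Uᴴ * W)ᴴ = 1 := by
    rw [conjTranspose_mul, conjTranspose_conjTranspose,
      show Uᴴ * W * (Wᴴ * U) = Uᴴ * (W * Wᴴ) * U by simp only [mul_assoc], hWW, mul_one, hU]
  constructor
  · rw [Fintype.sum_prod_type]
    refine Finset.sum_congr rfl fun i _ => ?_
    simp only
    rw [← Finset.sum_mul, sum_normSq_row hG, one_mul]
  · rw [ent_conj_diagonal hU, ← Finset.sum_neg_distrib]
    simp only [diag_conj, Complex.ofReal_re, mul_sub, Finset.sum_sub_distrib,
      Fintype.sum_prod_type, Finset.mul_sum]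
    congr 1
    · refine Finset.sum_congr rfl fun i _ => ?_
      rw [← Finset.sum_mul, ← Finset.sum_mul, sum_normSq_row hG, Real.negMulLog]
      ring
    · rw [Finset.sum_comm]
      refine Finset.sum_congr rfl fun j _ => Finset.sum_congr rfl fun i _ => ?_
      ring

lemma trace_conj_diagonal {U : Matrix X X ℂ} (p : X → ℝ) (hU : Uᴴ * U = 1) :
    (U * diagonal (fun i => (p i : ℂ)) * Uᴴ).trace = ((∑ i, p i : ℝ) : ℂ) := by
  rw [trace_mul_comm, ← mul_assoc, hU, one_mul, trace_diagonal]
  push_cast; rfl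

/-- Monotonicity of the relative entropy `-S(ρ) - Tr ρ log σ`. The reference operators are given by
explicit spectral data `σ = W diag(q) W†`, and the data-processing map enters only through the
Heisenberg-picture correspondence `Y' ↦ Y` with its Schwarz inequalities. -/
lemma relent_mono {ρ σ : Matrix X X ℂ} {ρ' σ' : Matrix X' X' ℂ}
    (hρ : ρ.PosSemidef) (hρ' : ρ'.PosSemidef)
    {W : Matrix X X ℂ} {q : X → ℝ} (hW : Wᴴ * W = 1) (hWW : W * Wᴴ = 1) (hq : ∀ j, 0 ≤ q j)
    (hσ : σ = W * diagonal (fun i => (q i : ℂ)) * Wᴴ)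
    (hsupp : ∀ j, q j = 0 → (Wᴴ * ρ * W) j j = 0)
    {W' : Matrix X' X' ℂ} {q' : X' → ℝ} (hW' : W'ᴴ * W' = 1) (hWW' : W' * W'ᴴ = 1)
    (hq' : ∀ j, 0 ≤ q' j) (hσ' : σ' = W' * diagonal (fun i => (q' i : ℂ)) * W'ᴴ)
    (htr : ρ.trace = ρ'.trace)
    (h : ∀ Y' : Matrix X' X' ℂ, ∃ Y : Matrix X X ℂ, (ρ * Y).trace = (ρ' * Y').trace ∧
      ((σ * (Y * Yᴴ)).trace).re ≤ ((σ' * (Y' * Y'ᴴ)).trace).re ∧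
      ((ρ * (Yᴴ * Y)).trace).re ≤ ((ρ' * (Y'ᴴ * Y')).trace).re) :
    (∀ j, q' j = 0 → (W'ᴴ * ρ' * W') j j = 0) ∧
    -ent ρ' - ∑ j, Real.log (q' j) * ((W'ᴴ * ρ' * W') j j).re ≤
      -ent ρ - ∑ j, Real.log (q j) * ((Wᴴ * ρ * W) j j).re := by
  obtain ⟨U, hU, hUU, p, hp, rfl⟩ := exists_spectral hρ
  obtain ⟨U', hU', hUU', p', hp', rfl⟩ := exists_spectral hρ'
  subst hσ hσ'
  obtain ⟨k1, k2⟩ := sum_weights (p := p) (q := q) hU hWW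
  obtain ⟨k1', k2'⟩ := sum_weights (p := p') (q := q') hU' hWW'
  have htrp : ∑ i, p i = ∑ i, p' i := by
    rw [trace_conj_diagonal p hU, trace_conj_diagonal p' hU'] at htr
    exact_mod_cast htr
  rw [← k2, ← k2']
  have hmain := scalar_mono (α := X × X) (β := X' × X')
    (g := fun x => Complex.normSq ((Uᴴ * W) x.1 x.2)) (p := fun x => p x.1) (q := fun x => q x.2)
    (g' := fun x => Complex.normSq ((U'ᴴ * W') x.1 x.2)) (p' := fun x => p' x.1)
    (q' := fun x => q' x.2)
    (fun _ => Complex.normSq_nonneg _) (fun _ => hp _) (fun _ => hq _)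
    (fun _ => Complex.normSq_nonneg _) (fun _ => hp' _) (fun _ => hq' _)
    (by
      rintro ⟨i, j⟩ hj
      have := hsupp j hj
      rw [diag_conj, Complex.ofReal_eq_zero, Finset.sum_eq_zero_iff_of_nonneg
        (fun i _ => mul_nonneg (Complex.normSq_nonneg _) (hp i))] at this
      exact this i (Finset.mem_univ i))
    (by rw [k1, k1', htrp])
    (by
      intro t ht
      obtain ⟨Y', hY'⟩ := exists_varf_eq hU' hW' hp' hq' ht
      obtain ⟨Y, h1, h2, h3⟩ := h Y'
      rw [← hY']
      refine le_trans ?_ (varf_le hU hUU hW hWW hp hq ht Y)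
      unfold varf
      rw [h1]
      have := mul_le_mul_of_nonneg_left h3 ht.le
      linarith)
  refine ⟨fun j hj => ?_, hmain.2⟩
  rw [diag_conj, Finset.sum_eq_zero fun i _ => hmain.1 (i, j) hj, Complex.ofReal_zero]

end Mono

/-! ### Partial traces -/

section PartialTrace
variable {X V : Type*} [Fintype X] [DecidableEq X] [Fintype V] [DecidableEq V]

/-- Partial trace over the second tensor factor. -/
def ptraceRight {X V : Type*} [Fintype V] (M : Matrix (X × V) (X × V) ℂ) : Matrix X X ℂ :=
  Matrix.of fun x x' => ∑ v, M (x, v) (x', v)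

lemma exists_factor {A : Matrix X X ℂ} (hA : A.PosSemidef) : ∃ B : Matrix X X ℂ, A = Bᴴ * B := by
  obtain ⟨U, -, -, p, hp, rfl⟩ := exists_spectral hA
  refine ⟨diagonal (fun i => ((Real.sqrt (p i) : ℝ) : ℂ)) * Uᴴ, ?_⟩
  have hd : (diagonal (fun i => ((Real.sqrt (p i) : ℝ) : ℂ)))ᴴ *
      diagonal (fun i => ((Real.sqrt (p i) : ℝ) : ℂ)) = diagonal (fun i => (p i : ℂ)) := by
    rw [diagonal_conjTranspose, diagonal_mul_diagonal]
    congr 1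
    ext i
    simp only [Pi.star_apply, Complex.star_def, Complex.conj_ofReal]
    rw [← Complex.ofReal_mul, Real.mul_self_sqrt (hp i)]
  rw [conjTranspose_mul, conjTranspose_conjTranspose, ← hd]
  simp only [mul_assoc]

lemma trace_mul_re_nonneg {A B : Matrix X X ℂ} (hA : A.PosSemidef) (hB : B.PosSemidef) :
    0 ≤ ((A * B).trace).re := by
  obtain ⟨C, rfl⟩ := exists_factor hA
  rw [mul_assoc, trace_mul_comm]
  exact (Complex.le_def.mp (hB.mul_mul_conjTranspose_same C).trace_nonneg).1

lemma posSemidef_ptraceRight {ρ : Matrix (X × V) (X × V) ℂ} (hρ : ρ.PosSemidef) :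
    (ptraceRight ρ).PosSemidef := by
  have : ptraceRight ρ = ∑ v, ρ.submatrix (fun x => (x, v)) (fun x => (x, v)) := by
    ext x x'; simp [ptraceRight, Matrix.sum_apply]
  rw [this]
  exact posSemidef_sum _ fun v _ => hρ.submatrix _

lemma posSemidef_ptraceLeft {ρ : Matrix (X × V) (X × V) ℂ} (hρ : ρ.PosSemidef) :
    (ptraceLeft ρ).PosSemidef := by
  have : ptraceLeft ρ = ∑ x, ρ.submatrix (fun v => (x, v)) (fun v => (x, v)) := by
    ext x x'; simp [ptraceLeft, Matrix.sum_apply]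
  rw [this]
  exact posSemidef_sum _ fun v _ => hρ.submatrix _

lemma trace_ptraceLeft (ρ : Matrix (X × V) (X × V) ℂ) : (ptraceLeft ρ).trace = ρ.trace := by
  simp only [Matrix.trace, ptraceLeft, diag_apply, of_apply, Fintype.sum_prod_type]
  exact Finset.sum_comm

lemma trace_ptraceRight (ρ : Matrix (X × V) (X × V) ℂ) : (ptraceRight ρ).trace = ρ.trace := by
  simp only [Matrix.trace, ptraceRight, diag_apply, of_apply, Fintype.sum_prod_type]

lemma ptraceLeft_one_kron_mul (A B : Matrix V V ℂ) (ρ : Matrix (X × V) (X × V) ℂ) :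
    ptraceLeft (((1 : Matrix X X ℂ) ⊗ₖ A) * ρ * ((1 : Matrix X X ℂ) ⊗ₖ B)) =
      A * ptraceLeft ρ * B := by
  ext v v'
  simp only [ptraceLeft, of_apply, Matrix.mul_apply, kroneckerMap_apply, Fintype.sum_prod_type,
    Matrix.one_apply, ite_mul, one_mul, zero_mul, mul_ite, mul_zero,
    Finset.sum_ite_irrel, Finset.sum_const_zero, Finset.sum_ite_eq, Finset.sum_ite_eq',
    Finset.mem_univ, if_true, Finset.mul_sum, Finset.sum_mul]
  rw [Finset.sum_comm]
  refine Finset.sum_congr rfl fun w _ => ?_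
  rw [Finset.sum_comm]

lemma ptraceRight_kron_one_mul (A B : Matrix X X ℂ) (ρ : Matrix (X × V) (X × V) ℂ) :
    ptraceRight ((A ⊗ₖ (1 : Matrix V V ℂ)) * ρ * (B ⊗ₖ (1 : Matrix V V ℂ))) =
      A * ptraceRight ρ * B := by
  ext v v'
  simp only [ptraceRight, of_apply, Matrix.mul_apply, kroneckerMap_apply, Fintype.sum_prod_type_right,
    Matrix.one_apply, ite_mul, one_mul, zero_mul, mul_ite, mul_zero, mul_one,
    Finset.sum_ite_irrel, Finset.sum_const_zero, Finset.sum_ite_eq, Finset.sum_ite_eq',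
    Finset.mem_univ, if_true, Finset.mul_sum, Finset.sum_mul]
  rw [Finset.sum_comm]
  refine Finset.sum_congr rfl fun w _ => ?_
  rw [Finset.sum_comm]

lemma ptraceLeft_kron_one_mul {A B : Matrix X X ℂ} (h : B * A = 1)
    (ρ : Matrix (X × V) (X × V) ℂ) :
    ptraceLeft ((A ⊗ₖ (1 : Matrix V V ℂ)) * ρ * (B ⊗ₖ (1 : Matrix V V ℂ))) = ptraceLeft ρ := by
  have key : ∀ v v' : V, ptraceLeft ((A ⊗ₖ (1 : Matrix V V ℂ)) * ρ * (B ⊗ₖ (1 : Matrix V V ℂ))) v v'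
      = (A * (Matrix.of fun x x' => ρ (x, v) (x', v')) * B).trace := by
    intro v v'
    simp only [ptraceLeft, of_apply, Matrix.trace, diag_apply, Matrix.mul_apply, kroneckerMap_apply,
      Fintype.sum_prod_type_right,
      Matrix.one_apply, ite_mul, one_mul, zero_mul, mul_ite, mul_zero, mul_one,
      Finset.sum_ite_irrel, Finset.sum_const_zero, Finset.sum_ite_eq, Finset.sum_ite_eq',
      Finset.mem_univ, if_true]
  ext v v'
  rw [key, trace_mul_comm, ← mul_assoc, h, one_mul]
  rfl

lemma ptraceRight_one_kron_mul {A B : Matrix V V ℂ} (h : B * A = 1)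
    (ρ : Matrix (X × V) (X × V) ℂ) :
    ptraceRight (((1 : Matrix X X ℂ) ⊗ₖ A) * ρ * ((1 : Matrix X X ℂ) ⊗ₖ B)) = ptraceRight ρ := by
  have key : ∀ v v' : X, ptraceRight (((1 : Matrix X X ℂ) ⊗ₖ A) * ρ * ((1 : Matrix X X ℂ) ⊗ₖ B)) v v'
      = (A * (Matrix.of fun x x' => ρ (v, x) (v', x')) * B).trace := by
    intro v v'
    simp only [ptraceRight, of_apply, Matrix.trace, diag_apply, Matrix.mul_apply, kroneckerMap_apply,
      Fintype.sum_prod_type,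
      Matrix.one_apply, ite_mul, one_mul, zero_mul, mul_ite, mul_zero,
      Finset.sum_ite_irrel, Finset.sum_const_zero, Finset.sum_ite_eq, Finset.sum_ite_eq',
      Finset.mem_univ, if_true]
  ext v v'
  rw [key, trace_mul_comm, ← mul_assoc, h, one_mul]
  rfl

/-- In the eigenbasis of a marginal, the diagonal of the joint state sums to the eigenvalues of that
marginal and is supported where these do not vanish. -/
lemma diag_left {ρ M : Matrix (X × V) (X × V) ℂ} (hM : M.PosSemidef) {W : Matrix V V ℂ}
    {q : V → ℝ} (hW : Wᴴ * W = 1)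
    (hq : ptraceLeft ρ = W * diagonal (fun i => (q i : ℂ)) * Wᴴ)
    (hMρ : ptraceLeft M = Wᴴ * ptraceLeft ρ * W) :
    (∀ v, ∑ x, M (x, v) (x, v) = q v) ∧ ∀ x v, q v = 0 → M (x, v) (x, v) = 0 := by
  have h1 : ∀ v, ∑ x, M (x, v) (x, v) = q v := by
    intro v
    have := congrFun (congrFun hMρ v) v
    rw [hq, show Wᴴ * (W * diagonal (fun i => (q i : ℂ)) * Wᴴ) * W
      = (Wᴴ * W) * diagonal (fun i => (q i : ℂ)) * (Wᴴ * W) by simp only [mul_assoc], hW, one_mul,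
      mul_one, diagonal_apply_eq] at this
    exact this
  refine ⟨h1, fun x v hv => ?_⟩
  have h2 := h1 v
  rw [hv, Complex.ofReal_zero, Finset.sum_eq_zero_iff_of_nonneg fun x _ => hM.diag_nonneg] at h2
  exact h2 x (Finset.mem_univ x)

lemma diag_right {ρ M : Matrix (X × V) (X × V) ℂ} (hM : M.PosSemidef) {W : Matrix X X ℂ}
    {q : X → ℝ} (hW : Wᴴ * W = 1)
    (hq : ptraceRight ρ = W * diagonal (fun i => (q i : ℂ)) * Wᴴ)
    (hMρ : ptraceRight M = Wᴴ * ptraceRight ρ * W) :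
    (∀ v, ∑ x, M (v, x) (v, x) = q v) ∧ ∀ x v, q v = 0 → M (v, x) (v, x) = 0 := by
  have h1 : ∀ v, ∑ x, M (v, x) (v, x) = q v := by
    intro v
    have := congrFun (congrFun hMρ v) v
    rw [hq, show Wᴴ * (W * diagonal (fun i => (q i : ℂ)) * Wᴴ) * W
      = (Wᴴ * W) * diagonal (fun i => (q i : ℂ)) * (Wᴴ * W) by simp only [mul_assoc], hW, one_mul,
      mul_one, diagonal_apply_eq] at this
    exact this
  refine ⟨h1, fun x v hv => ?_⟩
  have h2 := h1 v
  rw [hv, Complex.ofReal_zero, Finset.sum_eq_zero_iff_of_nonneg fun x _ => hM.diag_nonneg] at h2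
  exact h2 x (Finset.mem_univ x)

/-- Spectral data of `1 ⊗ ρ_V`, with the value of `Tr ρ log (1 ⊗ ρ_V)`. -/
lemma cross_one_kron {ρ : Matrix (X × V) (X × V) ℂ} (hρ : ρ.PosSemidef) {W : Matrix V V ℂ}
    {q : V → ℝ} (hW : Wᴴ * W = 1)
    (hq : ptraceLeft ρ = W * diagonal (fun i => (q i : ℂ)) * Wᴴ) :
    (∀ x : X × V, q x.2 = 0 →
      (((1 : Matrix X X ℂ) ⊗ₖ W)ᴴ * ρ * ((1 : Matrix X X ℂ) ⊗ₖ W)) x x = 0) ∧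
    ∑ x : X × V, Real.log (q x.2) *
      ((((1 : Matrix X X ℂ) ⊗ₖ W)ᴴ * ρ * ((1 : Matrix X X ℂ) ⊗ₖ W)) x x).re =
      -ent (ptraceLeft ρ) := by
  set M := ((1 : Matrix X X ℂ) ⊗ₖ W)ᴴ * ρ * ((1 : Matrix X X ℂ) ⊗ₖ W) with hMdef
  have hM : M.PosSemidef := hρ.conjTranspose_mul_mul_same _
  obtain ⟨h1, h2⟩ := diag_left hM hW hq (by
    rw [hMdef, conjTranspose_kronecker, conjTranspose_one, ptraceLeft_one_kron_mul])
  refine ⟨fun x hx => h2 x.1 x.2 hx, ?_⟩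
  rw [hq, ent_conj_diagonal hW, Fintype.sum_prod_type_right, ← Finset.sum_neg_distrib]
  refine Finset.sum_congr rfl fun v _ => ?_
  simp only
  rw [← Finset.mul_sum, ← Complex.re_sum, h1, Complex.ofReal_re, Real.negMulLog]
  ring

end PartialTrace

/-! ### Strong subadditivity -/

section SSA
variable {X Y Z : Type*} [Fintype X] [DecidableEq X] [Fintype Y] [DecidableEq Y]
  [Fintype Z] [DecidableEq Z]

/-- Marginal on the first two of three tensor factors. -/
def marg12 {X Y Z : Type*} [Fintype Z] (ρ : Matrix (X × Y × Z) (X × Y × Z) ℂ) :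
    Matrix (X × Y) (X × Y) ℂ :=
  ptraceRight (ρ.submatrix (Equiv.prodAssoc X Y Z) (Equiv.prodAssoc X Y Z))

/-- `A ↦ A ⊗ 1` on three tensor factors. -/
def emb12 (Z : Type*) [DecidableEq Z] {X Y : Type*} (A : Matrix (X × Y) (X × Y) ℂ) :
    Matrix (X × Y × Z) (X × Y × Z) ℂ :=
  (A ⊗ₖ (1 : Matrix Z Z ℂ)).submatrix (Equiv.prodAssoc X Y Z).symm (Equiv.prodAssoc X Y Z).symm

lemma emb12_mul (A B : Matrix (X × Y) (X × Y) ℂ) : emb12 Z A * emb12 Z B = emb12 Z (A * B) := by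
  rw [emb12, emb12, submatrix_mul_equiv, ← mul_kronecker_mul, one_mul]; rfl

lemma emb12_conjTranspose (A : Matrix (X × Y) (X × Y) ℂ) : (emb12 Z A)ᴴ = emb12 Z Aᴴ := by
  rw [emb12, conjTranspose_submatrix, conjTranspose_kronecker, conjTranspose_one]; rfl

lemma trace_mul_emb12 (ρ : Matrix (X × Y × Z) (X × Y × Z) ℂ) (A : Matrix (X × Y) (X × Y) ℂ) :
    (ρ * emb12 Z A).trace = (marg12 ρ * A).trace := by
  simp only [marg12, ptraceRight, emb12, Matrix.trace, diag_apply, Matrix.mul_apply, submatrix_apply,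
    of_apply, kroneckerMap_apply, Equiv.prodAssoc_apply, Equiv.prodAssoc_symm_apply,
    Fintype.sum_prod_type, Matrix.one_apply, mul_ite, mul_one, mul_zero, Finset.sum_ite_eq,
    Finset.sum_ite_eq', Finset.mem_univ, if_true, Finset.sum_mul]
  refine Finset.sum_congr rfl fun x _ => Finset.sum_congr rfl fun y _ => ?_
  rw [Finset.sum_comm]
  refine Finset.sum_congr rfl fun x' _ => ?_
  rw [Finset.sum_comm]

lemma one_kron_conj (W : Matrix Y Y ℂ) (q : Y → ℝ) :
    (1 : Matrix X X ℂ) ⊗ₖ (W * diagonal (fun i => (q i : ℂ)) * Wᴴ) =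
      ((1 : Matrix X X ℂ) ⊗ₖ W) * diagonal (fun i : X × Y => (q i.2 : ℂ)) *
        ((1 : Matrix X X ℂ) ⊗ₖ W)ᴴ := by
  have : diagonal (fun i : X × Y => (q i.2 : ℂ)) =
      (1 : Matrix X X ℂ) ⊗ₖ diagonal (fun i => (q i : ℂ)) := by
    rw [← diagonal_one, diagonal_kronecker_diagonal]; simp
  rw [this, conjTranspose_kronecker, ← mul_kronecker_mul, ← mul_kronecker_mul, conjTranspose_one,
    mul_one, mul_one]

lemma kron_unitary {A : Matrix X X ℂ} {W : Matrix Y Y ℂ} (hA : Aᴴ * A = 1) (hW : Wᴴ * W = 1) :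
    (A ⊗ₖ W)ᴴ * (A ⊗ₖ W) = 1 := by
  rw [conjTranspose_kronecker, ← mul_kronecker_mul, hA, hW, one_kronecker_one]

lemma kron_unitary' {A : Matrix X X ℂ} {W : Matrix Y Y ℂ} (hA : A * Aᴴ = 1) (hW : W * Wᴴ = 1) :
    (A ⊗ₖ W) * (A ⊗ₖ W)ᴴ = 1 := by
  rw [conjTranspose_kronecker, ← mul_kronecker_mul, hA, hW, one_kronecker_one]

/-- Strong subadditivity `S(XYZ) + S(Y) ≤ S(XY) + S(YZ)`, as monotonicity of the relative entropy of
`ρ_{XYZ}` to `1 ⊗ ρ_{YZ}` under the partial trace over `Z`. -/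
lemma strong_subadditivity {ρ : Matrix (X × Y × Z) (X × Y × Z) ℂ} (hρ : ρ.PosSemidef) :
    ent ρ + ent (ptraceLeft (marg12 ρ)) ≤ ent (marg12 ρ) + ent (ptraceLeft ρ) := by
  have hρ' : (marg12 ρ).PosSemidef := posSemidef_ptraceRight (hρ.submatrix _)
  obtain ⟨W, hW, hWW, q, hq, hWq⟩ := exists_spectral (posSemidef_ptraceLeft hρ)
  obtain ⟨W', hW', hWW', q', hq', hWq'⟩ := exists_spectral (posSemidef_ptraceLeft hρ')
  obtain ⟨c1, c2⟩ := cross_one_kron hρ hW hWq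
  obtain ⟨-, c2'⟩ := cross_one_kron hρ' hW' hWq'
  have hσ : marg12 ((1 : Matrix X X ℂ) ⊗ₖ ptraceLeft ρ) =
      (1 : Matrix X X ℂ) ⊗ₖ ptraceLeft (marg12 ρ) := by
    ext ⟨x, y⟩ ⟨x', y'⟩
    change ∑ z, (1 : Matrix X X ℂ) x x' * (∑ a, ρ (a, y, z) (a, y', z)) =
      (1 : Matrix X X ℂ) x x' * ∑ a, ∑ z, ρ (a, y, z) (a, y', z)
    rw [← Finset.mul_sum, Finset.sum_comm]
  have hm := (relent_mono (σ := (1 : Matrix X X ℂ) ⊗ₖ ptraceLeft ρ)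
    (σ' := (1 : Matrix X X ℂ) ⊗ₖ ptraceLeft (marg12 ρ)) hρ hρ'
    (W := (1 : Matrix X X ℂ) ⊗ₖ W) (q := fun i => q i.2)
    (kron_unitary (by simp) hW) (kron_unitary' (by simp) hWW) (fun _ => hq _)
    (by rw [hWq, one_kron_conj]) c1
    (W' := (1 : Matrix X X ℂ) ⊗ₖ W') (q' := fun i => q' i.2)
    (kron_unitary (by simp) hW') (kron_unitary' (by simp) hWW') (fun _ => hq' _)
    (by rw [hWq', one_kron_conj])
    (by
      have := trace_mul_emb12 ρ 1
      rw [mul_one] at this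
      rw [← this]
      simp [emb12])
    (by
      intro Y'
      refine ⟨emb12 Z Y', trace_mul_emb12 _ _, ?_, ?_⟩
      · rw [emb12_conjTranspose, emb12_mul, trace_mul_emb12, hσ]
      · rw [emb12_conjTranspose, emb12_mul, trace_mul_emb12])).2
  rw [c2, c2'] at hm
  linarith

end SSA

/-! ### Hypothesis testing against a product state -/

section Test
variable {X V : Type*} [Fintype X] [DecidableEq X] [Fintype V] [DecidableEq V]

lemma posSemidef_mul_one_sub {T : Matrix X X ℂ} (hT : T.PosSemidef) (hT' : (1 - T).PosSemidef) :
    (T * (1 - T)).PosSemidef := by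
  have h1 := hT'.mul_mul_conjTranspose_same T
  have h2 := hT.mul_mul_conjTranspose_same (1 - T)
  rw [hT.1.eq] at h1
  rw [hT'.1.eq] at h2
  have : T * (1 - T) = T * (1 - T) * T + (1 - T) * T * (1 - T) := by noncomm_ring
  rw [this]
  exact h1.add h2

/-- Schwarz inequality for the unital positive map `diag(y₀, y₁) ↦ y₀ T + y₁ (1 - T)`. -/
lemma schwarz_test {σ T : Matrix X X ℂ} (hσ : σ.PosSemidef) (hT : T.PosSemidef)
    (hT' : (1 - T).PosSemidef) (y z : ℂ) :
    ((σ * ((y • T + z • (1 - T)) * (y • T + z • (1 - T))ᴴ)).trace).re ≤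
      Complex.normSq y * ((σ * T).trace).re + Complex.normSq z * ((σ * (1 - T)).trace).re := by
  have h1 := trace_mul_re_nonneg hσ (posSemidef_mul_one_sub hT hT')
  have h2 : (y • T + z • (1 - T)) * (y • T + z • (1 - T))ᴴ =
      (Complex.normSq y : ℂ) • T + (Complex.normSq z : ℂ) • (1 - T) -
        (Complex.normSq (y - z) : ℂ) • (T * (1 - T)) := by
    rw [conjTranspose_add, conjTranspose_smul, conjTranspose_smul, hT.1.eq, hT'.1.eq]
    simp only [Complex.normSq_eq_conj_mul_self, map_sub, ← Complex.star_def]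
    simp only [add_mul, mul_add, smul_mul_assoc, mul_smul_comm, smul_smul, mul_sub, sub_mul, mul_one,
      one_mul]
    module
  rw [h2, mul_sub, mul_add, mul_smul_comm, mul_smul_comm, mul_smul_comm, trace_sub, trace_add,
    trace_smul, trace_smul, trace_smul]
  simp only [smul_eq_mul, Complex.sub_re, Complex.add_re, Complex.re_ofReal_mul]
  nlinarith [mul_nonneg (Complex.normSq_nonneg (y - z)) h1]

lemma trace_mul_im {σ T : Matrix X X ℂ} (hσ : σ.IsHermitian) (hT : T.IsHermitian) :
    (σ * T).trace = (((σ * T).trace).re : ℂ) := by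
  have : star (σ * T).trace = (σ * T).trace := by
    rw [← trace_conjTranspose, conjTranspose_mul, hσ.eq, hT.eq, trace_mul_comm]
  exact (Complex.conj_eq_iff_re.mp this).symm

/-- Spectral data of `ρ_X ⊗ ρ_V`, with the value of `Tr ρ log (ρ_X ⊗ ρ_V)`. -/
lemma cross_prod {ρ : Matrix (X × V) (X × V) ℂ} (hρ : ρ.PosSemidef) {U : Matrix X X ℂ}
    {W : Matrix V V ℂ} {r : X → ℝ} {q : V → ℝ} (hU : Uᴴ * U = 1) (hUU : U * Uᴴ = 1)
    (hW : Wᴴ * W = 1) (hWW : W * Wᴴ = 1)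
    (hr : ptraceRight ρ = U * diagonal (fun i => (r i : ℂ)) * Uᴴ)
    (hq : ptraceLeft ρ = W * diagonal (fun i => (q i : ℂ)) * Wᴴ) :
    (∀ x : X × V, r x.1 * q x.2 = 0 → ((U ⊗ₖ W)ᴴ * ρ * (U ⊗ₖ W)) x x = 0) ∧
    ∑ x : X × V, Real.log (r x.1 * q x.2) * (((U ⊗ₖ W)ᴴ * ρ * (U ⊗ₖ W)) x x).re =
      -ent (ptraceRight ρ) - ent (ptraceLeft ρ) := by
  set M := (U ⊗ₖ W)ᴴ * ρ * (U ⊗ₖ W) with hMdef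
  have hM : M.PosSemidef := hρ.conjTranspose_mul_mul_same _
  have e1 : M = ((1 : Matrix X X ℂ) ⊗ₖ Wᴴ) * ((Uᴴ ⊗ₖ (1 : Matrix V V ℂ)) * ρ *
      (U ⊗ₖ (1 : Matrix V V ℂ))) * ((1 : Matrix X X ℂ) ⊗ₖ W) := by
    rw [hMdef, conjTranspose_kronecker, show U ⊗ₖ W = (U ⊗ₖ (1 : Matrix V V ℂ)) *
      ((1 : Matrix X X ℂ) ⊗ₖ W) by rw [← mul_kronecker_mul, mul_one, one_mul],
      show Uᴴ ⊗ₖ Wᴴ = ((1 : Matrix X X ℂ) ⊗ₖ Wᴴ) * (Uᴴ ⊗ₖ (1 : Matrix V V ℂ)) by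
        rw [← mul_kronecker_mul, mul_one, one_mul]]
    simp only [mul_assoc]
  have e2 : M = (Uᴴ ⊗ₖ (1 : Matrix V V ℂ)) * (((1 : Matrix X X ℂ) ⊗ₖ Wᴴ) * ρ *
      ((1 : Matrix X X ℂ) ⊗ₖ W)) * (U ⊗ₖ (1 : Matrix V V ℂ)) := by
    rw [hMdef, conjTranspose_kronecker, show U ⊗ₖ W = ((1 : Matrix X X ℂ) ⊗ₖ W) *
      (U ⊗ₖ (1 : Matrix V V ℂ)) by rw [← mul_kronecker_mul, mul_one, one_mul],
      show Uᴴ ⊗ₖ Wᴴ = (Uᴴ ⊗ₖ (1 : Matrix V V ℂ)) * ((1 : Matrix X X ℂ) ⊗ₖ Wᴴ) by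
        rw [← mul_kronecker_mul, mul_one, one_mul]]
    simp only [mul_assoc]
  obtain ⟨l1, l2⟩ := diag_left hM hW hq (by
    rw [e1, ptraceLeft_one_kron_mul, ptraceLeft_kron_one_mul hUU])
  obtain ⟨r1, r2⟩ := diag_right hM hU hr (by
    rw [e2, ptraceRight_kron_one_mul, ptraceRight_one_kron_mul hWW])
  have hz : ∀ x : X × V, r x.1 * q x.2 = 0 → M x x = 0 := by
    rintro ⟨x, v⟩ h
    rcases mul_eq_zero.mp h with h | h
    · exact r2 v x h
    · exact l2 x v h
  refine ⟨hz, ?_⟩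
  have hl : ∀ x : X × V, Real.log (r x.1 * q x.2) * (M x x).re =
      Real.log (r x.1) * (M x x).re + Real.log (q x.2) * (M x x).re := by
    intro x
    by_cases h : r x.1 * q x.2 = 0
    · rw [hz x h]; simp
    · rw [Real.log_mul (left_ne_zero_of_mul h) (right_ne_zero_of_mul h), add_mul]
  simp only [hl]
  rw [Finset.sum_add_distrib, hq, ent_conj_diagonal hW, hr, ent_conj_diagonal hU,
    Fintype.sum_prod_type, Fintype.sum_prod_type_right]
  have s1 : ∑ x, ∑ y, Real.log (r (x, y).1) * (M (x, y) (x, y)).re = -∑ i, Real.negMulLog (r i) := by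
    rw [← Finset.sum_neg_distrib]
    refine Finset.sum_congr rfl fun v _ => ?_
    simp only
    rw [← Finset.mul_sum, ← Complex.re_sum, r1, Complex.ofReal_re, Real.negMulLog]
    ring
  have s2 : ∑ y, ∑ x, Real.log (q (x, y).2) * (M (x, y) (x, y)).re = -∑ i, Real.negMulLog (q i) := by
    rw [← Finset.sum_neg_distrib]
    refine Finset.sum_congr rfl fun v _ => ?_
    simp only
    rw [← Finset.mul_sum, ← Complex.re_sum, l1, Complex.ofReal_re, Real.negMulLog]
    ring
  rw [s1, s2]; ring

lemma kron_conj (U : Matrix X X ℂ) (W : Matrix V V ℂ) (r : X → ℝ) (q : V → ℝ) :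
    (U * diagonal (fun i => (r i : ℂ)) * Uᴴ) ⊗ₖ (W * diagonal (fun i => (q i : ℂ)) * Wᴴ) =
      (U ⊗ₖ W) * diagonal (fun i : X × V => ((r i.1 * q i.2 : ℝ) : ℂ)) * (U ⊗ₖ W)ᴴ := by
  have : diagonal (fun i : X × V => ((r i.1 * q i.2 : ℝ) : ℂ)) =
      diagonal (fun i => (r i : ℂ)) ⊗ₖ diagonal (fun i => (q i : ℂ)) := by
    rw [diagonal_kronecker_diagonal]; simp
  rw [this, conjTranspose_kronecker, ← mul_kronecker_mul, ← mul_kronecker_mul]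

lemma quad_diag_le (q : Fin 2 → ℝ) (hq : ∀ i, 0 ≤ q i) (Y : Matrix (Fin 2) (Fin 2) ℂ) :
    Complex.normSq (Y 0 0) * q 0 + Complex.normSq (Y 1 1) * q 1 ≤
      ((diagonal (fun i => (q i : ℂ)) * (Y * Yᴴ)).trace).re := by
  have h : ((diagonal (fun i => (q i : ℂ)) * (Y * Yᴴ)).trace).re =
      q 0 * (Complex.normSq (Y 0 0) + Complex.normSq (Y 0 1)) +
      q 1 * (Complex.normSq (Y 1 0) + Complex.normSq (Y 1 1)) := by
    simp [Matrix.trace, Fin.sum_univ_two, diagonal_mul, Matrix.mul_apply, Complex.normSq_apply,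
      Complex.mul_re, Complex.mul_im]
  rw [h]
  nlinarith [mul_nonneg (hq 0) (Complex.normSq_nonneg (Y 0 1)),
    mul_nonneg (hq 1) (Complex.normSq_nonneg (Y 1 0))]

/-- Hypothesis-testing bound: a test of `ρ` against `ρ_X ⊗ ρ_V` with success probability at
least `1 - ε` and false-alarm probability at most `1 / m` forces `(1 - ε) log m ≤ h(ε) + I(X;V)`.
It is monotonicity of the relative entropy `D(ρ ‖ ρ_X ⊗ ρ_V)` under the two-outcome measurement. -/
lemma test_bound {ρ T : Matrix (X × V) (X × V) ℂ} (hρ : ρ.PosSemidef) (htr : ρ.trace = 1)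
    (hT : T.PosSemidef) (hT' : (1 - T).PosSemidef) {ε m : ℝ} (hε : 0 < ε) (hε' : ε < 1 / 2)
    (hm : 1 ≤ m) (ha : 1 - ε ≤ ((ρ * T).trace).re)
    (hb : (((ptraceRight ρ ⊗ₖ ptraceLeft ρ) * T).trace).re ≤ 1 / m) :
    (1 - ε) * Real.log m ≤
      Real.binEntropy ε + ent (ptraceRight ρ) + ent (ptraceLeft ρ) - ent ρ := by
  set σ := ptraceRight ρ ⊗ₖ ptraceLeft ρ with hσdef
  have hσ : σ.PosSemidef := (posSemidef_ptraceRight hρ).kronecker (posSemidef_ptraceLeft hρ)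
  have hσtr : σ.trace = 1 := by
    rw [hσdef, trace_kronecker, trace_ptraceLeft, trace_ptraceRight, htr, one_mul]
  set a := ((ρ * T).trace).re with hadef
  set b := ((σ * T).trace).re with hbdef
  have hb0 : 0 ≤ b := trace_mul_re_nonneg hσ hT
  have ha1 : ((ρ * (1 - T)).trace).re = 1 - a := by
    rw [mul_sub, mul_one, trace_sub, htr, Complex.sub_re, Complex.one_re]
  have hb1 : ((σ * (1 - T)).trace).re = 1 - b := by
    rw [mul_sub, mul_one, trace_sub, hσtr, Complex.sub_re, Complex.one_re]
  have hb2 : 0 ≤ 1 - b := hb1 ▸ trace_mul_re_nonneg hσ hT'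
  have ha2 : 0 ≤ 1 - a := ha1 ▸ trace_mul_re_nonneg hρ hT'
  obtain ⟨U, hU, hUU, r, hr, hUr⟩ := exists_spectral (posSemidef_ptraceRight hρ)
  obtain ⟨W, hW, hWW, q, hq, hWq⟩ := exists_spectral (posSemidef_ptraceLeft hρ)
  obtain ⟨c1, c2⟩ := cross_prod hρ hU hUU hW hWW hUr hWq
  set p' : Fin 2 → ℝ := ![a, 1 - a] with hp'
  set q' : Fin 2 → ℝ := ![b, 1 - b] with hq'
  have hp'0 : ∀ i, 0 ≤ p' i := by
    intro i; fin_cases i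
    · simp [hp']; linarith
    · simpa [hp'] using ha2
  have hq'0 : ∀ i, 0 ≤ q' i := by
    intro i; fin_cases i
    · simpa [hq'] using hb0
    · simpa [hq'] using hb2
  obtain ⟨m1, m2⟩ := relent_mono (σ := σ) (σ' := diagonal (fun i => (q' i : ℂ))) hρ
    (ρ' := diagonal (fun i => (p' i : ℂ)))
    (PosSemidef.diagonal (by intro i; simpa using hp'0 i))
    (W := U ⊗ₖ W) (q := fun i => r i.1 * q i.2)
    (kron_unitary hU hW) (kron_unitary' hUU hWW) (fun i => mul_nonneg (hr _) (hq _))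
    (by rw [hσdef, ← kron_conj, ← hUr, ← hWq]) c1 (W' := 1) (q' := q') (by simp) (by simp) hq'0
    (by simp)
    (by rw [htr, trace_diagonal]; simp [hp'])
    (by
      intro Y'
      refine ⟨Y' 0 0 • T + Y' 1 1 • (1 - T), ?_, ?_, ?_⟩
      · rw [mul_add, mul_smul_comm, mul_smul_comm, trace_add, trace_smul, trace_smul,
          trace_mul_im hρ.1 hT.1, trace_mul_im hρ.1 hT'.1, ha1, ← hadef]
        simp [Matrix.trace, Fin.sum_univ_two, diagonal_mul, hp']
        ring
      · refine (schwarz_test hσ hT hT' _ _).trans ?_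
        refine le_trans (le_of_eq ?_) (quad_diag_le q' hq'0 Y')
        rw [hb1]; simp [hq', hbdef]
      · have hs := schwarz_test hρ hT hT' (star (Y' 0 0)) (star (Y' 1 1))
        have e : (star (Y' 0 0) • T + star (Y' 1 1) • (1 - T))
            = (Y' 0 0 • T + Y' 1 1 • (1 - T))ᴴ := by
          rw [conjTranspose_add, conjTranspose_smul, conjTranspose_smul, hT.1.eq, hT'.1.eq]
        rw [e, conjTranspose_conjTranspose] at hs
        refine hs.trans ?_
        have := quad_diag_le p' hp'0 Y'ᴴ
        rw [conjTranspose_conjTranspose] at this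
        refine le_trans (le_of_eq ?_) this
        rw [ha1]; simp [hp', hadef, conjTranspose_apply])
  simp only [conjTranspose_one, one_mul, mul_one, diagonal_apply_eq, Complex.ofReal_re,
    Fin.sum_univ_two] at m2
  rw [c2] at m2
  have he : ent (diagonal (fun i => (p' i : ℂ))) = Real.binEntropy a := by
    have := ent_conj_diagonal (U := (1 : Matrix (Fin 2) (Fin 2) ℂ)) (by simp) p'
    simp only [conjTranspose_one, one_mul, mul_one] at this
    rw [this, Fin.sum_univ_two, Real.binEntropy_eq_negMulLog_add_negMulLog_one_sub]
    simp [hp']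
  rw [he] at m2
  have hbin : Real.binEntropy a ≤ Real.binEntropy ε := by
    rw [← Real.binEntropy_one_sub ε]
    exact Real.binEntropy_strictAntiOn.antitoneOn ⟨by norm_num; linarith, by linarith⟩
      ⟨by norm_num; linarith, by linarith⟩ ha
  have hbpos : 0 < b := by
    refine lt_of_le_of_ne hb0 fun h => ?_
    have := m1 0 (by simp [hq', ← h])
    simp [hp'] at this
    linarith
  have hlogb : Real.log m ≤ -Real.log b := by
    rw [← Real.log_inv]
    refine Real.log_le_log (by linarith) ?_
    rw [le_inv_comm₀ (by linarith) hbpos, ← one_div]; exact hb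
  have hlog1b : Real.log (1 - b) ≤ 0 := Real.log_nonpos hb2 (by linarith)
  have hlm : 0 ≤ Real.log m := Real.log_nonneg hm
  simp only [hq', hp', Matrix.cons_val_zero, Matrix.cons_val_one] at m2
  nlinarith [mul_le_mul ha hlogb hlm (by linarith), mul_nonneg ha2 (neg_nonneg.mpr hlog1b)]

end Test

/-! ### Single-letter bounds for block states -/

section Chain
variable {C E Z : Type} [Fintype C] [DecidableEq C] [Fintype E] [DecidableEq E]
  [Fintype Z] [DecidableEq Z]

/-- Marginal of a state on `Cⁿ ⊗ Eⁿ ⊗ Z` on its `i`-th letter `C_i ⊗ E_i`. -/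
def letter {n : ℕ} (ρ : Matrix ((Fin n → C) × (Fin n → E) × Z) ((Fin n → C) × (Fin n → E) × Z) ℂ)
    (i : Fin n) : Matrix (C × E) (C × E) ℂ :=
  Matrix.of fun x x' => ∑ p : (Fin n → C) × (Fin n → E) × Z,
    if p.1 i = x.1 ∧ p.2.1 i = x.2 then
      ρ p (Function.update p.1 i x'.1, Function.update p.2.1 i x'.2, p.2.2) else 0

/-- Marginal of a state on `Cⁿ` on its `i`-th letter. -/
def letterC {n : ℕ} (ρ : Matrix (Fin n → C) (Fin n → C) ℂ) (i : Fin n) : Matrix C C ℂ :=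
  Matrix.of fun x x' => ∑ f : Fin n → C, if f i = x then ρ f (Function.update f i x') else 0

lemma letterC_ptraceRight {n : ℕ}
    (ρ : Matrix ((Fin n → C) × (Fin n → E) × Z) ((Fin n → C) × (Fin n → E) × Z) ℂ) (i : Fin n) :
    letterC (ptraceRight ρ) i = ptraceRight (letter ρ i) := by
  ext c c'
  simp only [letterC, ptraceRight, letter, of_apply]
  rw [Finset.sum_comm, Fintype.sum_prod_type]
  refine Finset.sum_congr rfl fun f _ => ?_
  by_cases h : f i = c
  · simp only [h, true_and, if_true]
    refine Finset.sum_congr rfl fun g _ => ?_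
    rw [Finset.sum_ite_eq, if_pos (Finset.mem_univ _), Function.update_eq_self]
  · simp [h]

/-- Splitting off the first letter. -/
def splitEquiv (C E Z : Type) (n : ℕ) : (C × E × (Fin n → C) × (Fin n → E) × Z) ≃
    (Fin (n + 1) → C) × (Fin (n + 1) → E) × Z where
  toFun p := (Fin.cons p.1 p.2.2.1, Fin.cons p.2.1 p.2.2.2.1, p.2.2.2.2)
  invFun p := (p.1 0, p.2.1 0, Fin.tail p.1, Fin.tail p.2.1, p.2.2)
  left_inv p := by simp
  right_inv p := by simp

/-- Moving the leftover environment letter into the side register. -/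
def moveEquiv (C E Z : Type) (n : ℕ) : ((Fin n → C) × (Fin n → E) × (E × Z)) ≃
    (E × (Fin n → C) × (Fin n → E) × Z) where
  toFun p := (p.2.2.1, p.1, p.2.1, p.2.2.2)
  invFun p := (p.2.1, p.2.2.1, p.1, p.2.2.2)
  left_inv _ := rfl
  right_inv _ := rfl

/-- Prepending an environment letter stored in the side register to the environment block. -/
def consEquiv' (E Z : Type) (n : ℕ) : ((Fin n → E) × (E × Z)) ≃ ((Fin (n + 1) → E) × Z) where
  toFun p := (Fin.cons p.2.1 p.1, p.2.2)
  invFun p := (Fin.tail p.1, p.1 0, p.2)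
  left_inv p := by simp
  right_inv p := by simp

/-- `H(Cⁿ | Eⁿ Z) ≤ ∑ᵢ H(Cᵢ | Eᵢ)`, by iterating strong subadditivity; the letters are states. -/
lemma chain {n : ℕ} : ∀ {Z : Type} [Fintype Z] [DecidableEq Z]
    {ρ : Matrix ((Fin n → C) × (Fin n → E) × Z) ((Fin n → C) × (Fin n → E) × Z) ℂ},
    ρ.PosSemidef → ent ρ - ent (ptraceLeft ρ) ≤
      ∑ i, (ent (letter ρ i) - ent (ptraceLeft (letter ρ i))) ∧
      ∀ i, (letter ρ i).PosSemidef ∧ (letter ρ i).trace = ρ.trace := by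
  induction n with
  | zero =>
    intro Z _ _ ρ hρ
    have : ptraceLeft ρ = ρ.submatrix (Equiv.uniqueProd ((Fin 0 → E) × Z) (Fin 0 → C)).symm
        (Equiv.uniqueProd ((Fin 0 → E) × Z) (Fin 0 → C)).symm := by
      ext x y
      simp [ptraceLeft, Equiv.uniqueProd]
    rw [this, ent_submatrix hρ.1]
    simp only [sub_self, Finset.univ_eq_empty, Finset.sum_empty, le_refl, true_and]
    exact fun i => i.elim0
  | succ n ih =>
    intro Z _ _ ρ hρ
    set ρ₁ := ρ.submatrix (splitEquiv C E Z n) (splitEquiv C E Z n) with h1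
    have hρ₁ : ρ₁.PosSemidef := hρ.submatrix _
    set ρ₂ := (ptraceLeft ρ₁).submatrix (moveEquiv C E Z n) (moveEquiv C E Z n) with h2
    have hρ₂ : ρ₂.PosSemidef := (posSemidef_ptraceLeft hρ₁).submatrix _
    have e1 : ent ρ₁ = ent ρ := ent_submatrix hρ.1 _
    have e2 : ent ρ₂ = ent (ptraceLeft ρ₁) := ent_submatrix (posSemidef_ptraceLeft hρ₁).1 _
    have e3 : ent (ptraceLeft ρ₂) = ent (ptraceLeft ρ) := by
      rw [← ent_submatrix (posSemidef_ptraceLeft hρ).1 (consEquiv' E Z n)]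
      congr 1
      ext ⟨g, e, z⟩ ⟨g', e', z'⟩
      simp only [h2, h1, ptraceLeft, of_apply, submatrix_apply, consEquiv', moveEquiv, splitEquiv,
        Equiv.coe_fn_mk]
      rw [← (Fin.consEquiv (fun _ => C)).sum_comp, Fintype.sum_prod_type, Finset.sum_comm]
      rfl
    have e4 : marg12 ρ₁ = letter ρ 0 := by
      ext ⟨c, e⟩ ⟨c', e'⟩
      simp only [h1, letter, marg12, ptraceRight, of_apply, submatrix_apply,
        Equiv.prodAssoc_apply]
      rw [← (splitEquiv C E Z n).sum_comp]
      simp only [splitEquiv, Equiv.coe_fn_mk, Fin.cons_zero, Fin.update_cons_zero, ite_and]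
      rw [Fintype.sum_prod_type]
      simp only [Finset.sum_ite_irrel, Finset.sum_const_zero, Finset.sum_ite_eq',
        Finset.mem_univ, if_true]
      symm
      rw [Fintype.sum_prod_type]
      simp only [Finset.sum_ite_irrel, Finset.sum_const_zero, Finset.sum_ite_eq',
        Finset.mem_univ, if_true]
      rw [Fintype.sum_prod_type]
      simp only [Finset.sum_ite_irrel, Finset.sum_const_zero, Finset.sum_ite_eq',
        Finset.mem_univ, if_true]
      rw [Fintype.sum_prod_type]
    have e5 : ∀ i, letter ρ₂ i = letter ρ i.succ := by
      intro i
      ext ⟨c, e⟩ ⟨c', e'⟩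
      simp only [h1, h2, letter, ptraceLeft, of_apply, submatrix_apply]
      symm
      rw [← (splitEquiv C E Z n).sum_comp, Fintype.sum_prod_type, Finset.sum_comm,
        ← (moveEquiv C E Z n).sum_comp]
      refine Finset.sum_congr rfl fun p _ => ?_
      simp only [splitEquiv, moveEquiv, Equiv.coe_fn_mk, Fin.cons_succ, Fin.cons_update]
      simp only [Finset.sum_ite_irrel, Finset.sum_const_zero]
    have hs := strong_subadditivity hρ₁
    obtain ⟨hi, hl⟩ := ih hρ₂
    have t1 : ρ₁.trace = ρ.trace := (splitEquiv C E Z n).sum_comp fun x => ρ x x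
    have t2 : ρ₂.trace = ρ.trace := by
      rw [← t1, ← trace_ptraceLeft ρ₁]
      exact (moveEquiv C E Z n).sum_comp fun x => ptraceLeft ρ₁ x x
    have t3 : (marg12 ρ₁).trace = ρ.trace := by
      rw [← t1, marg12, trace_ptraceRight]
      exact (Equiv.prodAssoc _ _ _).sum_comp fun x => ρ₁ x x
    refine ⟨?_, fun i => ?_⟩
    · rw [Fin.sum_univ_succ, ← e4]
      simp only [e5] at hi
      linarith
    · refine Fin.cases ?_ (fun i => ?_) i
      · rw [← e4]; exact ⟨posSemidef_ptraceRight (hρ₁.submatrix _), t3⟩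
      · rw [← e5, ← t2]; exact hl i

lemma ent_unique [Unique E] {ρ : Matrix E E ℂ} (hρ : ρ.PosSemidef) (htr : ρ.trace = 1) :
    ent ρ = 0 := by
  obtain ⟨U, hU, -, p, hp, rfl⟩ := exists_spectral hρ
  rw [trace_conj_diagonal p hU] at htr
  rw [ent_conj_diagonal hU]
  have : p default = 1 := by
    have h : ∑ i, p i = 1 := by exact_mod_cast htr
    simpa using h
  simp [this]

/-- Letters of a state on `Cⁿ`, seen as letters with trivial side systems. -/
lemma letterC_eq {n : ℕ} (ρ : Matrix (Fin n → C) (Fin n → C) ℂ)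
    (e : ((Fin n → C) × (Fin n → Unit) × Unit) ≃ (Fin n → C)) (he : ∀ p, e p = p.1) (i : Fin n) :
    letterC ρ i = (letter (ρ.submatrix e e) i).submatrix
      (Equiv.prodUnique C Unit).symm (Equiv.prodUnique C Unit).symm := by
  ext c c'
  simp only [letterC, letter, of_apply, submatrix_apply]
  rw [← e.sum_comp]
  refine Finset.sum_congr rfl fun p _ => ?_
  simp [he]

/-- Subadditivity `H(Cⁿ) ≤ ∑ᵢ H(Cᵢ)`, the case of `chain` with trivial side systems. -/
lemma subadd {n : ℕ} {ρ : Matrix (Fin n → C) (Fin n → C) ℂ} (hρ : ρ.PosSemidef)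
    (htr : ρ.trace = 1) : ent ρ ≤ ∑ i, ent (letterC ρ i) ∧
      ∀ i, (letterC ρ i).PosSemidef ∧ (letterC ρ i).trace = 1 := by
  let _ : Unique ((Fin n → Unit) × Unit) := ⟨⟨fun _ => (), ()⟩, fun _ => rfl⟩
  let e : ((Fin n → C) × (Fin n → Unit) × Unit) ≃ (Fin n → C) := Equiv.prodUnique _ _
  have hρ' : (ρ.submatrix e e).PosSemidef := hρ.submatrix _
  have htr' : (ρ.submatrix e e).trace = 1 := by
    rw [← htr]; exact e.sum_comp fun x => ρ x x
  obtain ⟨h, hps⟩ := chain hρ'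
  rw [htr'] at hps
  rw [ent_submatrix hρ.1, ent_unique (posSemidef_ptraceLeft hρ')
    (by rw [trace_ptraceLeft, htr'])] at h
  have hl := letterC_eq ρ e (fun _ => rfl)
  have : ∀ i, ent (letter (ρ.submatrix e e) i) - ent (ptraceLeft (letter (ρ.submatrix e e) i)) =
      ent (letterC ρ i) := by
    intro i
    rw [hl, ent_submatrix (hps i).1.1, ent_unique (posSemidef_ptraceLeft (hps i).1)
      (by rw [trace_ptraceLeft, (hps i).2]), sub_zero]
  simp only [this] at h
  refine ⟨by linarith, fun i => ?_⟩
  rw [hl]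
  refine ⟨(hps i).1.submatrix _, ?_⟩
  rw [← (hps i).2]
  exact (Equiv.prodUnique C Unit).symm.sum_comp fun x => letter (ρ.submatrix e e) i x x

/-- `H(Cⁿ) + H(Cⁿ | Eⁿ Z) ≤ ∑ᵢ (H(Cᵢ) + H(Cᵢ | Eᵢ))`. -/
lemma single_letter {n : ℕ}
    {ρ : Matrix ((Fin n → C) × (Fin n → E) × Z) ((Fin n → C) × (Fin n → E) × Z) ℂ}
    (hρ : ρ.PosSemidef) (htr : ρ.trace = 1) :
    ent (ptraceRight ρ) + ent ρ - ent (ptraceLeft ρ) ≤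
      ∑ i, (ent (ptraceRight (letter ρ i)) + ent (letter ρ i) - ent (ptraceLeft (letter ρ i))) := by
  have h1 := (chain hρ).1
  have h2 := (subadd (posSemidef_ptraceRight hρ) (by rw [trace_ptraceRight, htr])).1
  simp only [letterC_ptraceRight] at h2
  have : ∑ i, (ent (ptraceRight (letter ρ i)) + ent (letter ρ i) - ent (ptraceLeft (letter ρ i))) =
    ∑ i, ent (ptraceRight (letter ρ i)) +
      ∑ i, (ent (letter ρ i) - ent (ptraceLeft (letter ρ i))) := by
    rw [← Finset.sum_add_distrib]; exact Finset.sum_congr rfl fun _ _ => by ring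
  linarith

end Chain

/-! ### Marginals of pure tripartite states -/

section Pure
variable {R C G : Type} [Fintype R] [DecidableEq R] [Fintype C] [DecidableEq C]
  [Fintype G] [DecidableEq G]

/-- Reduced state on `R ⊗ C` of the pure tripartite state with amplitudes `Ψ`. -/
def redRC (Ψ : R → C → G → ℂ) : Matrix (R × C) (R × C) ℂ :=
  Matrix.of fun x x' => ∑ g, Ψ x.1 x.2 g * star (Ψ x'.1 x'.2 g)

/-- Reduced state on `C ⊗ G` of the pure tripartite state with amplitudes `Ψ`. -/
def redCG (Ψ : R → C → G → ℂ) : Matrix (C × G) (C × G) ℂ :=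
  Matrix.of fun x x' => ∑ r, Ψ r x.1 x.2 * star (Ψ r x'.1 x'.2)

lemma redRC_eq (Ψ : R → C → G → ℂ) : redRC Ψ =
    (Matrix.of fun (x : R × C) g => Ψ x.1 x.2 g) * (Matrix.of fun (x : R × C) g => Ψ x.1 x.2 g)ᴴ := by
  ext x x'
  simp [redRC, Matrix.mul_apply]

lemma redCG_eq (Ψ : R → C → G → ℂ) : redCG Ψ =
    (Matrix.of fun (x : C × G) r => Ψ r x.1 x.2) * (Matrix.of fun (x : C × G) r => Ψ r x.1 x.2)ᴴ := by
  ext x x'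
  simp [redCG, Matrix.mul_apply]

lemma redRC_posSemidef (Ψ : R → C → G → ℂ) : (redRC Ψ).PosSemidef := by
  rw [redRC_eq]; exact posSemidef_self_mul_conjTranspose _

lemma redCG_posSemidef (Ψ : R → C → G → ℂ) : (redCG Ψ).PosSemidef := by
  rw [redCG_eq]; exact posSemidef_self_mul_conjTranspose _

/-- Complementary marginals of a pure state have equal entropy. -/
lemma ent_redRC (Ψ : R → C → G → ℂ) : ent (redRC Ψ) = ent (ptraceLeft (redCG Ψ)) := by
  have : ptraceLeft (redCG Ψ) = ((Matrix.of fun (x : R × C) g => Ψ x.1 x.2 g)ᴴ *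
      (Matrix.of fun (x : R × C) g => Ψ x.1 x.2 g))ᵀ := by
    ext g g'
    simp only [ptraceLeft, redCG, of_apply, transpose_apply, Matrix.mul_apply, conjTranspose_apply,
      Fintype.sum_prod_type]
    rw [Finset.sum_comm]
    exact Finset.sum_congr rfl fun _ _ => Finset.sum_congr rfl fun _ _ => mul_comm _ _
  rw [this, ent_transpose (isHermitian_conjTranspose_mul_self _), redRC_eq, ent_mul_conjTranspose]

lemma ent_redR (Ψ : R → C → G → ℂ) : ent (ptraceRight (redRC Ψ)) = ent (redCG Ψ) := by
  have : ptraceRight (redRC Ψ) = ((Matrix.of fun (x : C × G) r => Ψ r x.1 x.2)ᴴ *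
      (Matrix.of fun (x : C × G) r => Ψ r x.1 x.2))ᵀ := by
    ext g g'
    simp only [ptraceRight, redRC, of_apply, transpose_apply, Matrix.mul_apply, conjTranspose_apply,
      Fintype.sum_prod_type]
    exact Finset.sum_congr rfl fun _ _ => Finset.sum_congr rfl fun _ _ => mul_comm _ _
  rw [this, ent_transpose (isHermitian_conjTranspose_mul_self _), redCG_eq, ent_mul_conjTranspose]

lemma redC (Ψ : R → C → G → ℂ) : ptraceLeft (redRC Ψ) = ptraceRight (redCG Ψ) := by
  ext c c'
  simp only [ptraceLeft, ptraceRight, redRC, redCG, of_apply]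
  exact Finset.sum_comm

end Pure

/-! ### Letters of block states -/

section Letters
variable {C E Z Q : Type} [Fintype C] [DecidableEq C] [Fintype E] [DecidableEq E]
  [Fintype Z] [DecidableEq Z] [Fintype Q] [DecidableEq Q]

lemma sum_update {n : ℕ} (p : Fin n → Q) (i : Fin n) (H : (Fin n → Q) → ℂ) :
    ∑ p', (if ∀ j, j ≠ i → p j = p' j then H p' else 0) = ∑ b, H (Function.update p i b) := by
  have : ∀ b, H (Function.update p i b) = ∑ p', if p' = Function.update p i b then H p' else 0 := by
    intro b; rw [Finset.sum_ite_eq', if_pos (Finset.mem_univ _)]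
  simp only [this]
  rw [Finset.sum_comm]
  refine Finset.sum_congr rfl fun p' _ => ?_
  have h2 : ∀ b, (p' = Function.update p i b) ↔ (b = p' i ∧ ∀ j, j ≠ i → p j = p' j) := by
    intro b
    constructor
    · rintro rfl
      exact ⟨by simp, fun j hj => by simp [hj]⟩
    · rintro ⟨rfl, h⟩
      funext j
      by_cases hj : j = i
      · subst hj; simp
      · simp [hj, h j hj]
  simp only [h2, ite_and]
  rw [Finset.sum_ite_eq', if_pos (Finset.mem_univ _)]

lemma sum_isometry {S : Type} [Fintype S] [DecidableEq S] {n : ℕ} {V : Matrix S Q ℂ}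
    (hV : Vᴴ * V = 1) (i : Fin n)
    (s s' : S) (p p' : Fin n → Q) :
    ∑ h : Fin n → S, (if h i = s then (∏ j, V (h j) (p j)) *
      star (∏ j, V (Function.update h i s' j) (p' j)) else 0) =
      if ∀ j, j ≠ i → p j = p' j then V s (p i) * star (V s' (p' i)) else 0 := by
  let g : Fin n → S → ℂ := fun j y => if j = i then
    (if y = s then V s (p i) * star (V s' (p' i)) else 0) else V y (p j) * star (V y (p' j))
  have h1 : ∀ h : Fin n → S, (if h i = s then (∏ j, V (h j) (p j)) *
      star (∏ j, V (Function.update h i s' j) (p' j)) else 0) = ∏ j, g j (h j) := by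
    intro h
    split_ifs with hi
    · rw [star_prod, ← Finset.prod_mul_distrib]
      refine Finset.prod_congr rfl fun j _ => ?_
      by_cases hj : j = i
      · subst hj; simp [g, hi]
      · simp [g, hj]
    · symm
      exact Finset.prod_eq_zero (Finset.mem_univ i) (by simp [g, hi])
  have h2 : ∀ j, ∑ y, g j y = if j = i then V s (p i) * star (V s' (p' i)) else
      if p j = p' j then 1 else 0 := by
    intro j
    by_cases hj : j = i
    · simp [g, hj]
    · simp only [g, hj, if_false]
      have := congrFun (congrFun hV (p' j)) (p j)
      rw [Matrix.mul_apply, Matrix.one_apply] at this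
      simp only [eq_comm (a := p j)]
      rw [← this]
      exact Finset.sum_congr rfl fun _ _ => mul_comm _ _
  simp only [h1]
  have h3 := (Finset.prod_univ_sum (fun _ : Fin n => (Finset.univ : Finset S)) g)
  rw [Fintype.piFinset_univ] at h3
  rw [← h3]
  simp only [h2]
  split_ifs with hall
  · rw [Finset.prod_eq_single i]
    · simp
    · intro j _ hj; simp [hj, hall j hj]
    · simp
  · push Not at hall
    obtain ⟨j, hj, hne⟩ := hall
    exact Finset.prod_eq_zero (Finset.mem_univ j) (by simp [hj, hne])

/-- The `i`-th letter of the output of a memoryless isometry is the isometry applied to the `i`-th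
letter of its input. -/
lemma letter_isometry {n : ℕ} {V : Matrix (C × E) Q ℂ} (hV : Vᴴ * V = 1)
    {D : Matrix (Fin n → Q) (Fin n → Q) ℂ}
    {ω : Matrix ((Fin n → C) × (Fin n → E) × Z) ((Fin n → C) × (Fin n → E) × Z) ℂ}
    (h : ∀ f f' g g', ∑ z, ω (f, g, z) (f', g', z) =
      ∑ p, ∑ p', D p p' * ((∏ j, V (f j, g j) (p j)) * star (∏ j, V (f' j, g' j) (p' j))))
    (i : Fin n) : letter ω i = V * letterC D i * Vᴴ := by
  ext ⟨c, e⟩ ⟨c', e'⟩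
  have h1 : letter ω i (c, e) (c', e') = ∑ k : Fin n → C × E, if k i = (c, e) then
      ∑ p, ∑ p', D p p' * ((∏ j, V (k j) (p j)) *
        star (∏ j, V (Function.update k i (c', e') j) (p' j))) else 0 := by
    rw [← (Equiv.arrowProdEquivProdArrow (Fin n) (fun _ => C) (fun _ => E)).symm.sum_comp]
    simp only [letter, of_apply]
    rw [Fintype.sum_prod_type, Fintype.sum_prod_type]
    refine Finset.sum_congr rfl fun f _ => ?_
    rw [Fintype.sum_prod_type]
    refine Finset.sum_congr rfl fun g _ => ?_
    simp only [Finset.sum_ite_irrel, Finset.sum_const_zero]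
    rw [h]
    have hu : ∀ j, (Function.update f i c' j, Function.update g i e' j) =
        Function.update (fun j => (f j, g j)) i (c', e') j := by
      intro j
      by_cases hj : j = i
      · subst hj; simp
      · simp [hj]
    simp only [hu, Equiv.arrowProdEquivProdArrow, Equiv.coe_fn_symm_mk, Prod.mk.injEq]
  rw [h1]
  have h2 : ∀ k : Fin n → C × E, (if k i = (c, e) then
      ∑ p, ∑ p', D p p' * ((∏ j, V (k j) (p j)) *
        star (∏ j, V (Function.update k i (c', e') j) (p' j))) else 0) =
      ∑ p, ∑ p', D p p' * (if k i = (c, e) then ((∏ j, V (k j) (p j)) *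
        star (∏ j, V (Function.update k i (c', e') j) (p' j))) else 0) := by
    intro k; split_ifs <;> simp
  simp only [h2]
  rw [Finset.sum_comm]
  have h3 : ∀ p : Fin n → Q, (∑ k : Fin n → C × E, ∑ p',
      D p p' * (if k i = (c, e) then ((∏ j, V (k j) (p j)) *
        star (∏ j, V (Function.update k i (c', e') j) (p' j))) else 0)) =
      ∑ b, D p (Function.update p i b) * (V (c, e) (p i) * star (V (c', e') b)) := by
    intro p
    rw [Finset.sum_comm]
    simp only [← Finset.mul_sum, sum_isometry hV]
    have := sum_update p i (fun p' => D p p' * (V (c, e) (p i) * star (V (c', e') (p' i))))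
    simp only [Function.update_self] at this
    rw [← this]
    exact Finset.sum_congr rfl fun _ _ => by split_ifs <;> simp
  simp only [h3]
  simp only [Matrix.mul_apply, letterC, of_apply, conjTranspose_apply, Finset.mul_sum,
    Finset.sum_mul, mul_ite, ite_mul, mul_zero, zero_mul]
  rw [Finset.sum_comm]
  refine Finset.sum_congr rfl fun b _ => ?_
  rw [Finset.sum_comm]
  refine Finset.sum_congr rfl fun p _ => ?_
  rw [Finset.sum_ite_eq, if_pos (Finset.mem_univ _)]
  ring

/-- Letters of a product of two block states. -/
lemma letterC_prod {n : ℕ} {A B : Type} [Fintype A] [DecidableEq A] [Fintype B] [DecidableEq B]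
    (ρ₁ : Matrix (Fin n → A) (Fin n → A) ℂ) (ρ₂ : Matrix (Fin n → B) (Fin n → B) ℂ) (i : Fin n) :
    letterC (Matrix.of fun p p' : Fin n → A × B => ρ₁ (fun j => (p j).1) (fun j => (p' j).1) *
      ρ₂ (fun j => (p j).2) (fun j => (p' j).2)) i = letterC ρ₁ i ⊗ₖ letterC ρ₂ i := by
  ext ⟨a, b⟩ ⟨a', b'⟩
  simp only [letterC, of_apply, kroneckerMap_apply]
  rw [Finset.sum_mul_sum,
    ← (Equiv.arrowProdEquivProdArrow (Fin n) (fun _ => A) (fun _ => B)).symm.sum_comp,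
    Fintype.sum_prod_type]
  refine Finset.sum_congr rfl fun f _ => Finset.sum_congr rfl fun g _ => ?_
  have h1 : (fun j => (Function.update (fun j => (f j, g j)) i (a', b') j).1) =
      Function.update f i a' := by
    funext j; by_cases hj : j = i
    · subst hj; simp
    · simp [hj]
  have h2 : (fun j => (Function.update (fun j => (f j, g j)) i (a', b') j).2) =
      Function.update g i b' := by
    funext j; by_cases hj : j = i
    · subst hj; simp
    · simp [hj]
  simp only [Equiv.arrowProdEquivProdArrow, Equiv.coe_fn_symm_mk, Prod.mk.injEq, h1, h2]
  by_cases hf : f i = a <;> by_cases hg : g i = b <;> simp [hf, hg]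

end Letters

/-! ### Block-diagonal tests -/

section Block
variable {J Y X : Type} [Fintype J] [DecidableEq J] [Fintype X] [DecidableEq X]
  [Fintype Y] [DecidableEq Y]

/-- Block-diagonal operator on `(J ⊗ X) ⊗ Y` with blocks `Λ j` on `Y ⊗ X`. -/
def blk (Λ : J → Matrix (Y × X) (Y × X) ℂ) : Matrix ((J × X) × Y) ((J × X) × Y) ℂ :=
  Matrix.of fun p p' => if p.1.1 = p'.1.1 then Λ p.1.1 (p.2, p.1.2) (p'.2, p'.1.2) else 0

lemma blk_posSemidef {Λ : J → Matrix (Y × X) (Y × X) ℂ} (hΛ : ∀ j, (Λ j).PosSemidef) :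
    (blk Λ).PosSemidef := by
  choose B hB using fun j => exists_factor (hΛ j)
  have : blk Λ = (Matrix.of fun (q : J × (Y × X)) (p : (J × X) × Y) =>
      if q.1 = p.1.1 then B q.1 q.2 (p.2, p.1.2) else 0)ᴴ *
      (Matrix.of fun (q : J × (Y × X)) (p : (J × X) × Y) =>
      if q.1 = p.1.1 then B q.1 q.2 (p.2, p.1.2) else 0) := by
    ext p p'
    rw [Matrix.mul_apply, Fintype.sum_prod_type, Finset.sum_comm]
    simp only [blk, of_apply, conjTranspose_apply]
    by_cases h : p.1.1 = p'.1.1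
    · rw [if_pos h, hB, Matrix.mul_apply]
      refine Finset.sum_congr rfl fun y _ => ?_
      rw [Finset.sum_eq_single p.1.1]
      · simp [h]
      · intro j _ hj; simp [hj]
      · simp
    · rw [if_neg h]
      symm
      refine Finset.sum_eq_zero fun y _ => Finset.sum_eq_zero fun j _ => ?_
      by_cases hj : j = p.1.1
      · subst hj; simp [h]
      · simp [hj]
  rw [this]
  exact posSemidef_conjTranspose_mul_self _

lemma one_sub_blk (Λ : J → Matrix (Y × X) (Y × X) ℂ) : 1 - blk Λ = blk fun j => 1 - Λ j := by
  ext ⟨⟨j, x⟩, y⟩ ⟨⟨j', x'⟩, y'⟩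
  simp only [blk, Matrix.sub_apply, of_apply, Matrix.one_apply, Prod.mk.injEq]
  by_cases h : j = j'
  · subst h; simp [Matrix.one_apply, and_comm]
  · simp [h]

lemma trace_mul_blk (Λ : J → Matrix (Y × X) (Y × X) ℂ) (ω : Matrix ((J × X) × Y) ((J × X) × Y) ℂ) :
    (ω * blk Λ).trace = ∑ j, (Λ j *
      (Matrix.of fun p p' : Y × X => ω ((j, p.2), p.1) ((j, p'.2), p'.1))).trace := by
  rw [trace_mul_comm]
  simp only [Matrix.trace, diag_apply, Matrix.mul_apply, blk, of_apply, Fintype.sum_prod_type,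
    ite_mul, zero_mul, Finset.sum_ite_irrel, Finset.sum_const_zero, Finset.sum_ite_eq,
    Finset.mem_univ, if_true]
  refine Finset.sum_congr rfl fun j _ => ?_
  rw [Finset.sum_comm]
  refine Finset.sum_congr rfl fun y _ => Finset.sum_congr rfl fun x _ => ?_
  rw [Finset.sum_comm]

end Block

lemma proj_posSemidef {ι : Type*} [Fintype ι] (v : ι → ℂ) : (proj v).PosSemidef :=
  posSemidef_vecMulVec_self_star v

/-! ### The converse for one entanglement-assisted sender -/

section Code
variable {J T X Q C E : Type} [Fintype J] [DecidableEq J] [Fintype T] [DecidableEq T]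
  [Fintype X] [DecidableEq X] [Fintype Q] [DecidableEq Q]
  [Fintype C] [DecidableEq C] [Fintype E] [DecidableEq E]

lemma sum_isometry_all {S : Type} [Fintype S] [DecidableEq S] {n : ℕ} {V : Matrix S Q ℂ}
    (hV : Vᴴ * V = 1) (p p' : Fin n → Q) :
    ∑ h : Fin n → S, (∏ j, V (h j) (p j)) * star (∏ j, V (h j) (p' j)) =
      if p = p' then 1 else 0 := by
  have h3 := Finset.prod_univ_sum (fun _ : Fin n => (Finset.univ : Finset S))
    (fun j y => V y (p j) * star (V y (p' j)))
  rw [Fintype.piFinset_univ] at h3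
  have h2 : ∀ j, ∑ y, V y (p j) * star (V y (p' j)) = if p j = p' j then 1 else 0 := by
    intro j
    have := congrFun (congrFun hV (p' j)) (p j)
    rw [Matrix.mul_apply, Matrix.one_apply] at this
    simp only [eq_comm (a := p j)]
    rw [← this]
    exact Finset.sum_congr rfl fun _ _ => mul_comm _ _
  simp only [star_prod, ← Finset.prod_mul_distrib]
  rw [← h3]
  simp only [h2]
  split_ifs with h
  · subst h; simp
  · obtain ⟨j, hj⟩ := Function.ne_iff.mp h
    exact Finset.prod_eq_zero (Finset.mem_univ j) (by simp [hj])

/-- Unnormalized output vector on `Cⁿ ⊗ X` for message `j`, encoder environment `t` and channel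
environment `g`. -/
def outVec {n : ℕ} (V : Matrix (C × E) Q ℂ) (U : J → T → (Fin n → Q) → X → ℂ) (j : J) (t : T)
    (g : Fin n → E) : (Fin n → C) × X → ℂ :=
  fun y => ∑ p, (∏ i, V (y.1 i, g i) (p i)) * U j t p y.2

/-- Amplitudes of the purified code state: a classical message register `J` with the receiver's side
register `X`, the channel outputs, and the environments together with a copy of the message. -/
def codeAmp {n : ℕ} (V : Matrix (C × E) Q ℂ) (U : J → T → (Fin n → Q) → X → ℂ) :
    J × X → (Fin n → C) → (Fin n → E) × (T × J) → ℂ :=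
  fun r f g => if r.1 = g.2.2 then
    (((Real.sqrt (Fintype.card J))⁻¹ : ℝ) : ℂ) * outVec V U r.1 g.2.1 g.1 (f, r.2) else 0

lemma sqrt_card [Nonempty J] : (((Real.sqrt (Fintype.card J))⁻¹ : ℝ) : ℂ) *
    star (((Real.sqrt (Fintype.card J))⁻¹ : ℝ) : ℂ) = (Fintype.card J : ℂ)⁻¹ := by
  rw [Complex.star_def, Complex.conj_ofReal, ← Complex.ofReal_mul, ← mul_inv,
    Real.mul_self_sqrt (Nat.cast_nonneg _)]
  push_cast; rfl

/-- Average input block of the code. -/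
def avgIn {n : ℕ} (U : J → T → (Fin n → Q) → X → ℂ) : Matrix (Fin n → Q) (Fin n → Q) ℂ :=
  Matrix.of fun p p' => (Fintype.card J : ℂ)⁻¹ * ∑ j, ∑ t, ∑ x, U j t p x * star (U j t p' x)

variable {n : ℕ} {V : Matrix (C × E) Q ℂ} {U : J → T → (Fin n → Q) → X → ℂ}

lemma redRC_codeAmp [Nonempty J] (j j' : J) (x x' : X) (f f' : Fin n → C) :
    redRC (codeAmp V U) ((j, x), f) ((j', x'), f') = if j = j' then (Fintype.card J : ℂ)⁻¹ *
      (∑ t, ∑ g, proj (outVec V U j t g)) (f, x) (f', x') else 0 := by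
  simp only [redRC, of_apply, codeAmp, Fintype.sum_prod_type, apply_ite star, star_zero, ite_mul,
    zero_mul, mul_ite, mul_zero]
  simp only [Finset.sum_ite_eq, Finset.mem_univ, if_true]
  by_cases h : j = j'
  · subst h
    simp only [if_true, Matrix.sum_apply, proj, of_apply, Finset.mul_sum, ← sqrt_card, star_mul']
    rw [Finset.sum_comm]
    refine Finset.sum_congr rfl fun t _ => Finset.sum_congr rfl fun g _ => ?_
    ring
  · have h' : ¬ j' = j := fun e => h e.symm
    simp [h, h']

lemma sum_outVec (hV : Vᴴ * V = 1) (j : J) (t : T) (x x' : X) :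
    ∑ f, ∑ g, outVec V U j t g (f, x) * star (outVec V U j t g (f, x')) =
      ∑ p, U j t p x * star (U j t p x') := by
  have h1 : ∀ f g, outVec V U j t g (f, x) * star (outVec V U j t g (f, x')) =
      ∑ p, ∑ p', (U j t p x * star (U j t p' x')) *
        ((∏ i, V (f i, g i) (p i)) * star (∏ i, V (f i, g i) (p' i))) := by
    intro f g
    simp only [outVec, star_sum, Finset.sum_mul_sum, star_mul']
    exact Finset.sum_congr rfl fun _ _ => Finset.sum_congr rfl fun _ _ => by ring
  simp only [h1]
  rw [← Fintype.sum_prod_type (f := fun fg : (Fin n → C) × (Fin n → E) => ∑ p, ∑ p',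
    (U j t p x * star (U j t p' x')) *
        ((∏ i, V (fg.1 i, fg.2 i) (p i)) * star (∏ i, V (fg.1 i, fg.2 i) (p' i)))),
    ← (Equiv.arrowProdEquivProdArrow (Fin n) (fun _ => C) (fun _ => E)).sum_comp]
  simp only [Equiv.arrowProdEquivProdArrow, Equiv.coe_fn_mk, Prod.mk.eta]
  rw [Finset.sum_comm]
  refine Finset.sum_congr rfl fun p _ => ?_
  rw [Finset.sum_comm]
  simp only [← Finset.mul_sum, sum_isometry_all hV]
  simp

/-- Mutual information (in nats) between a reference purifying the input `ρ` and the output `C` of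
the isometry `V : Q → C ⊗ E`. By purity `H(Q) = H(CE)` and `H(QC) = H(E)`, so no purification has to
be chosen. -/
def mutInfo (V : Matrix (C × E) Q ℂ) (ρ : Matrix Q Q ℂ) : ℝ :=
  ent (ptraceRight (V * ρ * Vᴴ)) + ent (V * ρ * Vᴴ) - ent (ptraceLeft (V * ρ * Vᴴ))

/-- Converse for a code whose side register has a message-independent state `γ`: the block test of
the joint state of `(J, X)` and `Cⁿ` against its product of marginals succeeds with probability at
least `1 - ε` and has false-alarm probability at most `1 / |J|`, so `test_bound` bounds `log |J|` by
`I(JX; Cⁿ)`, and purity together with `single_letter` splits the latter over the letters. -/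
lemma code_bound [Nonempty J] (hV : Vᴴ * V = 1) {γ : Matrix X X ℂ} (hγ : γ.trace = 1)
    (hU : ∀ j x x', ∑ t, ∑ p, U j t p x * star (U j t p x') = γ x x')
    {Λ : J → Matrix ((Fin n → C) × X) ((Fin n → C) × X) ℂ} (hΛ : ∀ j, (Λ j).PosSemidef)
    (hΛ1 : (1 - ∑ j, Λ j).PosSemidef) {ε : ℝ} (hε : 0 < ε) (hε' : ε < 1 / 2)
    (hs : ∀ j, 1 - ε ≤ ((Λ j * ∑ t, ∑ g, proj (outVec V U j t g)).trace).re) :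
    (1 - ε) * Real.log (Fintype.card J) ≤
      Real.binEntropy ε + ∑ i, mutInfo V (letterC (avgIn U) i) := by
  set Ψ := codeAmp V U with hΨ
  have hcard : (Fintype.card J : ℂ) ≠ 0 := Nat.cast_ne_zero.mpr Fintype.card_ne_zero
  have hcardR : (0 : ℝ) < Fintype.card J := Nat.cast_pos.mpr Fintype.card_pos
  -- the marginal on `(J, X)` is uniform on `J`, in product with `γ`
  have hR : ∀ j j' x x', ptraceRight (redRC Ψ) (j, x) (j', x') =
      if j = j' then (Fintype.card J : ℂ)⁻¹ * γ x x' else 0 := by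
    intro j j' x x'
    simp only [ptraceRight, of_apply, hΨ, redRC_codeAmp]
    split_ifs with h
    · rw [← Finset.mul_sum]
      congr 1
      simp only [Matrix.sum_apply, proj, of_apply]
      rw [Finset.sum_comm, ← hU j]
      exact Finset.sum_congr rfl fun t _ => sum_outVec hV j t x x'
    · simp
  have htr : (redRC Ψ).trace = 1 := by
    rw [← trace_ptraceRight, Matrix.trace]
    simp only [diag_apply]
    rw [Fintype.sum_prod_type]
    simp only [hR, if_true, ← Finset.mul_sum]
    have : ∑ x, γ x x = 1 := hγ
    rw [this]
    simp [hcard]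
  have hCG : (redCG Ψ).trace = 1 := by
    rw [← trace_ptraceRight, ← redC, trace_ptraceLeft, htr]
  have hγp : γ.PosSemidef := by
    obtain ⟨j⟩ := ‹Nonempty J›
    have : γ = ∑ t, ∑ p, proj (fun x => U j t p x) := by
      ext x x'
      simp only [Matrix.sum_apply, proj, of_apply, hU]
    rw [this]
    exact posSemidef_sum _ fun t _ => posSemidef_sum _ fun p _ => proj_posSemidef _
  have hC : (ptraceLeft (redRC Ψ)).PosSemidef := posSemidef_ptraceLeft (redRC_posSemidef Ψ)
  have hΛ' : ∀ j, (1 - Λ j).PosSemidef := by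
    intro j
    have : 1 - Λ j = (1 - ∑ j, Λ j) + ∑ j' ∈ Finset.univ.erase j, Λ j' := by
      rw [← Finset.add_sum_erase _ _ (Finset.mem_univ j)]; abel
    rw [this]
    exact hΛ1.add (posSemidef_sum _ fun j' _ => hΛ j')
  -- the first long argument is the success probability, the second the false-alarm probability
  have ht := test_bound (redRC_posSemidef Ψ) htr (blk_posSemidef hΛ)
    (by rw [one_sub_blk]; exact blk_posSemidef hΛ') hε hε' (m := Fintype.card J)
    (by exact_mod_cast Nat.one_le_iff_ne_zero.mpr Fintype.card_ne_zero)
    (by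
      rw [trace_mul_blk]
      have h1 : ∀ j, (Matrix.of fun p p' : (Fin n → C) × X => redRC Ψ ((j, p.2), p.1)
          ((j, p'.2), p'.1)) = (Fintype.card J : ℂ)⁻¹ • ∑ t, ∑ g, proj (outVec V U j t g) := by
        intro j
        ext p p'
        simp only [of_apply, hΨ, redRC_codeAmp, if_true, Matrix.smul_apply, smul_eq_mul]
      simp only [h1, mul_smul_comm, trace_smul, smul_eq_mul]
      rw [← Finset.mul_sum, show (Fintype.card J : ℂ)⁻¹ = (((Fintype.card J : ℝ)⁻¹ : ℝ) : ℂ) by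
        push_cast; rfl, Complex.re_ofReal_mul, Complex.re_sum]
      have h2 := Finset.sum_le_sum fun j (_ : j ∈ Finset.univ) => hs j
      rw [Finset.sum_const, nsmul_eq_mul, Finset.card_univ] at h2
      rw [inv_mul_eq_div, le_div_iff₀ hcardR]
      linarith)
    (by
      rw [trace_mul_blk]
      have h1 : ∀ j, (Matrix.of fun p p' : (Fin n → C) × X =>
          (ptraceRight (redRC Ψ) ⊗ₖ ptraceLeft (redRC Ψ)) ((j, p.2), p.1) ((j, p'.2), p'.1)) =
          (Fintype.card J : ℂ)⁻¹ • (ptraceLeft (redRC Ψ) ⊗ₖ γ) := by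
        intro j
        ext p p'
        simp only [of_apply, kroneckerMap_apply, hR, if_true, Matrix.smul_apply, smul_eq_mul]
        ring
      simp only [h1, mul_smul_comm, trace_smul, smul_eq_mul]
      rw [← Finset.mul_sum, show (Fintype.card J : ℂ)⁻¹ = (((Fintype.card J : ℝ)⁻¹ : ℝ) : ℂ) by
        push_cast; rfl, Complex.re_ofReal_mul, ← trace_sum, ← Finset.sum_mul]
      have h2 := trace_mul_re_nonneg hΛ1 (hC.kronecker hγp)
      rw [sub_mul, one_mul, trace_sub, Complex.sub_re, trace_kronecker, trace_ptraceLeft, htr, hγ,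
        mul_one, Complex.one_re] at h2
      rw [inv_mul_eq_div]
      exact div_le_div_of_nonneg_right (by linarith) hcardR.le)
  have hsl := single_letter (redCG_posSemidef Ψ) hCG
  -- the memoryless channel acts letterwise on the average input
  have hl : ∀ i, letter (redCG Ψ) i = V * letterC (avgIn U) i * Vᴴ := by
    refine letter_isometry hV ?_
    intro f f' g g'
    have h1 : ∀ z : T × J, redCG Ψ (f, g, z) (f', g', z) = (Fintype.card J : ℂ)⁻¹ *
        ∑ x, outVec V U z.2 z.1 g (f, x) * star (outVec V U z.2 z.1 g' (f', x)) := by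
      rintro ⟨t, j⟩
      simp only [redCG, of_apply, hΨ, codeAmp, Fintype.sum_prod_type, ite_mul, apply_ite star,
        star_zero, zero_mul, mul_ite, mul_zero, Finset.sum_ite_irrel, Finset.sum_const_zero,
        Finset.sum_ite_eq', Finset.mem_univ, if_true, star_mul', ← sqrt_card, Finset.mul_sum]
      exact Finset.sum_congr rfl fun _ _ => by ring
    simp only [h1]
    simp only [outVec, star_sum, Finset.sum_mul_sum, star_mul', avgIn, of_apply,
      Fintype.sum_prod_type, Finset.mul_sum, Finset.sum_mul]
    rw [Finset.sum_comm]
    calc _ = ∑ j, ∑ p, ∑ p', ∑ t, ∑ x, (Fintype.card J : ℂ)⁻¹ * (U j t p x * star (U j t p' x)) *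
          ((∏ i, V (f i, g i) (p i)) * star (∏ i, V (f' i, g' i) (p' i))) := by
          refine Finset.sum_congr rfl fun j _ => ?_
          have e1 : ∀ F : T → X → (Fin n → Q) → (Fin n → Q) → ℂ,
              ∑ t, ∑ x, ∑ p', ∑ p, F t x p p' = ∑ p, ∑ p', ∑ t, ∑ x, F t x p p' := by
            intro F
            rw [← Fintype.sum_prod_type (f := fun tx : T × X => ∑ p', ∑ p, F tx.1 tx.2 p p')]
            have e2 : ∀ y : T × X, ∑ p', ∑ p, F y.1 y.2 p p' = ∑ p, ∑ p', F y.1 y.2 p p' :=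
              fun _ => Finset.sum_comm
            simp only [e2]
            rw [Finset.sum_comm]
            refine Finset.sum_congr rfl fun p _ => ?_
            rw [Finset.sum_comm]
            refine Finset.sum_congr rfl fun p' _ => ?_
            rw [Fintype.sum_prod_type]
          rw [e1]
          refine Finset.sum_congr rfl fun p _ => Finset.sum_congr rfl fun p' _ =>
            Finset.sum_congr rfl fun t _ => Finset.sum_congr rfl fun x _ => ?_
          ring
      _ = _ := by
          rw [Finset.sum_comm]
          refine Finset.sum_congr rfl fun p _ => ?_
          rw [Finset.sum_comm]
  simp only [hl] at hsl
  rw [ent_redR, redC, ent_redRC] at ht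
  simp only [mutInfo]
  linarith

end Code

/-! ### Dilations and purifications -/

section Single
variable {A B C E : Type} [Fintype A] [DecidableEq A] [Fintype B] [DecidableEq B]
  [Fintype C] [DecidableEq C] [Fintype E] [DecidableEq E]

/-- Stinespring isometry of the channel with Kraus operators `K`. -/
def stine {Q : Type} (K : E → Matrix C Q ℂ) : Matrix (C × E) Q ℂ :=
  Matrix.of fun x q => K x.2 x.1 q

lemma stine_isometry {Q : Type} [Fintype Q] [DecidableEq Q] {K : E → Matrix C Q ℂ}
    (hK : ∑ j, (K j)ᴴ * K j = 1) : (stine K)ᴴ * stine K = 1 := by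
  rw [← hK]
  ext q q'
  simp only [Matrix.mul_apply, Matrix.sum_apply, conjTranspose_apply, stine, of_apply,
    Fintype.sum_prod_type]
  exact Finset.sum_comm

lemma mul_proj_mul {ι κ : Type*} [Fintype ι] [Fintype κ] (M : Matrix κ ι ℂ) (v : ι → ℂ) :
    M * proj v * Mᴴ = proj (M *ᵥ v) := by
  have : proj v = vecMulVec v (star v) := rfl
  rw [this, mul_vecMulVec, vecMulVec_mul, ← star_mulVec]
  rfl

/-- The mutual information of `θ^{ABC}`, rewritten by purity through the isometric dilation. -/
lemma theta_info (K : E → Matrix C (A × B) ℂ) (φ₁ : A × A → ℂ) (φ₂ : B × B → ℂ)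
    {θ : Matrix ((A × B) × C) ((A × B) × C) ℂ}
    (hθ : θ = ∑ j, ((1 : Matrix (A × B) (A × B) ℂ) ⊗ₖ K j) *
      proj (fun q : (A × B) × (A × B) => φ₁ (q.1.1, q.2.1) * φ₂ (q.1.2, q.2.2)) *
      ((1 : Matrix (A × B) (A × B) ℂ) ⊗ₖ K j)ᴴ) :
    vnEntropy (ptraceRight θ) + vnEntropy (ptraceLeft θ) - vnEntropy θ =
      mutInfo (stine K) (ptraceLeft (proj φ₁) ⊗ₖ ptraceLeft (proj φ₂)) / Real.log 2 := by
  set Θ : A × B → C → E → ℂ := fun q c j => ∑ q', K j c q' *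
    (φ₁ (q.1, q'.1) * φ₂ (q.2, q'.2)) with hΘ
  have h1 : θ = redRC Θ := by
    rw [hθ]
    simp only [mul_proj_mul]
    ext ⟨q, c⟩ ⟨q', c'⟩
    simp only [Matrix.sum_apply, proj, redRC, of_apply]
    refine Finset.sum_congr rfl fun j _ => ?_
    have : ∀ q c, (((1 : Matrix (A × B) (A × B) ℂ) ⊗ₖ K j) *ᵥ
        fun q : (A × B) × (A × B) => φ₁ (q.1.1, q.2.1) * φ₂ (q.1.2, q.2.2)) (q, c) = Θ q c j := by
      intro q c
      simp only [mulVec, dotProduct, kroneckerMap_apply, hΘ]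
      rw [Fintype.sum_prod_type, Finset.sum_eq_single q]
      · simp
      · intro q₂ _ hq; simp [Matrix.one_apply, hq.symm]
      · simp
    rw [this, this]
  have h2 : stine K * (ptraceLeft (proj φ₁) ⊗ₖ ptraceLeft (proj φ₂)) * (stine K)ᴴ = redCG Θ := by
    have : ptraceLeft (proj φ₁) ⊗ₖ ptraceLeft (proj φ₂) =
        (Matrix.of fun (q' q : A × B) => φ₁ (q.1, q'.1) * φ₂ (q.2, q'.2)) *
        (Matrix.of fun (q' q : A × B) => φ₁ (q.1, q'.1) * φ₂ (q.2, q'.2))ᴴ := by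
      ext ⟨a, b⟩ ⟨a', b'⟩
      simp only [kroneckerMap_apply, ptraceLeft, proj, of_apply, Matrix.mul_apply,
        conjTranspose_apply, Finset.sum_mul_sum, Fintype.sum_prod_type, star_mul']
      exact Finset.sum_congr rfl fun _ _ => Finset.sum_congr rfl fun _ _ => by ring
    rw [this, redCG_eq]
    have h3 : (Matrix.of fun (x : C × E) r => Θ r x.1 x.2) = stine K *
        (Matrix.of fun (q' q : A × B) => φ₁ (q.1, q'.1) * φ₂ (q.2, q'.2)) := by
      ext x q
      simp [hΘ, stine, Matrix.mul_apply]
    rw [h3, conjTranspose_mul]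
    simp only [Matrix.mul_assoc]
  rw [mutInfo, h2, h1, vnEntropy_eq_ent, vnEntropy_eq_ent, vnEntropy_eq_ent, ent_redR, redC,
    ent_redRC]
  ring

lemma mutInfo_le {Q : Type} [Fintype Q] [DecidableEq Q] {V : Matrix (C × E) Q ℂ} (hV : Vᴴ * V = 1)
    {ρ : Matrix Q Q ℂ} (hρ : ρ.PosSemidef) (htr : ρ.trace = 1) :
    mutInfo V ρ ≤ Fintype.card C + Fintype.card (C × E) := by
  have h1 : (V * ρ * Vᴴ).PosSemidef := hρ.mul_mul_conjTranspose_same V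
  have h2 : (V * ρ * Vᴴ).trace = 1 := by
    rw [Matrix.trace_mul_comm, ← Matrix.mul_assoc, hV, Matrix.one_mul, htr]
  have e1 := (ent_bounds (posSemidef_ptraceRight h1) (by rw [trace_ptraceRight, h2])).2
  have e2 := (ent_bounds h1 h2).2
  have e3 := (ent_bounds (posSemidef_ptraceLeft h1) (by rw [trace_ptraceLeft, h2])).1
  rw [mutInfo]
  linarith

lemma exists_purification {ρ : Matrix A A ℂ} (hρ : ρ.PosSemidef) (htr : ρ.trace = 1) :
    ∃ φ : A × A → ℂ, ∑ y, Complex.normSq (φ y) = 1 ∧ ptraceLeft (proj φ) = ρ := by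
  obtain ⟨B, rfl⟩ := exists_factor hρ
  have h : ptraceLeft (proj fun y : A × A => star (B y.1 y.2)) = Bᴴ * B := by
    ext a a'
    simp [ptraceLeft, proj, Matrix.mul_apply]
  refine ⟨fun y => star (B y.1 y.2), ?_, h⟩
  rw [← h, trace_ptraceLeft] at htr
  have : ((∑ y : A × A, Complex.normSq (star (B y.1 y.2)) : ℝ) : ℂ) = 1 := by
    rw [← htr, Matrix.trace]
    push_cast
    refine Finset.sum_congr rfl fun y _ => ?_
    simp only [proj, diag_apply, of_apply]
    exact (Complex.mul_conj _).symm
  exact_mod_cast this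

end Single

/-! ### Encoders acting on shared states -/

section Encoder
variable {J T X Q a : Type} [Fintype J] [DecidableEq J] [Fintype T] [DecidableEq T]
  [Fintype X] [DecidableEq X] [Fintype Q] [DecidableEq Q] [Fintype a] [DecidableEq a]

/-- Encoding acts on one half of the shared state, so the other half keeps its marginal. -/
lemma enc_sum {P : Type} [Fintype P] {F : T → Matrix P a ℂ} (hF : ∑ t, (F t)ᴴ * F t = 1)
    (G : Matrix a X ℂ) (x x' : X) :
    ∑ t, ∑ p, (F t * G) p x * star ((F t * G) p x') = (Gᴴ * G) x' x := by
  have : Gᴴ * G = ∑ t, (F t * G)ᴴ * (F t * G) := by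
    calc Gᴴ * G = Gᴴ * (∑ t, (F t)ᴴ * F t) * G := by rw [hF, Matrix.mul_one]
      _ = _ := by
        rw [Matrix.mul_sum, Matrix.sum_mul]
        refine Finset.sum_congr rfl fun t _ => ?_
        rw [conjTranspose_mul]
        simp only [Matrix.mul_assoc]
  rw [this, Matrix.sum_apply]
  refine Finset.sum_congr rfl fun t _ => ?_
  rw [Matrix.mul_apply]
  exact Finset.sum_congr rfl fun p _ => by rw [conjTranspose_apply, mul_comm]

lemma trace_gram {G : Matrix a X ℂ} (hG : ∑ y : a × X, Complex.normSq (G y.1 y.2) = 1) :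
    ∑ x, (Gᴴ * G) x x = 1 := by
  have : ∑ x, (Gᴴ * G) x x = ((∑ y : a × X, Complex.normSq (G y.1 y.2) : ℝ) : ℂ) := by
    rw [Fintype.sum_prod_type_right]
    push_cast
    refine Finset.sum_congr rfl fun x _ => ?_
    rw [Matrix.mul_apply]
    refine Finset.sum_congr rfl fun y _ => ?_
    rw [conjTranspose_apply, Complex.star_def, Complex.normSq_eq_conj_mul_self]
  rw [this, hG, Complex.ofReal_one]

lemma avgIn_state [Nonempty J] {n : ℕ} {U : J → T → (Fin n → Q) → X → ℂ}
    (hU : ∀ j, ∑ x, ∑ t, ∑ p, U j t p x * star (U j t p x) = 1) :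
    (avgIn U).PosSemidef ∧ (avgIn U).trace = 1 := by
  have hcard : (Fintype.card J : ℂ) ≠ 0 := Nat.cast_ne_zero.mpr Fintype.card_ne_zero
  constructor
  · have : avgIn U = (Fintype.card J : ℂ)⁻¹ • ∑ j, ∑ t, ∑ x, proj fun p => U j t p x := by
      ext p p'
      simp [avgIn, Matrix.sum_apply, proj]
    rw [this]
    refine PosSemidef.smul (posSemidef_sum _ fun _ _ => posSemidef_sum _ fun _ _ =>
      posSemidef_sum _ fun _ _ => proj_posSemidef _) ?_
    rw [inv_nonneg]
    exact Nat.cast_nonneg _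
  · have h : ∀ j, ∑ p, ∑ t, ∑ x, U j t p x * star (U j t p x) = 1 := by
      intro j
      rw [← hU j, Finset.sum_comm]
      simp only [Finset.sum_comm (γ := X)]
    simp only [Matrix.trace, diag_apply, avgIn, of_apply, ← Finset.mul_sum]
    rw [Finset.sum_comm]
    simp only [h]
    simp [hcard]

end Encoder

/-! ### Two independent senders -/

section Mac
variable {A B C E J₁ J₂ T₁ T₂ X₁ X₂ a₁ a₂ : Type}
  [Fintype A] [DecidableEq A] [Fintype B] [DecidableEq B]
  [Fintype C] [DecidableEq C] [Fintype E] [DecidableEq E]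
  [Fintype J₁] [DecidableEq J₁] [Fintype J₂] [DecidableEq J₂]
  [Fintype T₁] [DecidableEq T₁] [Fintype T₂] [DecidableEq T₂]
  [Fintype X₁] [DecidableEq X₁] [Fintype X₂] [DecidableEq X₂]
  [Fintype a₁] [DecidableEq a₁] [Fintype a₂] [DecidableEq a₂]

/-- Joint encoder of two independent senders, on blocks of pairs of input letters. -/
def jointEnc {n : ℕ} (u : J₁ → T₁ → (Fin n → A) → X₁ → ℂ) (w : J₂ → T₂ → (Fin n → B) → X₂ → ℂ) :
    J₁ × J₂ → T₁ × T₂ → (Fin n → A × B) → X₁ × X₂ → ℂ :=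
  fun j t p x => u j.1 t.1 (fun i => (p i).1) x.1 * w j.2 t.2 (fun i => (p i).2) x.2

lemma avgIn_jointEnc {n : ℕ} (u : J₁ → T₁ → (Fin n → A) → X₁ → ℂ)
    (w : J₂ → T₂ → (Fin n → B) → X₂ → ℂ) : avgIn (jointEnc u w) =
      Matrix.of fun p p' : Fin n → A × B => avgIn u (fun j => (p j).1) (fun j => (p' j).1) *
      avgIn w (fun j => (p j).2) (fun j => (p' j).2) := by
  ext p p'
  simp only [avgIn, jointEnc, of_apply, Fintype.card_prod, Nat.cast_mul, mul_inv]
  rw [mul_mul_mul_comm]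
  congr 1
  simp only [← Fintype.sum_prod_type']
  rw [Finset.sum_mul_sum, ← Fintype.sum_prod_type']
  let e : ((J₁ × J₂) × (T₁ × T₂) × (X₁ × X₂)) ≃ (J₁ × T₁ × X₁) × (J₂ × T₂ × X₂) :=
    ⟨fun y => ((y.1.1, y.2.1.1, y.2.2.1), (y.1.2, y.2.1.2, y.2.2.2)),
     fun y => ((y.1.1, y.2.1), (y.1.2.1, y.2.2.1), (y.1.2.2, y.2.2.2)), fun _ => rfl, fun _ => rfl⟩
  rw [← e.sum_comp]
  refine Finset.sum_congr rfl fun y _ => ?_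
  simp only [e, Equiv.coe_fn_mk, star_mul']
  ring

/-- The output state of the code, as a mixture of the vectors `outVec`. -/
lemma out_eq {n : ℕ} (K : E → Matrix C (A × B) ℂ) (Γ₁ : a₁ × X₁ → ℂ) (Γ₂ : a₂ × X₂ → ℂ)
    (F₁ : J₁ → T₁ → Matrix (Fin n → A) a₁ ℂ) (F₂ : J₂ → T₂ → Matrix (Fin n → B) a₂ ℂ)
    (k : J₁) (l : J₂) :
    (∑ j : Fin n → E, ∑ t, ∑ s,
      ((Matrix.of (fun c xy => ∏ i, K (j i) (c i) (xy.1 i, xy.2 i)) :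
          Matrix (Fin n → C) ((Fin n → A) × (Fin n → B)) ℂ) ⊗ₖ
        (1 : Matrix (X₁ × X₂) (X₁ × X₂) ℂ)) *
        (((F₁ k t ⊗ₖ F₂ l s) ⊗ₖ (1 : Matrix (X₁ × X₂) (X₁ × X₂) ℂ)) *
          proj (fun q : (a₁ × a₂) × (X₁ × X₂) => Γ₁ (q.1.1, q.2.1) * Γ₂ (q.1.2, q.2.2)) *
         ((F₁ k t ⊗ₖ F₂ l s) ⊗ₖ (1 : Matrix (X₁ × X₂) (X₁ × X₂) ℂ))ᴴ) *
        ((Matrix.of (fun c xy => ∏ i, K (j i) (c i) (xy.1 i, xy.2 i)) :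
          Matrix (Fin n → C) ((Fin n → A) × (Fin n → B)) ℂ) ⊗ₖ
        (1 : Matrix (X₁ × X₂) (X₁ × X₂) ℂ))ᴴ) =
    ∑ t, ∑ g, proj (outVec (stine K) (jointEnc
      (fun k t => F₁ k t * Matrix.of fun a x => Γ₁ (a, x))
      (fun l s => F₂ l s * Matrix.of fun a x => Γ₂ (a, x))) (k, l) t g) := by
  simp only [mul_proj_mul]
  rw [Finset.sum_comm (f := fun t : T₁ × T₂ => _)]
  refine Finset.sum_congr rfl fun g _ => ?_
  rw [Fintype.sum_prod_type]
  refine Finset.sum_congr rfl fun t _ => Finset.sum_congr rfl fun s _ => ?_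
  congr 1
  funext ⟨f, x, y⟩
  have h1 : ∀ α β, (((F₁ k t ⊗ₖ F₂ l s) ⊗ₖ (1 : Matrix (X₁ × X₂) (X₁ × X₂) ℂ)) *ᵥ
      (fun q : (a₁ × a₂) × (X₁ × X₂) => Γ₁ (q.1.1, q.2.1) * Γ₂ (q.1.2, q.2.2))) ((α, β), (x, y)) =
      (F₁ k t * Matrix.of fun a x => Γ₁ (a, x)) α x *
        (F₂ l s * Matrix.of fun a x => Γ₂ (a, x)) β y := by
    intro α β
    simp only [mulVec, dotProduct, kroneckerMap_apply, Matrix.mul_apply, of_apply,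
      Finset.sum_mul_sum]
    rw [Fintype.sum_prod_type, Fintype.sum_prod_type]
    refine Finset.sum_congr rfl fun a _ => Finset.sum_congr rfl fun b _ => ?_
    rw [Finset.sum_eq_single (x, y)]
    · simp; ring
    · intro z _ hz; simp [Matrix.one_apply, hz.symm]
    · simp
  rw [mulVec, dotProduct, Fintype.sum_prod_type]
  have h2 : ∀ q : (Fin n → A) × (Fin n → B), ∑ z, ((Matrix.of (fun c xy => ∏ i, K (g i) (c i) (xy.1 i, xy.2 i)) :
          Matrix (Fin n → C) ((Fin n → A) × (Fin n → B)) ℂ) ⊗ₖ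
        (1 : Matrix (X₁ × X₂) (X₁ × X₂) ℂ)) (f, x, y) (q, z) *
      (((F₁ k t ⊗ₖ F₂ l s) ⊗ₖ (1 : Matrix (X₁ × X₂) (X₁ × X₂) ℂ)) *ᵥ
      (fun q : (a₁ × a₂) × (X₁ × X₂) => Γ₁ (q.1.1, q.2.1) * Γ₂ (q.1.2, q.2.2))) (q, z) =
      (∏ i, K (g i) (f i) (q.1 i, q.2 i)) * ((F₁ k t * Matrix.of fun a x => Γ₁ (a, x)) q.1 x *
        (F₂ l s * Matrix.of fun a x => Γ₂ (a, x)) q.2 y) := by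
    rintro ⟨α, β⟩
    rw [Finset.sum_eq_single (x, y), h1]
    · simp
    · intro z _ hz; simp [Matrix.one_apply, hz.symm]
    · simp
  simp only [h2]
  rw [← (Equiv.arrowProdEquivProdArrow (Fin n) (fun _ => A) (fun _ => B)).sum_comp]
  simp only [Equiv.arrowProdEquivProdArrow, Equiv.coe_fn_mk, outVec, jointEnc, stine, of_apply,
    Prod.mk.eta]


/-- The letters of each sender's average input are states. -/
lemma enc_letter [Nonempty J₁] {n : ℕ} {Γ : a₁ × X₁ → ℂ} (hΓ : ∑ x, Complex.normSq (Γ x) = 1)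
    {F : J₁ → T₁ → Matrix (Fin n → A) a₁ ℂ} (hF : ∀ k, ∑ t, (F k t)ᴴ * F k t = 1) (i : Fin n) :
    (letterC (avgIn fun k t => F k t * Matrix.of fun a x => Γ (a, x)) i).PosSemidef ∧
    (letterC (avgIn fun k t => F k t * Matrix.of fun a x => Γ (a, x)) i).trace = 1 := by
  have h : ∀ j, ∑ x, ∑ t, ∑ p, (F j t * Matrix.of fun a x => Γ (a, x)) p x *
      star ((F j t * Matrix.of fun a x => Γ (a, x)) p x) = 1 := by
    intro j
    simp only [enc_sum (hF j)]
    exact trace_gram (G := Matrix.of fun a x => Γ (a, x)) hΓ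
  obtain ⟨h1, h2⟩ := avgIn_state h
  exact (subadd h1 h2).2 i

/-- Any bound `M` on the mutual information over product inputs limits the size of a code with
independent senders. -/
lemma mac_code_bound [Nonempty J₁] [Nonempty J₂] {n : ℕ} {K : E → Matrix C (A × B) ℂ}
    (hK : ∑ j, (K j)ᴴ * K j = 1) {Γ₁ : a₁ × X₁ → ℂ} {Γ₂ : a₂ × X₂ → ℂ}
    (hΓ₁ : ∑ x, Complex.normSq (Γ₁ x) = 1) (hΓ₂ : ∑ x, Complex.normSq (Γ₂ x) = 1)
    {F₁ : J₁ → T₁ → Matrix (Fin n → A) a₁ ℂ} {F₂ : J₂ → T₂ → Matrix (Fin n → B) a₂ ℂ}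
    (hF₁ : ∀ k, ∑ t, (F₁ k t)ᴴ * F₁ k t = 1) (hF₂ : ∀ l, ∑ t, (F₂ l t)ᴴ * F₂ l t = 1)
    {Λ : J₁ → J₂ → Matrix ((Fin n → C) × (X₁ × X₂)) ((Fin n → C) × (X₁ × X₂)) ℂ}
    (hΛ : ∀ k l, (Λ k l).PosSemidef) (hΛ1 : (1 - ∑ k, ∑ l, Λ k l).PosSemidef)
    {ε : ℝ} (hε : 0 < ε) (hε' : ε < 1 / 2)
    (hs : ∀ k l, 1 - ε ≤ ((Λ k l * (∑ j : Fin n → E, ∑ t, ∑ s,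
      ((Matrix.of (fun c xy => ∏ i, K (j i) (c i) (xy.1 i, xy.2 i)) :
          Matrix (Fin n → C) ((Fin n → A) × (Fin n → B)) ℂ) ⊗ₖ
        (1 : Matrix (X₁ × X₂) (X₁ × X₂) ℂ)) *
        (((F₁ k t ⊗ₖ F₂ l s) ⊗ₖ (1 : Matrix (X₁ × X₂) (X₁ × X₂) ℂ)) *
          proj (fun q : (a₁ × a₂) × (X₁ × X₂) => Γ₁ (q.1.1, q.2.1) * Γ₂ (q.1.2, q.2.2)) *
         ((F₁ k t ⊗ₖ F₂ l s) ⊗ₖ (1 : Matrix (X₁ × X₂) (X₁ × X₂) ℂ))ᴴ) *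
        ((Matrix.of (fun c xy => ∏ i, K (j i) (c i) (xy.1 i, xy.2 i)) :
          Matrix (Fin n → C) ((Fin n → A) × (Fin n → B)) ℂ) ⊗ₖ
        (1 : Matrix (X₁ × X₂) (X₁ × X₂) ℂ))ᴴ)).trace).re)
    {M : ℝ} (hM : ∀ (ρ₁ : Matrix A A ℂ) (ρ₂ : Matrix B B ℂ), ρ₁.PosSemidef → ρ₁.trace = 1 →
      ρ₂.PosSemidef → ρ₂.trace = 1 → mutInfo (stine K) (ρ₁ ⊗ₖ ρ₂) ≤ M) :
    (1 - ε) * (Real.log (Fintype.card J₁) + Real.log (Fintype.card J₂)) ≤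
      Real.binEntropy ε + n * M := by
  set G₁ : Matrix a₁ X₁ ℂ := Matrix.of fun a x => Γ₁ (a, x) with hG₁
  set G₂ : Matrix a₂ X₂ ℂ := Matrix.of fun a x => Γ₂ (a, x) with hG₂
  set U := jointEnc (fun k t => F₁ k t * G₁) (fun l s => F₂ l s * G₂) with hU
  -- the receiver's side register does not depend on the messages
  set γ : Matrix (X₁ × X₂) (X₁ × X₂) ℂ := Matrix.of fun x x' =>
    (G₁ᴴ * G₁) x'.1 x.1 * (G₂ᴴ * G₂) x'.2 x.2 with hγdef
  have hγ : γ.trace = 1 := by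
    have h1 := trace_gram (G := G₁) hΓ₁
    have h2 := trace_gram (G := G₂) hΓ₂
    simp only [Matrix.trace, diag_apply, hγdef, of_apply, Fintype.sum_prod_type]
    rw [← Finset.sum_mul_sum, h1, h2, mul_one]
  have hUγ : ∀ j x x', ∑ t, ∑ p, U j t p x * star (U j t p x') = γ x x' := by
    rintro ⟨k, l⟩ x x'
    simp only [hγdef, of_apply]
    rw [← enc_sum (hF₁ k) G₁, ← enc_sum (hF₂ l) G₂, Finset.sum_mul_sum, Fintype.sum_prod_type]
    refine Finset.sum_congr rfl fun t _ => Finset.sum_congr rfl fun s _ => ?_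
    rw [Finset.sum_mul_sum, ← Fintype.sum_prod_type',
      ← (Equiv.arrowProdEquivProdArrow (Fin n) (fun _ => A) (fun _ => B)).sum_comp]
    refine Finset.sum_congr rfl fun p _ => ?_
    simp only [hU, jointEnc, Equiv.arrowProdEquivProdArrow, Equiv.coe_fn_mk, star_mul']
    ring
  have hb := code_bound (stine_isometry hK) hγ hUγ (Λ := fun j => Λ j.1 j.2) (fun j => hΛ _ _)
    (by rwa [Fintype.sum_prod_type]) hε hε' (by
      rintro ⟨k, l⟩
      have := hs k l
      rwa [out_eq] at this)
  rw [Fintype.card_prod, Nat.cast_mul, Real.log_mul (Nat.cast_ne_zero.mpr Fintype.card_ne_zero)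
    (Nat.cast_ne_zero.mpr Fintype.card_ne_zero)] at hb
  refine hb.trans (add_le_add le_rfl ?_)
  calc ∑ i, mutInfo (stine K) (letterC (avgIn U) i) ≤ ∑ _i : Fin n, M := by
        refine Finset.sum_le_sum fun i _ => ?_
        obtain ⟨p1, t1⟩ := enc_letter hΓ₁ hF₁ i
        obtain ⟨p2, t2⟩ := enc_letter hΓ₂ hF₂ i
        have : letterC (avgIn U) i = letterC (avgIn fun k t => F₁ k t * G₁) i ⊗ₖ
            letterC (avgIn fun l s => F₂ l s * G₂) i :=
          (congrArg (fun ρ => letterC ρ i) (avgIn_jointEnc _ _)).trans (letterC_prod _ _ i)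
        rw [this]
        exact hM _ _ p1 t1 p2 t2
    _ = n * M := by simp

end Mac

/-! ### The asymptotic statement -/

lemma log_ceil (n : ℕ) (r : ℝ) : n * r * Real.log 2 ≤ Real.log ⌈(2 : ℝ) ^ ((n : ℝ) * r)⌉₊ := by
  rw [← Real.log_rpow two_pos]
  exact Real.log_le_log (Real.rpow_pos_of_pos two_pos _) (Nat.le_ceil _)

/-- Letting `ε → 0` in the weak converse; `binEntropy` is continuous with value `0` at `0`. -/
lemma limit_rate {R S : ℝ} (h : ∀ ε > (0 : ℝ), ε < 1 / 2 →
    (1 - ε) * (R - 2 * ε) * Real.log 2 ≤ Real.binEntropy ε + S * Real.log 2) : R ≤ S := by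
  have hl : Filter.Tendsto (fun ε : ℝ => (1 - ε) * (R - 2 * ε) * Real.log 2)
      (nhdsWithin 0 (Set.Ioi 0)) (nhds (R * Real.log 2)) := by
    have : Continuous fun ε : ℝ => (1 - ε) * (R - 2 * ε) * Real.log 2 := by fun_prop
    simpa using (this.tendsto 0).mono_left nhdsWithin_le_nhds
  have hr : Filter.Tendsto (fun ε : ℝ => Real.binEntropy ε + S * Real.log 2)
      (nhdsWithin 0 (Set.Ioi 0)) (nhds (S * Real.log 2)) := by
    have : Continuous fun ε : ℝ => Real.binEntropy ε + S * Real.log 2 := by fun_prop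
    simpa using (this.tendsto 0).mono_left nhdsWithin_le_nhds
  have := le_of_tendsto_of_tendsto hl hr (by
    filter_upwards [Ioo_mem_nhdsGT (show (0 : ℝ) < 1 / 2 by norm_num)] with ε hε
    exact h ε hε.1 hε.2)
  exact le_of_mul_le_mul_right this (Real.log_pos one_lt_two)

/-- **Single-letter sum-rate converse for the entanglement-assisted QMAC.**
If the nonnegative rate pair `(R₁, R₂)` is achievable for entanglement-assisted
classical communication over the QMAC given by the Kraus family `K`, then
`R₁ + R₂ ≤ sup_{ρ₁, ρ₂} I(AB;C)_θ`, where
`θ^{ABC} = (id_{AB} ⊗ M)(|φ₁⟩⟨φ₁| ⊗ |φ₂⟩⟨φ₂|)` for purifications `φ₁, φ₂` of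
`ρ₁, ρ₂`. -/
theorem qmac_ea_sum_rate_converse
    {dA dB dC μ : ℕ}
    (K : Fin μ → Matrix (Fin dC) (Fin dA × Fin dB) ℂ)
    (hK : ∑ j, (K j)ᴴ * K j = 1)
    (R₁ R₂ : ℝ) (hR₁0 : 0 ≤ R₁) (hR₂0 : 0 ≤ R₂)
    -- achievability of the rate pair (R₁, R₂):
    (hach : ∀ ε > (0 : ℝ), ∀ δ > (0 : ℝ), ∃ n : ℕ, 1 ≤ n ∧
      ∃ a cA b cB : ℕ,
      ∃ (Γ₁ : Fin a × Fin cA → ℂ) (Γ₂ : Fin b × Fin cB → ℂ),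
        (∑ x, Complex.normSq (Γ₁ x) = 1) ∧ (∑ x, Complex.normSq (Γ₂ x) = 1) ∧
      -- |Γ₁⟩ ⊗ |Γ₂⟩ arranged as (a × b) × (cA × cB)
      ∃ (T₁ T₂ : ℕ)
        (F₁ : Fin (Nat.ceil ((2 : ℝ) ^ ((n : ℝ) * (R₁ - δ)))) → Fin T₁ →
          Matrix (Fin n → Fin dA) (Fin a) ℂ)
        (F₂ : Fin (Nat.ceil ((2 : ℝ) ^ ((n : ℝ) * (R₂ - δ)))) → Fin T₂ →
          Matrix (Fin n → Fin dB) (Fin b) ℂ)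
        (Λ : Fin (Nat.ceil ((2 : ℝ) ^ ((n : ℝ) * (R₁ - δ)))) →
          Fin (Nat.ceil ((2 : ℝ) ^ ((n : ℝ) * (R₂ - δ)))) →
          Matrix ((Fin n → Fin dC) × (Fin cA × Fin cB))
            ((Fin n → Fin dC) × (Fin cA × Fin cB)) ℂ),
        (∀ k, ∑ t, (F₁ k t)ᴴ * F₁ k t = 1) ∧
        (∀ l, ∑ t, (F₂ l t)ᴴ * F₂ l t = 1) ∧
        (∀ k l, (Λ k l).PosSemidef) ∧
        ((1 : Matrix ((Fin n → Fin dC) × (Fin cA × Fin cB))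
            ((Fin n → Fin dC) × (Fin cA × Fin cB)) ℂ) - ∑ k, ∑ l, Λ k l).PosSemidef ∧
        ∀ k l, 1 - ε ≤
          ((Λ k l * (∑ j : Fin n → Fin μ, ∑ t, ∑ s,
            ((Matrix.of (fun c xy => ∏ i, K (j i) (c i) (xy.1 i, xy.2 i)) :
                Matrix (Fin n → Fin dC) ((Fin n → Fin dA) × (Fin n → Fin dB)) ℂ) ⊗ₖ
              (1 : Matrix (Fin cA × Fin cB) (Fin cA × Fin cB) ℂ)) *
              (((F₁ k t ⊗ₖ F₂ l s) ⊗ₖ (1 : Matrix (Fin cA × Fin cB) (Fin cA × Fin cB) ℂ)) *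
                proj (fun q : (Fin a × Fin b) × (Fin cA × Fin cB) =>
                  Γ₁ (q.1.1, q.2.1) * Γ₂ (q.1.2, q.2.2)) *
               ((F₁ k t ⊗ₖ F₂ l s) ⊗ₖ (1 : Matrix (Fin cA × Fin cB) (Fin cA × Fin cB) ℂ))ᴴ) *
              ((Matrix.of (fun c xy => ∏ i, K (j i) (c i) (xy.1 i, xy.2 i)) :
                Matrix (Fin n → Fin dC) ((Fin n → Fin dA) × (Fin n → Fin dB)) ℂ) ⊗ₖ
              (1 : Matrix (Fin cA × Fin cB) (Fin cA × Fin cB) ℂ))ᴴ)).trace).re) :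
    -- conclusion: the sum rate is bounded by sup_{ρ₁,ρ₂} I(AB;C)_θ
    R₁ + R₂ ≤ sSup {x : ℝ |
      ∃ (ρ₁ : Matrix (Fin dA) (Fin dA) ℂ) (ρ₂ : Matrix (Fin dB) (Fin dB) ℂ)
        (φ₁ : Fin dA × Fin dA → ℂ) (φ₂ : Fin dB × Fin dB → ℂ),
        ρ₁.PosSemidef ∧ ρ₁.trace = 1 ∧ ρ₂.PosSemidef ∧ ρ₂.trace = 1 ∧
        (∑ y, Complex.normSq (φ₁ y) = 1) ∧ ptraceLeft (proj φ₁) = ρ₁ ∧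
        (∑ y, Complex.normSq (φ₂ y) = 1) ∧ ptraceLeft (proj φ₂) = ρ₂ ∧
        x = (let θ : Matrix ((Fin dA × Fin dB) × Fin dC) ((Fin dA × Fin dB) × Fin dC) ℂ :=
              ∑ j, ((1 : Matrix (Fin dA × Fin dB) (Fin dA × Fin dB) ℂ) ⊗ₖ K j) *
                proj (fun q : (Fin dA × Fin dB) × (Fin dA × Fin dB) =>
                  φ₁ (q.1.1, q.2.1) * φ₂ (q.1.2, q.2.2)) *
                ((1 : Matrix (Fin dA × Fin dB) (Fin dA × Fin dB) ℂ) ⊗ₖ K j)ᴴ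
             vnEntropy (Matrix.of fun q q' : Fin dA × Fin dB => ∑ c, θ (q, c) (q', c)) +
               vnEntropy (Matrix.of fun c c' : Fin dC => ∑ ab, θ (ab, c) (ab, c')) -
               vnEntropy θ)} := by
  set S := {x : ℝ | _} with hS
  have hlog : 0 < Real.log 2 := Real.log_pos one_lt_two
  -- `sSup` of an unbounded set would be `0`, so boundedness is needed for `le_csSup`
  have hbdd : BddAbove S := by
    refine ⟨(Fintype.card (Fin dC) + Fintype.card (Fin dC × Fin μ)) / Real.log 2, ?_⟩
    rintro x ⟨ρ₁, ρ₂, φ₁, φ₂, h1, t1, h2, t2, -, e1, -, e2, rfl⟩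
    refine (theta_info K φ₁ φ₂ rfl).trans_le ?_
    rw [e1, e2]
    refine div_le_div_of_nonneg_right (mutInfo_le (stine_isometry hK) (h1.kronecker h2) ?_) hlog.le
    rw [trace_kronecker, t1, t2, mul_one]
  -- every product input has a purification, so its mutual information lies in `S`
  have hmem : ∀ (ρ₁ : Matrix (Fin dA) (Fin dA) ℂ) (ρ₂ : Matrix (Fin dB) (Fin dB) ℂ),
      ρ₁.PosSemidef → ρ₁.trace = 1 → ρ₂.PosSemidef → ρ₂.trace = 1 →
      mutInfo (stine K) (ρ₁ ⊗ₖ ρ₂) ≤ sSup S * Real.log 2 := by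
    intro ρ₁ ρ₂ h1 t1 h2 t2
    obtain ⟨φ₁, n1, e1⟩ := exists_purification h1 t1
    obtain ⟨φ₂, n2, e2⟩ := exists_purification h2 t2
    rw [← div_le_iff₀ hlog]
    refine le_csSup hbdd ⟨ρ₁, ρ₂, φ₁, φ₂, h1, t1, h2, t2, n1, e1, n2, e2, ?_⟩
    rw [← e1, ← e2]
    exact (theta_info K φ₁ φ₂ rfl).symm
  -- the rate slack `δ` is taken equal to the error `ε`
  refine limit_rate fun ε hε hε' => ?_
  obtain ⟨n, hn, a, cA, b, cB, Γ₁, Γ₂, hΓ₁, hΓ₂, T₁, T₂, F₁, F₂, Λ, hF₁, hF₂, hΛ, hΛ1, hs⟩ :=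
    hach ε hε ε hε
  have pos : ∀ r : ℝ, 0 < ⌈(2 : ℝ) ^ r⌉₊ := fun r => Nat.ceil_pos.mpr (Real.rpow_pos_of_pos two_pos _)
  have : Nonempty (Fin ⌈(2 : ℝ) ^ ((n : ℝ) * (R₁ - ε))⌉₊) := ⟨⟨0, pos _⟩⟩
  have : Nonempty (Fin ⌈(2 : ℝ) ^ ((n : ℝ) * (R₂ - ε))⌉₊) := ⟨⟨0, pos _⟩⟩
  have hb := mac_code_bound hK hΓ₁ hΓ₂ hF₁ hF₂ hΛ hΛ1 hε hε' hs hmem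
  rw [Fintype.card_fin, Fintype.card_fin] at hb
  have hl := mul_le_mul_of_nonneg_left (add_le_add (log_ceil n (R₁ - ε)) (log_ceil n (R₂ - ε)))
    (show 0 ≤ 1 - ε by linarith)
  have hn' : (1 : ℝ) ≤ n := by exact_mod_cast hn
  have hh : 0 ≤ Real.binEntropy ε := Real.binEntropy_nonneg hε.le (by linarith)
  -- after division by `n`, the term `binEntropy ε / n` is at most `binEntropy ε`
  have key : n * ((1 - ε) * (R₁ + R₂ - 2 * ε) * Real.log 2) ≤
      n * (Real.binEntropy ε + sSup S * Real.log 2) := by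
    nlinarith
  exact le_of_mul_le_mul_left key (by linarith)
end
end

section
/- For any density operator σ on ℂ^{d_A} ⊗ ℂ^{d_B} ⊗ ℂ^{d_E} with marginals obtained by partial traces, the quantum mutual information satisfies I(A;B)_σ ≤ H(B)_σ + H(B|E)_σ, i.e. H(σ^A) + H(σ^B) − H(σ^{AB}) ≤ H(σ^B) + H(σ^{BE}) − H(σ^E). -/
/-!
The terms `H(B)` cancel, so the claim is `H(A) + H(E) ≤ H(AB) + H(BE)`. For a purification of `σ`
with reference system `R`, complementary marginals have equal entropy: `H(A) = H(BER)` and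
`H(AB) = H(ER)`. Hence the claim is strong subadditivity for the state on `B, E, R`
(`entropy_main`).

Strong subadditivity `H(XYZ) + H(Y) ≤ H(XY) + H(YZ)` is the monotonicity, under tracing out `Z`, of
the relative entropy of `ρ` with respect to `1 ⊗ Tr_X ρ`. It is proved here without operator
convexity. Let `ρ` have eigenvalues `p i`, let `ω = 1 ⊗ Tr_X ρ` have eigenvalues `q k`, and let `C`
be the overlap matrix of the eigenbases. The function
`G t = ∑ |C k i|² p i log (q k + t p i)` equals `tr(ρ log ω)` at `t = 0` and behaves like
`tr(ρ) log t + tr(ρ log ρ)` at infinity, so the difference between its two ends is the relative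
entropy. Its derivative `∑ |C k i|² p i² / (q k + t p i)` is the maximum over all matrices `M` of
`2 Re tr(ρ Mᴴ) - tr(Mᴴ ω M) - t tr(M ρ Mᴴ)` (`testFn_le`, `exists_testFn_eq`). On matrices
`M = N ⊗ 1_Z` this functional is the one belonging to `Tr_Z ρ` (`testFn_lift`), so the derivative can
only decrease when `Z` is traced out, and integrating over `t ∈ [0, ∞)` gives the inequality
(`strong_subadditivity`).
-/

open Matrix ComplexOrder

noncomputable section

/-! ### Entropy as a function of the characteristic polynomial -/

/-- Von Neumann entropy with the natural logarithm, `∑ -λ log λ` over the roots `λ` of the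
characteristic polynomial with multiplicity. Going through the roots makes the invariances below
immediate; for a Hermitian matrix the roots are the (real) eigenvalues. -/
def natEntropy {ι : Type*} [Fintype ι] [DecidableEq ι] (A : Matrix ι ι ℂ) : ℝ :=
  (A.charpoly.roots.map fun z => Real.negMulLog z.re).sum

theorem natEntropy_eq {ι : Type*} [Fintype ι] [DecidableEq ι] {A : Matrix ι ι ℂ}
    (h : A.IsHermitian) : natEntropy A = ∑ i, Real.negMulLog (h.eigenvalues i) := by
  simp [natEntropy, h.roots_charpoly_eq_eigenvalues, Multiset.map_map]

theorem vnEntropy_eq {ι : Type*} [Fintype ι] [DecidableEq ι] {A : Matrix ι ι ℂ}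
    (h : A.IsHermitian) : vnEntropy A = natEntropy A / Real.log 2 := by
  rw [natEntropy_eq h, vnEntropy, dif_pos h, Finset.sum_div, ← Finset.sum_neg_distrib]
  refine Finset.sum_congr rfl fun i _ => ?_
  simp only [Real.negMulLog, Real.logb]
  ring

theorem natEntropy_transpose {ι : Type*} [Fintype ι] [DecidableEq ι] (A : Matrix ι ι ℂ) :
    natEntropy Aᵀ = natEntropy A := by
  rw [natEntropy, charpoly_transpose, natEntropy]

/-- `A * B` and `B * A` have the same nonzero spectrum, and zero roots contribute nothing. Applied to
`B = Aᴴ`, this says that complementary marginals of a pure state have equal entropy. -/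
theorem natEntropy_mul_comm {m n : Type*} [Fintype m] [DecidableEq m] [Fintype n] [DecidableEq n]
    (A : Matrix m n ℂ) (B : Matrix n m ℂ) : natEntropy (A * B) = natEntropy (B * A) := by
  have h := congrArg (fun P : Polynomial ℂ => (P.roots.map fun z => Real.negMulLog z.re).sum)
    (charpoly_mul_comm' A B)
  have hne : ∀ (k : ℕ) (P : Polynomial ℂ), P.Monic → Polynomial.X ^ k * P ≠ 0 := fun k P hP =>
    ((Polynomial.monic_X_pow k).mul hP).ne_zero
  simp only [Polynomial.roots_mul (hne _ _ (charpoly_monic _)), Polynomial.roots_X_pow,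
    Multiset.map_add, Multiset.sum_add, Multiset.map_nsmul, Multiset.map_singleton,
    Multiset.sum_nsmul, Multiset.sum_singleton, Complex.zero_re, Real.negMulLog_zero,
    smul_zero, zero_add] at h
  exact h

/-! ### The variational functional -/

/-- `A = U diag(p) Uᴴ` with `U` unitary and `p` real. The eigenbasis is a free parameter, so that a
product basis can be used for `1 ⊗ τ`. -/
structure IsSpectral {ι : Type*} [Fintype ι] [DecidableEq ι] (A U : Matrix ι ι ℂ) (p : ι → ℝ) :
    Prop where
  mul_star : U * Uᴴ = 1
  star_mul : Uᴴ * U = 1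
  eq : A = U * diagonal (fun i => (p i : ℂ)) * Uᴴ

theorem isSpectral_eigen {ι : Type*} [Fintype ι] [DecidableEq ι] {A : Matrix ι ι ℂ}
    (h : A.IsHermitian) : IsSpectral A (h.eigenvectorUnitary : Matrix ι ι ℂ) h.eigenvalues where
  mul_star := Unitary.mul_star_self_of_mem h.eigenvectorUnitary.2
  star_mul := Unitary.star_mul_self_of_mem h.eigenvectorUnitary.2
  eq := by
    conv_lhs => rw [h.spectral_theorem, Unitary.conjStarAlgAut_apply]
    rfl

/-- The concave quadratic functional
`M ↦ 2 Re tr(ρ Mᴴ) - tr(Mᴴ σ M) - t tr(M ρ Mᴴ)`. Its supremum over `M` is `resolventSum`; the traces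
are arranged so that `M` enters only through `Mᴴ`, `M * Mᴴ` and `Mᴴ * M`. -/
def testFn {ι : Type*} [Fintype ι] (t : ℝ) (ρ σ M : Matrix ι ι ℂ) : ℝ :=
  2 * (trace (ρ * Mᴴ)).re - (trace (σ * (M * Mᴴ))).re - t * (trace (ρ * (Mᴴ * M))).re

/-- In the eigenbases of `σ` (rows) and `ρ` (columns) the functional decouples into scalar quadratics,
one for each entry `S k i`. -/
theorem testFn_eq {ι : Type*} [Fintype ι] [DecidableEq ι] {ρ σ U V : Matrix ι ι ℂ} {p q : ι → ℝ}
    (hρ : IsSpectral ρ U p) (hσ : IsSpectral σ V q) (t : ℝ) (S : Matrix ι ι ℂ) :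
    testFn t ρ σ (V * S * Uᴴ) = ∑ k, ∑ i, (2 * p i * ((Vᴴ * U) k i * star (S k i)).re
      - (q k + t * p i) * Complex.normSq (S k i)) := by
  have h1 : trace (ρ * (V * S * Uᴴ)ᴴ) =
      trace ((Vᴴ * U) * diagonal (fun i => (p i : ℂ)) * Sᴴ) := by
    rw [hρ.eq, conjTranspose_mul, conjTranspose_mul, conjTranspose_conjTranspose,
      trace_mul_comm (Vᴴ * U * _)]
    calc _ = trace (U * diagonal (fun i => (p i : ℂ)) * (Uᴴ * U) * (Sᴴ * Vᴴ)) := by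
          simp only [Matrix.mul_assoc]
      _ = trace ((U * diagonal (fun i => (p i : ℂ)) * Sᴴ) * Vᴴ) := by
          rw [hρ.star_mul]; simp only [Matrix.mul_assoc, Matrix.mul_one]
      _ = trace (Vᴴ * (U * diagonal (fun i => (p i : ℂ)) * Sᴴ)) := trace_mul_comm _ _
      _ = trace ((Vᴴ * U * diagonal (fun i => (p i : ℂ))) * Sᴴ) := by
          simp only [Matrix.mul_assoc]
      _ = _ := trace_mul_comm _ _
  have h2 : trace (σ * ((V * S * Uᴴ) * (V * S * Uᴴ)ᴴ)) =
      trace (diagonal (fun i => (q i : ℂ)) * S * Sᴴ) := by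
    rw [hσ.eq, conjTranspose_mul, conjTranspose_mul, conjTranspose_conjTranspose]
    calc _ = trace (V * diagonal (fun i => (q i : ℂ)) * (Vᴴ * V) * S * (Uᴴ * U) * (Sᴴ * Vᴴ)) := by
          simp only [Matrix.mul_assoc]
      _ = trace (V * (diagonal (fun i => (q i : ℂ)) * S * Sᴴ * Vᴴ)) := by
          rw [hσ.star_mul, hρ.star_mul]; simp only [Matrix.mul_assoc, Matrix.mul_one]
      _ = trace ((diagonal (fun i => (q i : ℂ)) * S * Sᴴ) * (Vᴴ * V)) := by
          rw [trace_mul_comm]; simp only [Matrix.mul_assoc]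
      _ = _ := by rw [hσ.star_mul, Matrix.mul_one]
  have h3 : trace (ρ * ((V * S * Uᴴ)ᴴ * (V * S * Uᴴ))) =
      trace (S * diagonal (fun i => (p i : ℂ)) * Sᴴ) := by
    rw [hρ.eq, conjTranspose_mul, conjTranspose_mul, conjTranspose_conjTranspose]
    calc _ = trace (U * (diagonal (fun i => (p i : ℂ)) * (Uᴴ * U) * Sᴴ * (Vᴴ * V) * S * Uᴴ)) := by
          simp only [Matrix.mul_assoc]
      _ = trace (diagonal (fun i => (p i : ℂ)) * Sᴴ * S * (Uᴴ * U)) := by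
          rw [hσ.star_mul, hρ.star_mul, trace_mul_comm]
          simp only [Matrix.mul_assoc, Matrix.mul_one]
          simp only [← Matrix.mul_assoc, hρ.star_mul, Matrix.mul_one]
      _ = trace (S * (diagonal (fun i => (p i : ℂ)) * Sᴴ)) := by
          rw [hρ.star_mul, Matrix.mul_one, trace_mul_comm]
      _ = _ := by rw [Matrix.mul_assoc]
  have h4 : ∀ A : Matrix ι ι ℂ, trace (A * Sᴴ) = ∑ k, ∑ i, A k i * star (S k i) := fun A => by
    simp [trace, mul_apply]
  rw [testFn, h1, h2, h3, h4, h4, h4]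
  generalize Vᴴ * U = C
  simp only [mul_diagonal, diagonal_mul, Complex.re_sum, Finset.mul_sum,
    ← Finset.sum_sub_distrib]
  refine Finset.sum_congr rfl fun k _ => Finset.sum_congr rfl fun i _ => ?_
  simp only [Complex.star_def, Complex.normSq_apply, Complex.mul_re, Complex.mul_im,
    Complex.conj_re, Complex.conj_im, Complex.ofReal_re, Complex.ofReal_im]
  ring

/-- Completing the square. For `s = 0` the right side is `0` by the convention `x / 0 = 0`, and the
hypothesis `hps` makes the left side `0` too. -/
theorem quad_le_s7 {p s : ℝ} (hs : 0 ≤ s) (hps : s = 0 → p = 0) (c z : ℂ) :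
    2 * p * (c * star z).re - s * Complex.normSq z ≤ Complex.normSq c * (p ^ 2 / s) := by
  rcases hs.eq_or_lt with h | h
  · simp [← h, hps h.symm]
  · rw [← mul_div_assoc, le_div_iff₀ h]
    simp only [Complex.star_def, Complex.normSq_apply, Complex.mul_re, Complex.conj_re, Complex.conj_im]
    nlinarith [sq_nonneg (p * c.re - s * z.re), sq_nonneg (p * c.im - s * z.im)]

/-- The bound of `quad_le` is attained at `z = (p / s) c`. -/
theorem quad_eq (p s : ℝ) (c : ℂ) :
    2 * p * (c * star (((p / s : ℝ) : ℂ) * c)).re - s * Complex.normSq (((p / s : ℝ) : ℂ) * c) =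
      Complex.normSq c * (p ^ 2 / s) := by
  simp only [Complex.star_def, Complex.normSq_apply, Complex.mul_re, Complex.mul_im, Complex.conj_re, Complex.conj_im,
    Complex.ofReal_re, Complex.ofReal_im]
  rcases eq_or_ne s 0 with h | h
  · simp [h]
  · field_simp
    ring

/-- The supremum of `testFn t ρ σ`, expressed through the overlap matrix `C = Vᴴ * U` of the eigenbases
of `σ` and `ρ` and their eigenvalues `q` and `p`. -/
def resolventSum {ι : Type*} [Fintype ι] (C : Matrix ι ι ℂ) (p q : ι → ℝ) (t : ℝ) : ℝ :=
  ∑ k, ∑ i, Complex.normSq (C k i) * (p i ^ 2 / (q k + t * p i))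

theorem testFn_le {ι : Type*} [Fintype ι] [DecidableEq ι] {ρ σ U V : Matrix ι ι ℂ} {p q : ι → ℝ}
    (hρ : IsSpectral ρ U p) (hσ : IsSpectral σ V q) (hp : ∀ i, 0 ≤ p i) (hq : ∀ i, 0 ≤ q i)
    {t : ℝ} (ht : 0 < t) (M : Matrix ι ι ℂ) :
    testFn t ρ σ M ≤ resolventSum (Vᴴ * U) p q t := by
  have hM : M = V * (Vᴴ * M * U) * Uᴴ := by
    simp only [← Matrix.mul_assoc, hσ.mul_star, Matrix.one_mul]
    rw [Matrix.mul_assoc, hρ.mul_star, Matrix.mul_one]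
  rw [hM, testFn_eq hρ hσ]
  refine Finset.sum_le_sum fun k _ => Finset.sum_le_sum fun i _ => ?_
  have := mul_nonneg ht.le (hp i)
  refine quad_le_s7 (add_nonneg (hq k) this) (fun h => ?_) _ _
  have h0 : t * p i = 0 := by linarith [hq k]
  exact (mul_eq_zero.1 h0).resolve_left ht.ne'

theorem exists_testFn_eq {ι : Type*} [Fintype ι] [DecidableEq ι] {ρ σ U V : Matrix ι ι ℂ}
    {p q : ι → ℝ} (hρ : IsSpectral ρ U p) (hσ : IsSpectral σ V q) (t : ℝ) :
    ∃ M, testFn t ρ σ M = resolventSum (Vᴴ * U) p q t := by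
  refine ⟨V * (of fun k i => ((p i / (q k + t * p i) : ℝ) : ℂ) * (Vᴴ * U) k i) * Uᴴ, ?_⟩
  rw [testFn_eq hρ hσ]
  exact Finset.sum_congr rfl fun k _ => Finset.sum_congr rfl fun i _ => quad_eq _ _ _

/-! ### The interpolating function -/

open Filter Topology in
/-- The support hypothesis `h` keeps the argument of the logarithm positive wherever its coefficient
is nonzero, so that differentiability holds up to and including `t = 0`. -/
theorem hasDerivAt_term {w p q t : ℝ} (hp : 0 ≤ p) (hq : 0 ≤ q) (ht : 0 ≤ t)
    (h : q = 0 → w * p = 0) :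
    HasDerivAt (fun s => w * p * Real.log (q + s * p)) (w * (p ^ 2 / (q + t * p))) t := by
  rcases eq_or_ne (w * p) 0 with h0 | h0
  · have : w * (p ^ 2 / (q + t * p)) = 0 := by
      rw [pow_two, mul_div_assoc, ← mul_assoc, h0, zero_mul]
    simpa [h0, this] using hasDerivAt_const t (0 : ℝ)
  · have hq' : 0 < q := hq.lt_of_ne fun e => h0 (h e.symm)
    have hpos : 0 < q + t * p := by positivity
    have h1 : HasDerivAt (fun s => q + s * p) p t := by
      simpa using ((hasDerivAt_id t).mul_const p).const_add q
    exact ((h1.log hpos.ne').const_mul (w * p)).congr_deriv (by ring)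

open Filter Topology in
theorem tendsto_term {w p q : ℝ} (hp : 0 ≤ p) (hq : 0 ≤ q) :
    Tendsto (fun t => w * p * Real.log (q + t * p) - w * p * Real.log t) atTop
      (𝓝 (w * p * Real.log p)) := by
  rcases hp.eq_or_lt with h | h
  · simp [← h]
  · have h1 : Tendsto (fun t : ℝ => w * p * Real.log (q / t + p)) atTop
        (𝓝 (w * p * Real.log p)) := by
      refine Tendsto.const_mul _ (Tendsto.log ?_ h.ne')
      simpa using (tendsto_const_nhds (x := q)).div_atTop tendsto_id |>.add_const p
    refine h1.congr' ?_
    filter_upwards [eventually_gt_atTop 0] with t ht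
    have : q + t * p = t * (q / t + p) := by field_simp
    rw [this, Real.log_mul ht.ne' (by positivity)]
    ring

/-- The primitive of `resolventSum` in `t`. For overlaps `C` of eigenbases it equals `tr(ρ log σ)` at
`t = 0` and is asymptotic to `tr(ρ) log t + tr(ρ log ρ)` as `t → ∞`. -/
def logSum {ι : Type*} [Fintype ι] (C : Matrix ι ι ℂ) (p q : ι → ℝ) (t : ℝ) : ℝ :=
  ∑ k, ∑ i, Complex.normSq (C k i) * p i * Real.log (q k + t * p i)

theorem hasDerivAt_logSum {ι : Type*} [Fintype ι] {C : Matrix ι ι ℂ} {p q : ι → ℝ}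
    (hp : ∀ i, 0 ≤ p i) (hq : ∀ i, 0 ≤ q i)
    (h : ∀ k i, q k = 0 → Complex.normSq (C k i) * p i = 0) {t : ℝ} (ht : 0 ≤ t) :
    HasDerivAt (logSum C p q) (resolventSum C p q t) t :=
  HasDerivAt.fun_sum fun k _ => HasDerivAt.fun_sum fun i _ =>
    hasDerivAt_term (hp i) (hq k) ht (h k i)

open Filter Topology in
theorem tendsto_logSum {ι : Type*} [Fintype ι] {C : Matrix ι ι ℂ} {p q : ι → ℝ}
    (hp : ∀ i, 0 ≤ p i) (hq : ∀ i, 0 ≤ q i) (hC : ∀ i, ∑ k, Complex.normSq (C k i) = 1) :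
    Tendsto (fun t => logSum C p q t - (∑ i, p i) * Real.log t) atTop
      (𝓝 (-∑ i, Real.negMulLog (p i))) := by
  have h1 : ∀ f : ι → ℝ, ∑ k, ∑ i, Complex.normSq (C k i) * p i * f i = ∑ i, p i * f i := by
    intro f
    rw [Finset.sum_comm]
    refine Finset.sum_congr rfl fun i _ => ?_
    rw [← Finset.sum_mul, ← Finset.sum_mul, hC, one_mul]
  have h2 := tendsto_finsetSum Finset.univ fun k _ => tendsto_finsetSum Finset.univ fun i _ =>
    tendsto_term (w := Complex.normSq (C k i)) (hp i) (hq k)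
  convert h2 using 2 with t
  · simp only [Finset.sum_sub_distrib, h1 fun _ => Real.log t, logSum, Finset.sum_mul]
  · rw [h1 fun i => Real.log (p i), ← Finset.sum_neg_distrib]
    simp [Real.negMulLog]

theorem sum_normSq_overlap {ι : Type*} [Fintype ι] [DecidableEq ι] {ρ σ U V : Matrix ι ι ℂ}
    {p q : ι → ℝ} (hρ : IsSpectral ρ U p) (hσ : IsSpectral σ V q) (i : ι) :
    ∑ k, Complex.normSq ((Vᴴ * U) k i) = 1 := by
  have h : (Vᴴ * U)ᴴ * (Vᴴ * U) = 1 := by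
    rw [conjTranspose_mul, conjTranspose_conjTranspose, Matrix.mul_assoc, ← Matrix.mul_assoc V,
      hσ.mul_star, Matrix.one_mul, hρ.star_mul]
  have h' := congrFun (congrFun h i) i
  rw [mul_apply, one_apply_eq] at h'
  have h'' := congrArg Complex.re h'
  rw [Complex.re_sum, Complex.one_re] at h''
  rw [← h'']
  refine Finset.sum_congr rfl fun k _ => ?_
  simp [Complex.normSq_apply]

/-- The diagonal entries of `ρ` in the basis given by the columns of `V`. -/
theorem sum_overlap_mul {ι : Type*} [Fintype ι] [DecidableEq ι] {ρ U : Matrix ι ι ℂ}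
    {p : ι → ℝ} (hρ : IsSpectral ρ U p) (V : Matrix ι ι ℂ) (k : ι) :
    ∑ i, Complex.normSq ((Vᴴ * U) k i) * p i = ((Vᴴ * ρ * V) k k).re := by
  have h : Vᴴ * ρ * V = (Vᴴ * U) * diagonal (fun i => (p i : ℂ)) * (Vᴴ * U)ᴴ := by
    rw [hρ.eq, conjTranspose_mul, conjTranspose_conjTranspose]
    simp only [Matrix.mul_assoc]
  rw [h, mul_apply, Complex.re_sum]
  refine Finset.sum_congr rfl fun i _ => ?_
  rw [mul_diagonal]
  generalize Vᴴ * U = C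
  simp [Complex.normSq_apply]
  ring

/-! ### Partial trace over the first factor -/

open Kronecker

/-- Partial trace over the first tensor factor. -/
def traceFst {X Y : Type*} [Fintype X] (ρ : Matrix (X × Y) (X × Y) ℂ) : Matrix Y Y ℂ :=
  of fun y y' => ∑ x, ρ (x, y) (x, y')

theorem traceFst_conj {X Y : Type*} [Fintype X] [DecidableEq X] [Fintype Y]
    (ρ : Matrix (X × Y) (X × Y) ℂ) (A B : Matrix Y Y ℂ) :
    traceFst (((1 : Matrix X X ℂ) ⊗ₖ A) * ρ * ((1 : Matrix X X ℂ) ⊗ₖ B)) =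
      A * traceFst ρ * B := by
  ext y y'
  simp only [traceFst, of_apply, mul_apply, Fintype.sum_prod_type, kronecker_apply, one_apply,
    ite_mul, mul_ite, one_mul, zero_mul, mul_zero, Finset.sum_ite_irrel, Finset.sum_const_zero,
    Finset.sum_ite_eq, Finset.sum_ite_eq', Finset.mem_univ, if_true, Finset.mul_sum, Finset.sum_mul]
  rw [Finset.sum_comm]
  refine Finset.sum_congr rfl fun k _ => ?_
  rw [Finset.sum_comm]

theorem isSpectral_one_kronecker {X Y : Type*} [Fintype X] [DecidableEq X] [Fintype Y]
    [DecidableEq Y] {τ W : Matrix Y Y ℂ} {q : Y → ℝ} (h : IsSpectral τ W q) :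
    IsSpectral ((1 : Matrix X X ℂ) ⊗ₖ τ) (1 ⊗ₖ W) (fun k => q k.2) where
  mul_star := by
    rw [conjTranspose_kronecker, ← mul_kronecker_mul, h.mul_star, conjTranspose_one, Matrix.one_mul,
      one_kronecker_one]
  star_mul := by
    rw [conjTranspose_kronecker, ← mul_kronecker_mul, h.star_mul, conjTranspose_one, Matrix.one_mul,
      one_kronecker_one]
  eq := by
    have : diagonal (fun k : X × Y => (q k.2 : ℂ)) =
        (1 : Matrix X X ℂ) ⊗ₖ diagonal (fun y => (q y : ℂ)) := by
      rw [← diagonal_one, diagonal_kronecker_diagonal]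
      simp
    rw [this, conjTranspose_kronecker, ← mul_kronecker_mul, ← mul_kronecker_mul, ← h.eq,
      conjTranspose_one, Matrix.one_mul, Matrix.one_mul]

theorem traceFst_isHermitian {X Y : Type*} [Fintype X] {ρ : Matrix (X × Y) (X × Y) ℂ}
    (h : ρ.IsHermitian) : (traceFst ρ).IsHermitian := by
  ext y y'
  simp only [conjTranspose_apply, traceFst, of_apply, star_sum]
  exact Finset.sum_congr rfl fun x _ => h.apply _ _

open Filter Topology in
/-- With `τ = Tr_X ρ`, there is a function `G` running from `-H(τ)` at `0` to `-H(ρ)` at `∞` (after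
removing `tr(ρ) log t`), whose derivative at `t > 0` is the maximum of `testFn t ρ (1 ⊗ τ)`. -/
theorem exists_interpolation {X Y : Type*} [Fintype X] [DecidableEq X] [Fintype Y]
    [DecidableEq Y] {ρ : Matrix (X × Y) (X × Y) ℂ} (h : ρ.PosSemidef) :
    ∃ G Q : ℝ → ℝ, (∀ t, 0 ≤ t → HasDerivAt G (Q t) t) ∧ G 0 = -natEntropy (traceFst ρ) ∧
      Tendsto (fun t => G t - ρ.trace.re * Real.log t) atTop (𝓝 (-natEntropy ρ)) ∧
      (∀ t, 0 < t → ∀ M, testFn t ρ (1 ⊗ₖ traceFst ρ) M ≤ Q t) ∧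
      ∀ t, ∃ M, testFn t ρ (1 ⊗ₖ traceFst ρ) M = Q t := by
  have hτ := traceFst_isHermitian h.1
  set p := h.1.eigenvalues with hp_def
  set q := hτ.eigenvalues with hq_def
  have sρ := isSpectral_eigen h.1
  have sτ := isSpectral_eigen hτ
  set U : Matrix (X × Y) (X × Y) ℂ := (h.1.eigenvectorUnitary : Matrix (X × Y) (X × Y) ℂ)
  set W : Matrix Y Y ℂ := (hτ.eigenvectorUnitary : Matrix Y Y ℂ)
  have sσ := isSpectral_one_kronecker (X := X) sτ
  set V : Matrix (X × Y) (X × Y) ℂ := (1 : Matrix X X ℂ) ⊗ₖ W with hV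
  have hp : ∀ i, 0 ≤ p i := h.eigenvalues_nonneg
  have key : ∀ y, ∑ x, ∑ i, Complex.normSq ((Vᴴ * U) (x, y) i) * p i = q y := by
    intro y
    have e : traceFst (Vᴴ * ρ * V) = diagonal (fun y => (q y : ℂ)) := by
      rw [hV, conjTranspose_kronecker, conjTranspose_one, traceFst_conj, sτ.eq]
      simp only [← Matrix.mul_assoc, sτ.star_mul, Matrix.one_mul]
      rw [Matrix.mul_assoc, sτ.star_mul, Matrix.mul_one]
    have e' := congrArg Complex.re (congrFun (congrFun e y) y)
    rw [diagonal_apply_eq, Complex.ofReal_re, traceFst, of_apply, Complex.re_sum] at e'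
    rw [← e']
    exact Finset.sum_congr rfl fun x _ => sum_overlap_mul sρ V (x, y)
  have hnn : ∀ k i, 0 ≤ Complex.normSq ((Vᴴ * U) k i) * p i := fun k i =>
    mul_nonneg (Complex.normSq_nonneg _) (hp i)
  have hq : ∀ y, 0 ≤ q y := fun y => by
    rw [← key y]
    exact Finset.sum_nonneg fun x _ => Finset.sum_nonneg fun i _ => hnn _ _
  -- `ρ` is supported in `X ⊗ supp τ`: a zero eigenvalue of `τ` annihilates all its overlap terms.
  have hsupp : ∀ (k : X × Y) i, q k.2 = 0 → Complex.normSq ((Vᴴ * U) k i) * p i = 0 := by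
    rintro ⟨x, y⟩ i h0
    have h1 := key y
    rw [show q y = 0 from h0, Finset.sum_eq_zero_iff_of_nonneg
      fun x _ => Finset.sum_nonneg fun i _ => hnn _ _] at h1
    exact (Finset.sum_eq_zero_iff_of_nonneg fun i _ => hnn _ _).1 (h1 x (Finset.mem_univ _)) i
      (Finset.mem_univ _)
  refine ⟨logSum (Vᴴ * U) p fun k => q k.2, resolventSum (Vᴴ * U) p fun k => q k.2,
    fun t ht => hasDerivAt_logSum hp (fun k => hq k.2) hsupp ht, ?_, ?_,
    fun t ht M => testFn_le sρ sσ hp (fun k => hq k.2) ht M, exists_testFn_eq sρ sσ⟩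
  · rw [natEntropy_eq hτ, ← Finset.sum_neg_distrib]
    simp only [logSum, zero_mul, add_zero, Fintype.sum_prod_type_right]
    refine Finset.sum_congr rfl fun y _ => ?_
    simp only [← Finset.sum_mul]
    rw [Real.negMulLog, neg_mul, neg_neg, ← hq_def, ← key y]
    simp only [Fintype.sum_prod_type_right]
  · rw [natEntropy_eq h.1]
    have htr : ρ.trace.re = ∑ i, p i := by
      rw [h.1.trace_eq_sum_eigenvalues]; simp [p]
    rw [htr]
    exact tendsto_logSum hp (fun k => hq k.2) (sum_normSq_overlap sρ sσ)

/-! ### Strong subadditivity -/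

/-- Partial trace over the third tensor factor. -/
def traceThd {X Y Z : Type*} [Fintype Z] (ρ : Matrix (X × Y × Z) (X × Y × Z) ℂ) :
    Matrix (X × Y) (X × Y) ℂ :=
  of fun a b => ∑ z, ρ (a.1, a.2, z) (b.1, b.2, z)

theorem traceThd_posSemidef {X Y Z : Type*} [Fintype Z]
    {ρ : Matrix (X × Y × Z) (X × Y × Z) ℂ} (h : ρ.PosSemidef) : (traceThd ρ).PosSemidef := by
  have : traceThd ρ =
      ∑ z, ρ.submatrix (fun a : X × Y => (a.1, a.2, z)) (fun a : X × Y => (a.1, a.2, z)) := by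
    ext a b
    simp [traceThd, Matrix.sum_apply]
  rw [this]
  exact posSemidef_sum _ fun z _ => h.submatrix _

/-- `N ⊗ 1_Z`, reindexed to act on `X × Y × Z`; the adjoint of `traceThd` for the trace pairing. -/
def lift {X Y : Type*} (Z : Type*) [DecidableEq Z] (N : Matrix (X × Y) (X × Y) ℂ) :
    Matrix (X × Y × Z) (X × Y × Z) ℂ :=
  (N ⊗ₖ (1 : Matrix Z Z ℂ)).submatrix (Equiv.prodAssoc X Y Z).symm (Equiv.prodAssoc X Y Z).symm

theorem lift_mul {X Y Z : Type*} [Fintype X] [Fintype Y] [Fintype Z] [DecidableEq Z]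
    (N P : Matrix (X × Y) (X × Y) ℂ) : lift Z N * lift Z P = lift Z (N * P) := by
  rw [lift, lift, submatrix_mul_equiv, ← mul_kronecker_mul, Matrix.one_mul, lift]

theorem lift_conjTranspose {X Y Z : Type*} [DecidableEq Z]
    (N : Matrix (X × Y) (X × Y) ℂ) : (lift Z N)ᴴ = lift Z Nᴴ := by
  rw [lift, conjTranspose_submatrix, conjTranspose_kronecker, conjTranspose_one, lift]

theorem trace_mul_lift {X Y Z : Type*} [Fintype X] [Fintype Y] [Fintype Z] [DecidableEq Z]
    (ρ : Matrix (X × Y × Z) (X × Y × Z) ℂ) (N : Matrix (X × Y) (X × Y) ℂ) :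
    trace (ρ * lift Z N) = trace (traceThd ρ * N) := by
  simp only [trace, diag_apply, mul_apply, lift, traceThd, submatrix_apply, of_apply,
    Fintype.sum_prod_type, kronecker_apply, one_apply, Equiv.prodAssoc_symm_apply, mul_ite, mul_one,
    mul_zero, Finset.sum_ite_eq', Finset.mem_univ, if_true, Finset.sum_mul]
  refine Finset.sum_congr rfl fun x _ => Finset.sum_congr rfl fun y _ => ?_
  rw [Finset.sum_comm]
  refine Finset.sum_congr rfl fun x' _ => ?_
  rw [Finset.sum_comm]

theorem traceThd_one_kronecker {X Y Z : Type*} [Fintype X] [DecidableEq X] [Fintype Z]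
    (ρ : Matrix (X × Y × Z) (X × Y × Z) ℂ) :
    traceThd ((1 : Matrix X X ℂ) ⊗ₖ traceFst ρ) =
      (1 : Matrix X X ℂ) ⊗ₖ traceFst (traceThd ρ) := by
  ext ⟨x, y⟩ ⟨x', y'⟩
  simp only [traceThd, traceFst, of_apply, kronecker_apply, ← Finset.mul_sum]
  rw [Finset.sum_comm]

theorem testFn_lift {X Y Z : Type*} [Fintype X] [DecidableEq X] [Fintype Y] [Fintype Z]
    [DecidableEq Z] (ρ : Matrix (X × Y × Z) (X × Y × Z) ℂ) (t : ℝ)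
    (N : Matrix (X × Y) (X × Y) ℂ) :
    testFn t ρ (1 ⊗ₖ traceFst ρ) (lift Z N) =
      testFn t (traceThd ρ) (1 ⊗ₖ traceFst (traceThd ρ)) N := by
  simp only [testFn, lift_conjTranspose, lift_mul, trace_mul_lift, traceThd_one_kronecker]

open Filter Topology Set in
/-- Strong subadditivity: `H(XYZ) + H(Y) ≤ H(XY) + H(YZ)`. The functions `G` for `ρ` and `G'` for
`Tr_Z ρ` satisfy `G' ≤ G` at the level of derivatives, since test matrices `N ⊗ 1_Z` are a subset of
all test matrices. Comparing `G - G'` at `0` and at `∞` gives the claim. -/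
theorem strong_subadditivity_s7 {X Y Z : Type*} [Fintype X] [DecidableEq X] [Fintype Y]
    [DecidableEq Y] [Fintype Z] [DecidableEq Z] {ρ : Matrix (X × Y × Z) (X × Y × Z) ℂ}
    (h : ρ.PosSemidef) :
    natEntropy ρ + natEntropy (traceFst (traceThd ρ)) ≤
      natEntropy (traceThd ρ) + natEntropy (traceFst ρ) := by
  obtain ⟨G, Q, hG, hG0, hGlim, hle, -⟩ := exists_interpolation h
  obtain ⟨G', Q', hG', hG0', hGlim', -, heq'⟩ := exists_interpolation (traceThd_posSemidef h)
  have hQ : ∀ t, 0 < t → Q' t ≤ Q t := fun t ht => by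
    obtain ⟨N, hN⟩ := heq' t
    rw [← hN, ← testFn_lift]
    exact hle t ht _
  have htr : (traceThd ρ).trace = ρ.trace := by
    simp [trace, traceThd, Fintype.sum_prod_type]
  have hmono : MonotoneOn (fun t => G t - G' t) (Ici 0) := by
    have hd : ∀ t ∈ Ici (0 : ℝ), HasDerivAt (fun t => G t - G' t) (Q t - Q' t) t :=
      fun t ht => (hG t ht).fun_sub (hG' t ht)
    refine monotoneOn_of_deriv_nonneg (convex_Ici 0)
      (fun t ht => (hd t ht).continuousAt.continuousWithinAt) ?_ ?_ <;> rw [interior_Ici]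
    · exact fun t ht => (hd t (Ioi_subset_Ici_self ht)).differentiableAt.differentiableWithinAt
    · intro t ht
      rw [(hd t (Ioi_subset_Ici_self ht)).deriv]
      exact sub_nonneg.2 (hQ t ht)
  have hlim := hGlim.sub hGlim'
  rw [htr] at hlim
  have := ge_of_tendsto hlim (b := G 0 - G' 0) (by
    filter_upwards [eventually_ge_atTop 0] with t ht
    have := hmono self_mem_Ici ht ht
    simp only at this
    linarith)
  rw [hG0, hG0'] at this
  linarith

theorem posSemidef_exists {ι : Type*} [Fintype ι] [DecidableEq ι] {A : Matrix ι ι ℂ}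
    (h : A.PosSemidef) : ∃ M : Matrix ι ι ℂ, A = M * Mᴴ := by
  refine ⟨(h.1.eigenvectorUnitary : Matrix ι ι ℂ) *
    diagonal (fun i => (Real.sqrt (h.1.eigenvalues i) : ℂ)), ?_⟩
  conv_lhs => rw [(isSpectral_eigen h.1).eq]
  rw [conjTranspose_mul, diagonal_conjTranspose, Matrix.mul_assoc, Matrix.mul_assoc,
    ← Matrix.mul_assoc (diagonal _) (diagonal _), diagonal_mul_diagonal]
  congr 3
  ext i
  simp [← Complex.ofReal_mul, Real.mul_self_sqrt (h.eigenvalues_nonneg i)]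

/-! ### Purification -/

/-- `H(X) + H(Z) ≤ H(XY) + H(YZ)`: strong subadditivity for the marginal on `(Y, Z, R)` of a
purification of `σ` with reference system `R`. -/
theorem entropy_main {X Y Z : Type*} [Fintype X] [DecidableEq X] [Fintype Y]
    [DecidableEq Y] [Fintype Z] [DecidableEq Z] {σ : Matrix (X × Y × Z) (X × Y × Z) ℂ}
    (h : σ.PosSemidef) :
    natEntropy (of fun a a' => ∑ b, ∑ e, σ (a, b, e) (a', b, e)) +
      natEntropy (of fun e e' => ∑ a, ∑ b, σ (a, b, e) (a, b, e')) ≤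
    natEntropy (traceThd σ) + natEntropy (traceFst σ) := by
  obtain ⟨M, rfl⟩ := posSemidef_exists h
  -- The entries of `M` are the amplitudes of a purification of `σ` on `(X × Y × Z) × R`. Cutting its
  -- indices as `YZR | X` and as `ZR | XY` gives `K` and `L`: `K * Kᴴ` and `L * Lᴴ` are the marginals
  -- on `YZR` and `ZR`, and `Kᴴ * K`, `Lᴴ * L` are the transposes of those on `X` and `XY`.
  let K : Matrix (Y × Z × (X × Y × Z)) X ℂ := of fun k a => M (a, k.1, k.2.1) k.2.2
  let L : Matrix (Z × (X × Y × Z)) (X × Y) ℂ := of fun k a => M (a.1, a.2, k.1) k.2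
  have hs := strong_subadditivity_s7 (posSemidef_self_mul_conjTranspose K)
  have e1 : natEntropy (K * Kᴴ) =
      natEntropy (of fun a a' => ∑ b, ∑ e, (M * Mᴴ) (a, b, e) (a', b, e)) := by
    rw [natEntropy_mul_comm, ← natEntropy_transpose]
    congr 1
    ext a a'
    simp [K, mul_apply, Fintype.sum_prod_type, mul_comm]
  have e2 : traceFst (K * Kᴴ) = L * Lᴴ := by
    ext k k'
    simp only [traceFst, of_apply, mul_apply, Fintype.sum_prod_type, K, L, conjTranspose_apply]
    exact Finset.sum_comm
  have e3 : natEntropy (L * Lᴴ) = natEntropy (traceThd (M * Mᴴ)) := by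
    rw [natEntropy_mul_comm, ← natEntropy_transpose]
    congr 1
    ext a a'
    simp [L, traceThd, mul_apply, Fintype.sum_prod_type, mul_comm]
  have e4 : traceThd (K * Kᴴ) = traceFst (M * Mᴴ) := by
    ext k k'
    simp only [traceFst, traceThd, of_apply, mul_apply, K, conjTranspose_apply]
    exact Finset.sum_comm
  have e5 : traceFst (traceFst (M * Mᴴ)) =
      of fun e e' => ∑ a, ∑ b, (M * Mᴴ) (a, b, e) (a, b, e') := by
    ext e e'
    simp only [traceFst, of_apply]
    exact Finset.sum_comm
  rw [e1, e2, e3, e4, e5] at hs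
  linarith

/-- For any tripartite density operator `σ^{ABE}`,
`I(A;B)_σ ≤ H(B)_σ + H(B|E)_σ`, i.e.
`H(σ^A) + H(σ^B) − H(σ^{AB}) ≤ H(σ^B) + H(σ^{BE}) − H(σ^E)`. -/
theorem mutual_info_le_entropy_add_conditional
    {dA dB dE : ℕ} (σ : Matrix (Fin dA × Fin dB × Fin dE) (Fin dA × Fin dB × Fin dE) ℂ)
    (hσ : σ.PosSemidef) (htr : σ.trace = 1) :
    let σA : Matrix (Fin dA) (Fin dA) ℂ :=
      Matrix.of fun a a' => ∑ b, ∑ e, σ (a, b, e) (a', b, e)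
    let σB : Matrix (Fin dB) (Fin dB) ℂ :=
      Matrix.of fun b b' => ∑ a, ∑ e, σ (a, b, e) (a, b', e)
    let σAB : Matrix (Fin dA × Fin dB) (Fin dA × Fin dB) ℂ :=
      Matrix.of fun p q => ∑ e, σ (p.1, p.2, e) (q.1, q.2, e)
    let σBE : Matrix (Fin dB × Fin dE) (Fin dB × Fin dE) ℂ :=
      Matrix.of fun p q => ∑ a, σ (a, p.1, p.2) (a, q.1, q.2)
    let σE : Matrix (Fin dE) (Fin dE) ℂ :=
      Matrix.of fun e e' => ∑ a, ∑ b, σ (a, b, e) (a, b, e')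
    vnEntropy σA + vnEntropy σB - vnEntropy σAB ≤
      vnEntropy σB + vnEntropy σBE - vnEntropy σE := by
  intro σA σB σAB σBE σE
  have hA : σA.IsHermitian := by
    ext a a'
    simp only [σA, conjTranspose_apply, of_apply, star_sum, hσ.1.apply]
  have hE : σE.IsHermitian := by
    ext a a'
    simp only [σE, conjTranspose_apply, of_apply, star_sum, hσ.1.apply]
  have hAB : σAB.IsHermitian := (traceThd_posSemidef hσ).1
  have hBE : σBE.IsHermitian := traceFst_isHermitian hσ.1
  have hmain : natEntropy σA + natEntropy σE ≤ natEntropy σAB + natEntropy σBE := entropy_main hσ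
  have := div_le_div_of_nonneg_right hmain (Real.log_nonneg one_le_two)
  rw [add_div, add_div] at this
  rw [vnEntropy_eq hA, vnEntropy_eq hE, vnEntropy_eq hAB, vnEntropy_eq hBE]
  linarith
end
end

section
/- Let d ≥ 2 and let p = (p_0,…,p_{d−1}) be a probability distribution. Define the collective phase-flip channel M_p on (ℂ^d ⊗ ℂ^d)-matrices by M_p(ρ) = ∑_{k=0}^{d−1} p_k (Z(k) ⊗ Z(k)) ρ (Z(k) ⊗ Z(k))^†, where Z(k) = ∑_s e^{2πi s k/d}|s⟩⟨s|. Let |Φ⟩ = (1/√d)∑_i |i⟩|i⟩ be the maximally entangled state on ℂ^d ⊗ ℂ^d, and let θ^{ABC} = (id_{AB} ⊗ M_p)(|Φ⟩⟨Φ|^{AA'} ⊗ |Φ⟩⟨Φ|^{BB'}), a density operator on ℂ^d ⊗ ℂ^d ⊗ (ℂ^d ⊗ ℂ^d) with A, B the purifying factors and C = A'B' the channel output. Then, writing H(p) = −∑_k p_k log₂ p_k: H(θ^A) = H(θ^B) = log₂ d, H(θ^{AC}) = H(θ^{BC}) = log₂ d + H(p), and H(θ^{ABC}) = H(p); consequently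 I(A;C|B)_θ = I(B;C|A)_θ = 2 log₂ d and I(AB;C)_θ = 4 log₂ d − H(p). -/
/-!
The operators `Z(k) ⊗ Z(k)` are diagonal, so the output state is
`θ = ∑ k, (p k / d²) |v_k⟩⟨v_k|`, where `v_k = ∑_{a,b} e^{2πi (a + b) k / d} |a b⟩|a b⟩`.
Orthogonality of the characters of `ℤ/d` makes the `v_k` pairwise orthogonal of squared norm `d²`,
so `θ` has spectrum `p` up to zeros, and entropy `H(p)`.

Tracing out `B` leaves `B'` as a uniform classical register; conditionally on it, the state of `AA'`
is the mixture, with weights `p k`, of the orthonormal vectors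
`d^{-1/2} ∑_a e^{2πi a k / d} |a⟩|a⟩`. The spectrum is therefore, up to zeros, `p k / d`, each
value repeated `d` times, and the entropy is `log d + H(p)`; the marginal `BC` is symmetric. The
marginals `A`, `B`, `C` and `AB` are maximally mixed, and the information quantities follow by arithmetic.

Entropies are read off from such decompositions by `vnEntropy_of_decomposition`, which compares
the characteristic polynomials of `V (D Vᴴ)` and `(D Vᴴ) V`.
-/

open Matrix Kronecker ComplexOrder

noncomputable section

/-- Generalized Pauli phase operator `Z(k) = ∑_s e^{2πi s k/d}|s⟩⟨s|` on `ℂ^d`. -/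
def PauliZ (d : ℕ) [NeZero d] (k : ZMod d) : Matrix (ZMod d) (ZMod d) ℂ :=
  Matrix.of fun s t =>
    if s = t then Complex.exp (2 * Real.pi * Complex.I * (s.val : ℂ) * (k.val : ℂ) / d) else 0

/-! ### Entropy from a decomposition into orthogonal vectors -/

/-- The entropy depends only on the characteristic polynomial, which makes it computable without
identifying the eigenvalues one by one. -/
lemma entropy_eq_sum_roots {ι : Type*} [Fintype ι] [DecidableEq ι] {A : Matrix ι ι ℂ}
    (hA : A.IsHermitian) :
    vnEntropy A = -(A.charpoly.roots.map fun z => z.re * Real.logb 2 z.re).sum := by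
  rw [vnEntropy, dif_pos hA, hA.roots_charpoly_eq_eigenvalues, Multiset.map_map]
  rfl

/-- If `A = ∑ j, μ j |v_j⟩⟨v_j|` with the columns `v_j` pairwise orthogonal of squared norm `c`,
then `A` has the spectrum `c * μ j`, up to zeros. Indeed `A = V D Vᴴ` and `(D Vᴴ) V = c D` have
the same characteristic polynomial up to a power of `X`, and zero eigenvalues contribute nothing
to the entropy. -/
lemma vnEntropy_of_decomposition {ι J : Type*} [Fintype ι] [DecidableEq ι] [Fintype J]
    [DecidableEq J] (A : Matrix ι ι ℂ) (v : Matrix ι J ℂ) (μ : J → ℝ) (c : ℝ)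
    (hA : ∀ i i', A i i' = ∑ j, (μ j : ℂ) * (v i j * star (v i' j)))
    (hv : ∀ j j', ∑ i, star (v i j) * v i j' = if j = j' then (c : ℂ) else 0) :
    vnEntropy A = -∑ j, (c * μ j) * Real.logb 2 (c * μ j) := by
  have hA' : A = v * (Matrix.diagonal (fun j => (μ j : ℂ)) * vᴴ) := by
    ext i i'
    rw [hA, Matrix.mul_apply]
    refine Finset.sum_congr rfl fun j _ => ?_
    rw [Matrix.diagonal_mul, Matrix.conjTranspose_apply]
    ring
  have hherm : A.IsHermitian := by
    ext i i'
    simp only [Matrix.conjTranspose_apply, hA, star_sum, star_mul', star_star]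
    refine Finset.sum_congr rfl fun j _ => ?_
    simp only [Complex.star_def, Complex.conj_ofReal]
    ring
  have hG : (Matrix.diagonal (fun j => (μ j : ℂ)) * vᴴ) * v
      = Matrix.diagonal fun j => ((c * μ j : ℝ) : ℂ) := by
    have : vᴴ * v = Matrix.diagonal fun _ : J => (c : ℂ) := by
      ext j j'
      rw [Matrix.mul_apply, Matrix.diagonal_apply]
      simpa only [Matrix.conjTranspose_apply] using hv j j'
    rw [Matrix.mul_assoc, this, Matrix.diagonal_mul_diagonal]
    congr 1
    ext j
    push_cast
    ring
  have hchar := Matrix.charpoly_mul_comm' v (Matrix.diagonal (fun j => (μ j : ℂ)) * vᴴ)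
  rw [hG, ← hA', Matrix.charpoly_diagonal] at hchar
  have hroots := congrArg Polynomial.roots hchar
  have hprod : (∏ j, (Polynomial.X - Polynomial.C ((c * μ j : ℝ) : ℂ))) ≠ 0 :=
    Finset.prod_ne_zero_iff.mpr fun j _ => Polynomial.X_sub_C_ne_zero _
  have hX : ∀ n : ℕ, (Polynomial.X ^ n : Polynomial ℂ) ≠ 0 := fun n =>
    pow_ne_zero _ Polynomial.X_ne_zero
  rw [Polynomial.roots_mul (mul_ne_zero (hX _) A.charpoly_monic.ne_zero),
    Polynomial.roots_mul (mul_ne_zero (hX _) hprod), Polynomial.roots_X_pow,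
    Polynomial.roots_X_pow, Polynomial.roots_prod _ _ hprod] at hroots
  have hsum := congrArg
    (fun m : Multiset ℂ => (m.map fun z => z.re * Real.logb 2 z.re).sum) hroots
  simp only [Multiset.map_add, Multiset.sum_add, Multiset.map_nsmul, Multiset.sum_nsmul,
    Multiset.map_singleton, Multiset.sum_singleton, Complex.zero_re, zero_mul, smul_zero,
    zero_add, Polynomial.roots_X_sub_C, Multiset.bind_singleton, Multiset.map_map,
    Function.comp_def, Complex.ofReal_re] at hsum
  rw [entropy_eq_sum_roots hherm, hsum]
  rfl

lemma vnEntropy_maximallyMixed {ι : Type*} [Fintype ι] [DecidableEq ι] {A : Matrix ι ι ℂ}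
    {x : ℝ} (hA : ∀ i i', A i i' = if i = i' then (x : ℂ) else 0) :
    vnEntropy A = -(Fintype.card ι * (x * Real.logb 2 x)) := by
  rw [vnEntropy_of_decomposition A (1 : Matrix ι ι ℂ) (fun _ => x) 1 ?_ ?_]
  · simp
  · intro i i'
    rw [hA]
    simp [Matrix.one_apply, Finset.sum_ite_eq]
  · intro j j'
    by_cases h : j = j'
    · simp [Matrix.one_apply, h]
    · simp [Matrix.one_apply, h, Ne.symm h]

/-! ### Phases and their orthogonality -/

/-- The diagonal entry of `Z(k)` at `s`, i.e. the `d`-th root of unity `e^{2πi sk/d}`, written with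
the standard additive character of `ZMod d` so that orthogonality of characters applies. -/
def phase (d : ℕ) [NeZero d] (k s : ZMod d) : ℂ := ZMod.stdAddChar (s * k)

lemma logb_inv_sq (d : ℕ) : Real.logb 2 (1 / (d : ℝ) ^ 2) = -(2 * Real.logb 2 d) := by
  rw [one_div, Real.logb_inv, Real.logb_pow]
  norm_num

section phase

variable {d : ℕ} [NeZero d]

lemma PauliZ_eq_diagonal (k : ZMod d) : PauliZ d k = Matrix.diagonal (phase d k) := by
  ext s t
  rw [PauliZ, Matrix.of_apply, Matrix.diagonal_apply]
  refine if_congr Iff.rfl ?_ rfl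
  have h : s * k = ((s.val * k.val : ℤ) : ZMod d) := by simp
  rw [phase, h, ZMod.stdAddChar_coe]
  congr 1
  push_cast
  ring

lemma star_phase (k s : ZMod d) : star (phase d k s) = phase d k (-s) := by
  rw [phase, phase, neg_mul, AddChar.map_neg_eq_conj]
  rfl

lemma phase_add (k s t : ZMod d) : phase d k (s + t) = phase d k s * phase d k t := by
  rw [phase, add_mul, AddChar.map_add_eq_mul]; rfl

lemma star_phase_mul_self (k s : ZMod d) : star (phase d k s) * phase d k s = 1 := by
  rw [star_phase, ← phase_add]; simp [phase]

lemma phase_mul_star_self (k s : ZMod d) : phase d k s * star (phase d k s) = 1 := by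
  rw [mul_comm, star_phase_mul_self]

lemma sum_star_phase_mul_phase (k k' : ZMod d) :
    ∑ s, star (phase d k s) * phase d k' s = if k = k' then (d : ℂ) else 0 := by
  have h := AddChar.sum_mulShift (k' - k) (ZMod.isPrimitive_stdAddChar d)
  rw [ZMod.card] at h
  simp only [sub_eq_zero, eq_comm (a := k'), Nat.cast_ite, Nat.cast_zero] at h
  rw [← h]
  refine Finset.sum_congr rfl fun s _ => ?_
  rw [star_phase, phase, phase, ← AddChar.map_add_eq_mul]
  congr 1
  ring

lemma sum_phase_mul_phase (k k' : ZMod d) :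
    ∑ a, ∑ b, star (phase d k a * phase d k b) * (phase d k' a * phase d k' b)
      = if k = k' then (((d : ℝ) ^ 2 : ℝ) : ℂ) else 0 := by
  have h : ∀ a b : ZMod d,
      star (phase d k a * phase d k b) * (phase d k' a * phase d k' b)
        = (star (phase d k a) * phase d k' a) * (star (phase d k b) * phase d k' b) := by
    intro a b
    rw [star_mul']
    ring
  simp only [h, ← Finset.mul_sum, ← Finset.sum_mul, sum_star_phase_mul_phase]
  split_ifs <;> simp [sq]

/-! ### The output state and its marginals -/

/-- The output state restricted to the span of the `|a, b⟩|a, b⟩`, outside of which it vanishes: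
entry `(w, w')` is the sum of the products `v_k(w) * conj (v_k(w'))` with weights `p k / d ^ 2`, where
`v_k(a, b) = e^{2πi (a + b) k / d}`. -/
def phaseGram (d : ℕ) [NeZero d] (p : ZMod d → ℝ) (w w' : ZMod d × ZMod d) : ℂ :=
  ∑ k, ((p k / d ^ 2 : ℝ) : ℂ) *
    (phase d k w.1 * phase d k w.2 * star (phase d k w'.1 * phase d k w'.2))

lemma phaseGram_self {p : ZMod d → ℝ} (hps : ∑ k, p k = 1) (w : ZMod d × ZMod d) :
    phaseGram d p w w = ((1 / d ^ 2 : ℝ) : ℂ) := by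
  have h : ∀ k, phase d k w.1 * phase d k w.2 * star (phase d k w.1 * phase d k w.2) = 1 := by
    intro k
    rw [star_mul', mul_mul_mul_comm, phase_mul_star_self, phase_mul_star_self, one_mul]
  simp only [phaseGram, h, mul_one]
  rw [← Complex.ofReal_sum, ← Finset.sum_div, hps]

lemma phaseGram_same_snd (p : ZMod d → ℝ) (a a' b : ZMod d) :
    phaseGram d p (a, b) (a', b)
      = ∑ k, ((p k / d ^ 2 : ℝ) : ℂ) * (phase d k a * star (phase d k a')) := by
  refine Finset.sum_congr rfl fun k _ => ?_
  rw [star_mul', mul_mul_mul_comm, phase_mul_star_self, mul_one]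

lemma phaseGram_same_fst (p : ZMod d → ℝ) (a b b' : ZMod d) :
    phaseGram d p (a, b) (a, b')
      = ∑ k, ((p k / d ^ 2 : ℝ) : ℂ) * (phase d k b * star (phase d k b')) := by
  refine Finset.sum_congr rfl fun k _ => ?_
  rw [star_mul', mul_mul_mul_comm, phase_mul_star_self, one_mul]

/-- This includes `x = 0`, where both sides vanish. -/
lemma mul_logb_div (x : ℝ) :
    (x / d) * Real.logb 2 (x / d)
      = (d : ℝ)⁻¹ * (x * Real.logb 2 x) - (d : ℝ)⁻¹ * (x * Real.logb 2 d) := by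
  rcases eq_or_ne x 0 with rfl | hx
  · simp
  · rw [Real.logb_div hx (Nat.cast_ne_zero.mpr (NeZero.ne d))]
    ring

/-- The entropy `log d + H(p)` of the marginals `AC` and `BC`: the traced-out system acts as a
uniform classical register `x`, and given `x` the `k`-th pure state, of weight `p k`, is a Fourier
vector. On the support, the value of `C` is
`f a x`, where `a` is the kept and `x` the traced index. -/
lemma vnEntropy_three_party {p : ZMod d → ℝ} (hps : ∑ k, p k = 1)
    (M : Matrix (ZMod d × (ZMod d × ZMod d)) (ZMod d × (ZMod d × ZMod d)) ℂ)
    (f : ZMod d → ZMod d → ZMod d × ZMod d) (hf : ∀ a, Function.Injective (f a))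
    (hM : ∀ q q', M q q' = ∑ x, if f q.1 x = q.2 ∧ f q'.1 x = q'.2 then
      ∑ k, ((p k / d ^ 2 : ℝ) : ℂ) * (phase d k q.1 * star (phase d k q'.1)) else 0) :
    vnEntropy M = Real.logb 2 d + -∑ k, p k * Real.logb 2 (p k) := by
  have hd : (d : ℝ) ≠ 0 := Nat.cast_ne_zero.mpr (NeZero.ne d)
  rw [vnEntropy_of_decomposition M
    (fun q j => if f q.1 j.1 = q.2 then phase d j.2 q.1 else 0)
    (fun j : ZMod d × ZMod d => p j.2 / d ^ 2) d ?_ ?_]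
  · have h : ∀ k, (d : ℝ) * (p k / d ^ 2) = p k / d := fun k => by field_simp
    simp only [h, mul_logb_div, Fintype.sum_prod_type, Finset.sum_sub_distrib, ← Finset.mul_sum,
      ← Finset.sum_mul, hps, Finset.sum_const, Finset.card_univ, ZMod.card, nsmul_eq_mul]
    field_simp
    ring
  · intro q q'
    rw [hM, Fintype.sum_prod_type]
    refine Finset.sum_congr rfl fun x _ => ?_
    by_cases h1 : f q.1 x = q.2 <;> by_cases h2 : f q'.1 x = q'.2 <;> simp [h1, h2]
  · rintro ⟨x, k⟩ ⟨x', k'⟩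
    rw [Fintype.sum_prod_type]
    have h : ∀ a, ∑ w : ZMod d × ZMod d, star (if f a x = w then phase d k a else 0) *
        (if f a x' = w then phase d k' a else 0)
          = if x = x' then star (phase d k a) * phase d k' a else 0 := by
      intro a
      rw [Finset.sum_eq_single (f a x) (fun w _ hw => by simp [hw.symm]) (by simp)]
      simp [(hf a).eq_iff, eq_comm (a := x')]
    simp only [h]
    by_cases hx : x = x'
    · simp only [hx, if_true, sum_star_phase_mul_phase, Prod.mk.injEq, true_and,
        Complex.ofReal_natCast]
    · simp [hx]

lemma vnEntropy_one_party {M : Matrix (ZMod d) (ZMod d) ℂ}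
    (hM : ∀ a a', M a a' = if a = a' then ((1 / d : ℝ) : ℂ) else 0) :
    vnEntropy M = Real.logb 2 d := by
  have hd : (d : ℝ) ≠ 0 := Nat.cast_ne_zero.mpr (NeZero.ne d)
  rw [vnEntropy_maximallyMixed hM, ZMod.card, one_div, Real.logb_inv]
  field_simp

lemma vnEntropy_two_party {M : Matrix (ZMod d × ZMod d) (ZMod d × ZMod d) ℂ}
    (hM : ∀ a a', M a a' = if a = a' then ((1 / d ^ 2 : ℝ) : ℂ) else 0) :
    vnEntropy M = 2 * Real.logb 2 d := by
  have hd : (d : ℝ) ≠ 0 := Nat.cast_ne_zero.mpr (NeZero.ne d)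
  rw [vnEntropy_maximallyMixed hM, logb_inv_sq, Fintype.card_prod, ZMod.card]
  push_cast
  field_simp

end phase

/-- Entropic quantities for the state
`θ^{ABC} = (id_{AB} ⊗ M_p)(|Φ⟩⟨Φ|^{AA'} ⊗ |Φ⟩⟨Φ|^{BB'})` obtained by sending two halves
of maximally entangled states through the collective phase-flip channel
`M_p(ρ) = ∑_k p_k (Z(k) ⊗ Z(k)) ρ (Z(k) ⊗ Z(k))†`. -/
theorem collective_phase_flip_entropies (d : ℕ) [NeZero d] (hd : 2 ≤ d)
    (p : ZMod d → ℝ) (hp : ∀ k, 0 ≤ p k) (hps : ∑ k, p k = 1) :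
    -- the tensor product |Φ⟩^{AA'} ⊗ |Φ⟩^{BB'}, reordered as (A × B) × (A' × B')
    let ψ : (ZMod d × ZMod d) × (ZMod d × ZMod d) → ℂ :=
      fun q => if q.1.1 = q.2.1 ∧ q.1.2 = q.2.2 then ((d : ℂ))⁻¹ else 0
    let θ : Matrix ((ZMod d × ZMod d) × (ZMod d × ZMod d))
        ((ZMod d × ZMod d) × (ZMod d × ZMod d)) ℂ :=
      ∑ k : ZMod d, ((p k : ℝ) : ℂ) •
        (((1 : Matrix (ZMod d × ZMod d) (ZMod d × ZMod d) ℂ) ⊗ₖ (PauliZ d k ⊗ₖ PauliZ d k)) *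
          proj ψ *
          ((1 : Matrix (ZMod d × ZMod d) (ZMod d × ZMod d) ℂ) ⊗ₖ (PauliZ d k ⊗ₖ PauliZ d k))ᴴ)
    let θA : Matrix (ZMod d) (ZMod d) ℂ :=
      Matrix.of fun a a' => ∑ b, ∑ c, θ ((a, b), c) ((a', b), c)
    let θB : Matrix (ZMod d) (ZMod d) ℂ :=
      Matrix.of fun b b' => ∑ a, ∑ c, θ ((a, b), c) ((a, b'), c)
    let θC : Matrix (ZMod d × ZMod d) (ZMod d × ZMod d) ℂ :=
      Matrix.of fun c c' => ∑ ab, θ (ab, c) (ab, c')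
    let θAB : Matrix (ZMod d × ZMod d) (ZMod d × ZMod d) ℂ :=
      Matrix.of fun q q' => ∑ c, θ (q, c) (q', c)
    let θAC : Matrix (ZMod d × (ZMod d × ZMod d)) (ZMod d × (ZMod d × ZMod d)) ℂ :=
      Matrix.of fun q q' => ∑ b, θ ((q.1, b), q.2) ((q'.1, b), q'.2)
    let θBC : Matrix (ZMod d × (ZMod d × ZMod d)) (ZMod d × (ZMod d × ZMod d)) ℂ :=
      Matrix.of fun q q' => ∑ a, θ ((a, q.1), q.2) ((a, q'.1), q'.2)
    let Hp : ℝ := -∑ k, p k * Real.logb 2 (p k)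
    vnEntropy θA = Real.logb 2 d ∧
    vnEntropy θB = Real.logb 2 d ∧
    vnEntropy θAC = Real.logb 2 d + Hp ∧
    vnEntropy θBC = Real.logb 2 d + Hp ∧
    vnEntropy θ = Hp ∧
    vnEntropy θAB + vnEntropy θBC - vnEntropy θ - vnEntropy θB = 2 * Real.logb 2 d ∧
    vnEntropy θAB + vnEntropy θAC - vnEntropy θ - vnEntropy θA = 2 * Real.logb 2 d ∧
    vnEntropy θAB + vnEntropy θC - vnEntropy θ = 4 * Real.logb 2 d - Hp := by
  intro ψ θ θA θB θC θAB θAC θBC Hp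
  have hd0 : (d : ℝ) ≠ 0 := Nat.cast_ne_zero.mpr (NeZero.ne d)
  have hdiag : ∀ k, (1 : Matrix (ZMod d × ZMod d) (ZMod d × ZMod d) ℂ) ⊗ₖ
      (PauliZ d k ⊗ₖ PauliZ d k)
        = Matrix.diagonal fun q => phase d k q.2.1 * phase d k q.2.2 := by
    intro k
    rw [PauliZ_eq_diagonal, Matrix.diagonal_kronecker_diagonal, ← Matrix.diagonal_one,
      Matrix.diagonal_kronecker_diagonal]
    simp
  have hθ : ∀ q q', θ q q' = if q.1 = q.2 ∧ q'.1 = q'.2 then phaseGram d p q.1 q'.1 else 0 := by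
    rintro ⟨⟨a, b⟩, c, e⟩ ⟨⟨a', b'⟩, c', e'⟩
    simp only [θ, hdiag, Matrix.sum_apply, Matrix.smul_apply, Matrix.diagonal_conjTranspose,
      Matrix.mul_diagonal, Matrix.diagonal_mul, proj, Matrix.of_apply, ψ, Prod.mk.injEq,
      phaseGram, smul_eq_mul, Pi.star_apply]
    by_cases h : a = c ∧ b = e
    · by_cases h' : a' = c' ∧ b' = e'
      · obtain ⟨rfl, rfl⟩ := h
        obtain ⟨rfl, rfl⟩ := h'
        simp only [and_self, if_true]
        refine Finset.sum_congr rfl fun k _ => ?_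
        rw [star_inv₀, star_natCast]
        push_cast
        ring
      · simp [h']
    · simp [h]
  -- For `A`, `B`, `C` and `AB` the trace runs over a copy of every kept index, which kills the
  -- off-diagonal terms; on the diagonal the unit-modulus phases cancel.
  have hA : vnEntropy θA = Real.logb 2 d := by
    refine vnEntropy_one_party fun a a' => ?_
    simp only [θA, Matrix.of_apply, hθ]
    by_cases h : a = a'
    · subst h
      simp only [and_self, phaseGram_self hps, Finset.sum_ite_eq, Finset.mem_univ, if_true,
        Finset.sum_const, Finset.card_univ, ZMod.card, nsmul_eq_mul]
      push_cast
      field_simp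
    · rw [if_neg h]
      refine Finset.sum_eq_zero fun b _ => Finset.sum_eq_zero fun c _ => if_neg ?_
      rintro ⟨h1, h2⟩
      exact h (Prod.ext_iff.mp (h1.trans h2.symm)).1
  have hB : vnEntropy θB = Real.logb 2 d := by
    refine vnEntropy_one_party fun a a' => ?_
    simp only [θB, Matrix.of_apply, hθ]
    by_cases h : a = a'
    · subst h
      simp only [and_self, phaseGram_self hps, Finset.sum_ite_eq, Finset.mem_univ, if_true,
        Finset.sum_const, Finset.card_univ, ZMod.card, nsmul_eq_mul]
      push_cast
      field_simp
    · rw [if_neg h]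
      refine Finset.sum_eq_zero fun b _ => Finset.sum_eq_zero fun c _ => if_neg ?_
      rintro ⟨h1, h2⟩
      exact h (Prod.ext_iff.mp (h1.trans h2.symm)).2
  have hC : vnEntropy θC = 2 * Real.logb 2 d := by
    refine vnEntropy_two_party fun c c' => ?_
    simp only [θC, Matrix.of_apply, hθ, phaseGram_self hps]
    rw [Finset.sum_eq_single c (fun w _ hw => if_neg fun h => hw h.1) (by simp)]
    simp
  have hAB : vnEntropy θAB = 2 * Real.logb 2 d := by
    refine vnEntropy_two_party fun w w' => ?_
    simp only [θAB, Matrix.of_apply, hθ]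
    rw [Finset.sum_eq_single w (fun c _ hc => if_neg fun h => hc h.1.symm) (by simp)]
    by_cases h : w = w'
    · simp [h, phaseGram_self hps]
    · simp [h, Ne.symm h]
  have hAC : vnEntropy θAC = Real.logb 2 d + Hp := by
    refine vnEntropy_three_party hps θAC (fun a b => (a, b))
      (fun a b b' h => (Prod.ext_iff.mp h).2) fun q q' => ?_
    simp only [θAC, Matrix.of_apply, hθ, phaseGram_same_snd]
  have hBC : vnEntropy θBC = Real.logb 2 d + Hp := by
    refine vnEntropy_three_party hps θBC (fun b a => (a, b))
      (fun b a a' h => (Prod.ext_iff.mp h).1) fun q q' => ?_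
    simp only [θBC, Matrix.of_apply, hθ, phaseGram_same_fst]
  have hABC : vnEntropy θ = Hp := by
    rw [vnEntropy_of_decomposition θ
      (fun q k => if q.1 = q.2 then phase d k q.1.1 * phase d k q.1.2 else 0)
      (fun k => p k / d ^ 2) ((d : ℝ) ^ 2) ?_ ?_]
    · have h : ∀ k, (d : ℝ) ^ 2 * (p k / d ^ 2) = p k := fun k => by field_simp
      simp only [h, Hp]
    · intro q q'
      rw [hθ]
      by_cases h : q.1 = q.2 <;> by_cases h' : q'.1 = q'.2 <;> simp [h, h', phaseGram]
    · intro k k'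
      rw [Fintype.sum_prod_type, ← sum_phase_mul_phase]
      refine Eq.trans ?_ (Fintype.sum_prod_type fun w : ZMod d × ZMod d =>
        star (phase d k w.1 * phase d k w.2) * (phase d k' w.1 * phase d k' w.2))
      refine Finset.sum_congr rfl fun w _ => ?_
      rw [Finset.sum_eq_single w (fun c _ hc => by simp [hc.symm]) (by simp)]
      simp
  refine ⟨hA, hB, hAC, hBC, hABC, ?_, ?_, ?_⟩
  · rw [hAB, hBC, hABC, hB]; ring
  · rw [hAB, hAC, hABC, hA]; ring
  · rw [hAB, hC, hABC]; ring
end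
end
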